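/- Let k ≥ 1, let G be a finite simple graph, and let ε be a geometric k-planar drawing of G. Suppose the edge set of G is partitioned into s edges, called static edges, and f maximal degree-2 paths, called flexible paths, each of length at least (s² + 3s + 1)·(f + 1) + 1. Let G' be the graph obtained from G by shortening each flexible path to length exactly (s² + 3s + 1)·(f + 1) + 1 while preserving its endpoints. Then G' admits a geometric k-planar drawing. -/

import Mathlib

open Set

noncomputable section

/-- The union of all (closed) straight-line edge segments of a geometric drawing. -/
def drawnSet {V : Type*} (G : SimpleGraph V) (pos : V → ℝ × ℝ) : Set (ℝ × ℝ) :=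
  {x | ∃ u v, G.Adj u v ∧ x ∈ segment ℝ (pos u) (pos v)}

/-- `pos` is a geometric (straight-line) drawing of `G`: vertices are distinct points,
no edge passes through a vertex other than its endpoints, and any two distinct edges
meet only in common endpoints or in a single proper crossing point interior to both. -/
def IsGeomDrawing {V : Type*} (G : SimpleGraph V) (pos : V → ℝ × ℝ) : Prop :=
  Function.Injective pos ∧
  (∀ u v, G.Adj u v → ∀ w : V, pos w ∈ segment ℝ (pos u) (pos v) → w = u ∨ w = v) ∧
  (∀ u v x y, G.Adj u v → G.Adj x y → s(u, v) ≠ s(x, y) →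
    (segment ℝ (pos u) (pos v) ∩ segment ℝ (pos x) (pos y) ⊆
        (pos '' {u, v}) ∩ (pos '' {x, y})) ∨
    (∃ p, segment ℝ (pos u) (pos v) ∩ segment ℝ (pos x) (pos y) = {p} ∧
        p ∈ openSegment ℝ (pos u) (pos v) ∧ p ∈ openSegment ℝ (pos x) (pos y)))

/-- The straight-line edges `uv` and `xy` cross properly: they meet in exactly one
point, interior to both segments. -/
def SegCross {V : Type*} (pos : V → ℝ × ℝ) (u v x y : V) : Prop :=
  ∃ p, segment ℝ (pos u) (pos v) ∩ segment ℝ (pos x) (pos y) = {p} ∧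
    p ∈ openSegment ℝ (pos u) (pos v) ∧ p ∈ openSegment ℝ (pos x) (pos y)

/-- The set of edges of `G` that cross the edge `uv` in the geometric drawing `pos`. -/
def crossingEdges {V : Type*} (G : SimpleGraph V) (pos : V → ℝ × ℝ) (u v : V) :
    Set (Sym2 V) :=
  {e | e ∈ G.edgeSet ∧ ∃ x y, e = s(x, y) ∧ SegCross pos u v x y}

/-- `pos` is a geometric 1-planar drawing of `G`: a geometric drawing in which every
edge is crossed at most once. -/
def IsGeom1Planar {V : Type*} (G : SimpleGraph V) (pos : V → ℝ × ℝ) : Prop :=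
  IsGeomDrawing G pos ∧ ∀ u v, G.Adj u v → (crossingEdges G pos u v).Subsingleton

/-- `G` is geometric 1-planar. -/
def GeomOnePlanar {V : Type*} (G : SimpleGraph V) : Prop :=
  ∃ pos : V → ℝ × ℝ, IsGeom1Planar G pos

/-- `pos` is a geometric `k`-planar drawing of `G`: a geometric drawing in which every
edge is crossed at most `k` times. -/
def IsGeomKPlanar {V : Type*} (k : ℕ) (G : SimpleGraph V) (pos : V → ℝ × ℝ) : Prop :=
  IsGeomDrawing G pos ∧ ∀ u v, G.Adj u v → (crossingEdges G pos u v).ncard ≤ k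

/-- `G` is geometric `k`-planar. -/
def GeomKPlanar {V : Type*} (k : ℕ) (G : SimpleGraph V) : Prop :=
  ∃ pos : V → ℝ × ℝ, IsGeomKPlanar k G pos

/-- The edge set of the path obtained from the path `w` (from `a` to `b`) by shortening
it to length `t` while preserving its endpoints: we keep the first `t − 1` edges of `w`
and join the `(t−1)`-st vertex of `w` directly to the endpoint `b` (the vertices of `w`
beyond the `(t−1)`-st become isolated). -/
def shortEdges {V : Type*} {G : SimpleGraph V} {a b : V} (w : G.Walk a b) (t : ℕ) :
    Set (Sym2 V) :=
  {e | ∃ j : ℕ, j + 2 ≤ t ∧ e = s(w.getVert j, w.getVert (j + 1))} ∪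
    {s(w.getVert (t - 1), b)}

/-- Twice the signed area of the triangle `a b x`. -/
def cr (a b x : ℝ × ℝ) : ℝ := (b.1 - a.1) * (x.2 - a.2) - (b.2 - a.2) * (x.1 - a.1)

/-- The linear part of `cr a b`. -/
def crLin (a b d : ℝ × ℝ) : ℝ := (b.1 - a.1) * d.2 - (b.2 - a.2) * d.1

lemma cr_add (a b x d : ℝ × ℝ) : cr a b (x + d) = cr a b x + crLin a b d := by
  simp only [cr, crLin, Prod.fst_add, Prod.snd_add]; ring

lemma crLin_smul (a b d : ℝ × ℝ) (c : ℝ) : crLin a b (c • d) = c * crLin a b d := by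
  simp only [crLin, Prod.smul_fst, Prod.smul_snd, smul_eq_mul]; ring

lemma crLin_sub (a b x y : ℝ × ℝ) : crLin a b (x - y) = cr a b x - cr a b y := by
  simp only [cr, crLin, Prod.fst_sub, Prod.snd_sub]; ring

lemma continuous_cr (a b : ℝ × ℝ) : Continuous (cr a b) := by
  unfold cr; fun_prop

lemma lineMap_fst' (x y : ℝ × ℝ) (θ : ℝ) :
    (AffineMap.lineMap x y θ : ℝ × ℝ).1 = x.1 + θ * (y.1 - x.1) := by
  simp [AffineMap.lineMap_apply]; ring

lemma lineMap_snd' (x y : ℝ × ℝ) (θ : ℝ) :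
    (AffineMap.lineMap x y θ : ℝ × ℝ).2 = x.2 + θ * (y.2 - x.2) := by
  simp [AffineMap.lineMap_apply]; ring

lemma cr_lineMap (a b x y : ℝ × ℝ) (θ : ℝ) :
    cr a b (AffineMap.lineMap x y θ) = (1 - θ) * cr a b x + θ * cr a b y := by
  simp only [cr, lineMap_fst', lineMap_snd']; ring

lemma cr_self_left (a b : ℝ × ℝ) : cr a b a = 0 := by simp [cr]

lemma cr_self_right (a b : ℝ × ℝ) : cr a b b = 0 := by simp [cr]; ring

lemma cr_rotate (a b c : ℝ × ℝ) : cr a b c = cr b c a := by simp only [cr]; ring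

lemma cr_swap (a b c : ℝ × ℝ) : cr a b c = - cr b a c := by simp only [cr]; ring

lemma mem_segment_iff_lineMap {a b x : ℝ × ℝ} :
    x ∈ segment ℝ a b ↔ ∃ θ : ℝ, 0 ≤ θ ∧ θ ≤ 1 ∧ AffineMap.lineMap a b θ = x := by
  rw [segment_eq_image_lineMap]; simp [and_assoc]

lemma mem_openSegment_iff_lineMap {a b x : ℝ × ℝ} :
    x ∈ openSegment ℝ a b ↔ ∃ θ : ℝ, 0 < θ ∧ θ < 1 ∧ AffineMap.lineMap a b θ = x := by
  rw [openSegment_eq_image_lineMap]; simp [and_assoc]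

lemma cr_eq_zero_of_mem_segment {a b x : ℝ × ℝ} (h : x ∈ segment ℝ a b) : cr a b x = 0 := by
  obtain ⟨θ, -, -, rfl⟩ := mem_segment_iff_lineMap.1 h
  rw [cr_lineMap, cr_self_left, cr_self_right]; ring

lemma fst_ne_or_snd_ne {a b : ℝ × ℝ} (h : a ≠ b) : b.1 - a.1 ≠ 0 ∨ b.2 - a.2 ≠ 0 := by
  by_contra! hc
  exact h (Prod.ext (by linarith [hc.1]) (by linarith [hc.2]))

lemma lineMap_injective_of_ne {a b : ℝ × ℝ} (h : a ≠ b) :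
    Function.Injective (AffineMap.lineMap a b : ℝ → ℝ × ℝ) :=
  AffineMap.lineMap_injective ℝ h

lemma exists_lineMap_of_cr_eq_zero {a b x : ℝ × ℝ} (hab : a ≠ b) (h : cr a b x = 0) :
    ∃ θ : ℝ, AffineMap.lineMap a b θ = x := by
  simp only [cr] at h
  rcases fst_ne_or_snd_ne hab with h1 | h1
  · refine ⟨(x.1 - a.1) / (b.1 - a.1), Prod.ext ?_ ?_⟩
    · rw [lineMap_fst']; field_simp; ring
    · rw [lineMap_snd']; field_simp; linarith
  · refine ⟨(x.2 - a.2) / (b.2 - a.2), Prod.ext ?_ ?_⟩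
    · rw [lineMap_fst']; field_simp; linarith
    · rw [lineMap_snd']; field_simp; ring

/-- If `x ≠ y` lie on the line `ab` then every point on the line `ab` is on the line `xy`. -/
lemma cr_eq_zero_of_collinear {a b x y z : ℝ × ℝ} (hab : a ≠ b) (hx : cr a b x = 0)
    (hy : cr a b y = 0) (hz : cr a b z = 0) : cr x y z = 0 := by
  obtain ⟨p, rfl⟩ := exists_lineMap_of_cr_eq_zero hab hx
  obtain ⟨q, rfl⟩ := exists_lineMap_of_cr_eq_zero hab hy
  obtain ⟨r, rfl⟩ := exists_lineMap_of_cr_eq_zero hab hz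
  simp only [cr, lineMap_fst', lineMap_snd']; ring

/-- Two non-parallel lines meet in at most one point. -/
lemma eq_of_mem_two_lines {a b c d x y : ℝ × ℝ} (h : crLin a b (d - c) ≠ 0)
    (hx : cr a b x = 0) (hx' : cr c d x = 0) (hy : cr a b y = 0) (hy' : cr c d y = 0) :
    x = y := by
  simp only [cr, crLin, Prod.fst_sub, Prod.snd_sub] at *
  refine Prod.ext ?_ ?_
  · have : (x.1 - y.1) * ((b.1 - a.1) * (d.2 - c.2) - (b.2 - a.2) * (d.1 - c.1)) = 0 := by
      linear_combination (-(d.1 - c.1)) * (hy - hx) + (b.1 - a.1) * (hy' - hx')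
    rcases mul_eq_zero.1 this with h' | h'
    · linarith
    · exact absurd h' h
  · have : (x.2 - y.2) * ((b.1 - a.1) * (d.2 - c.2) - (b.2 - a.2) * (d.1 - c.1)) = 0 := by
      linear_combination (-(d.2 - c.2)) * (hy - hx) + (b.2 - a.2) * (hy' - hx')
    rcases mul_eq_zero.1 this with h' | h'
    · linarith
    · exact absurd h' h

/-- A point set together with all intersection points of non-parallel lines spanned by it. -/
def lineClosure (A : Set (ℝ × ℝ)) : Set (ℝ × ℝ) :=
  A ∪ {X | ∃ x₁ ∈ A, ∃ x₂ ∈ A, ∃ y₁ ∈ A, ∃ y₂ ∈ A, crLin x₁ x₂ (y₂ - y₁) ≠ 0 ∧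
    cr x₁ x₂ X = 0 ∧ cr y₁ y₂ X = 0}

lemma lineClosure_finite {A : Set (ℝ × ℝ)} (hA : A.Finite) : (lineClosure A).Finite := by
  refine hA.union ?_
  have : {X | ∃ x₁ ∈ A, ∃ x₂ ∈ A, ∃ y₁ ∈ A, ∃ y₂ ∈ A, crLin x₁ x₂ (y₂ - y₁) ≠ 0 ∧
    cr x₁ x₂ X = 0 ∧ cr y₁ y₂ X = 0} ⊆ ⋃ x₁ ∈ A, ⋃ x₂ ∈ A, ⋃ y₁ ∈ A, ⋃ y₂ ∈ A,
      {X | crLin x₁ x₂ (y₂ - y₁) ≠ 0 ∧ cr x₁ x₂ X = 0 ∧ cr y₁ y₂ X = 0} := by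
    rintro X ⟨x₁, h1, x₂, h2, y₁, h3, y₂, h4, h5⟩
    simp only [mem_iUnion]
    exact ⟨x₁, h1, x₂, h2, y₁, h3, y₂, h4, h5⟩
  refine Set.Finite.subset ?_ this
  refine hA.biUnion fun x₁ _ => hA.biUnion fun x₂ _ => hA.biUnion fun y₁ _ =>
    hA.biUnion fun y₂ _ => Set.Subsingleton.finite ?_
  rintro X ⟨h, h1, h2⟩ Y ⟨-, h3, h4⟩
  exact eq_of_mem_two_lines h h1 h2 h3 h4

lemma dense_cr_ne_zero {a b : ℝ × ℝ} (h : a ≠ b) : Dense {x | cr a b x ≠ 0} := by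
  intro x
  by_cases hx : cr a b x = 0
  swap
  · exact subset_closure hx
  have hn : crLin a b (-(b.2 - a.2), b.1 - a.1) ≠ 0 := by
    simp only [crLin]
    rcases fst_ne_or_snd_ne h with h1 | h1
    · have := pow_pos (abs_pos.2 h1) 2
      rw [sq_abs] at this
      nlinarith [sq_nonneg (b.2 - a.2)]
    · have := pow_pos (abs_pos.2 h1) 2
      rw [sq_abs] at this
      nlinarith [sq_nonneg (b.1 - a.1)]
  set d : ℝ × ℝ := (-(b.2 - a.2), b.1 - a.1)
  have ht : Filter.Tendsto (fun ε : ℝ => x + ε • d) (nhdsWithin 0 {0}ᶜ) (nhds x) := by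
    have : Continuous (fun ε : ℝ => x + ε • d) := by fun_prop
    have h2 := this.tendsto 0
    simp only [zero_smul, add_zero] at h2
    exact h2.mono_left nhdsWithin_le_nhds
  refine mem_closure_of_tendsto ht ?_
  filter_upwards [self_mem_nhdsWithin] with ε hε
  rw [cr_add, hx, crLin_smul, zero_add]
  exact mul_ne_zero hε hn

lemma exists_mem_open_avoiding {A O : Set (ℝ × ℝ)} (hA : A.Finite) (hO : IsOpen O)
    (hne : O.Nonempty) :
    ∃ y ∈ O, y ∉ A ∧ ∀ X ∈ A, ∀ Y ∈ A, X ≠ Y → cr X Y y ≠ 0 := by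
  have hD : Dense (⋂ p ∈ (A ×ˢ A), {y : ℝ × ℝ | y ≠ p.1 ∧ (p.1 ≠ p.2 → cr p.1 p.2 y ≠ 0)}) := by
    refine dense_biInter_of_isOpen ?_ (hA.prod hA).countable ?_
    · intro p _
      by_cases hp : p.1 = p.2
      · simp only [hp, ne_eq, not_true_eq_false, false_imp_iff, and_true]
        exact isOpen_ne
      · simp only [ne_eq, hp, not_false_eq_true, true_imp_iff]
        exact isOpen_ne.inter (isOpen_ne_fun (continuous_cr _ _) continuous_const)
    · intro p _
      by_cases hp : p.1 = p.2
      · simp only [hp, ne_eq, not_true_eq_false, false_imp_iff, and_true]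
        exact dense_compl_singleton _
      · simp only [ne_eq, hp, not_false_eq_true, true_imp_iff]
        exact (dense_compl_singleton p.1).inter_of_isOpen_left (dense_cr_ne_zero hp) isOpen_ne
  obtain ⟨y, hyO, hy⟩ := hD.inter_open_nonempty O hO hne
  simp only [mem_iInter] at hy
  exact ⟨y, hyO, fun hyA => (hy (y, y) ⟨hyA, hyA⟩).1 rfl,
    fun X hX Y hY h => (hy (X, Y) ⟨hX, hY⟩).2 h⟩

/-- The points in the range of `q` are chosen one after the other, in general position with
respect to the finite set `F`. -/
lemma exists_generic_seq (O : ℕ → Set (ℝ × ℝ)) (hO : ∀ j, IsOpen (O j))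
    (hne : ∀ j, (O j).Nonempty) {F : Set (ℝ × ℝ)} (hF : F.Finite) (n : ℕ) :
    ∃ q : ℕ → ℝ × ℝ, ∀ j < n, q j ∈ O j ∧ q j ∉ lineClosure (F ∪ q '' Iio j) ∧
      ∀ X ∈ lineClosure (F ∪ q '' Iio j), ∀ Y ∈ lineClosure (F ∪ q '' Iio j),
        X ≠ Y → cr X Y (q j) ≠ 0 := by
  induction n with
  | zero => exact ⟨fun _ => 0, fun j hj => absurd hj (Nat.not_lt_zero j)⟩
  | succ n ih =>
    obtain ⟨q, hq⟩ := ih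
    obtain ⟨y, hyO, hy1, hy2⟩ := exists_mem_open_avoiding
      (lineClosure_finite (hF.union ((finite_Iio n).image q))) (hO n) (hne n)
    have himg : ∀ j ≤ n, Function.update q n y '' Iio j = q '' Iio j := by
      intro j hj
      refine image_congr fun i hi => ?_
      exact Function.update_of_ne (ne_of_lt (lt_of_lt_of_le hi hj)) _ _
    refine ⟨Function.update q n y, fun j hj => ?_⟩
    rw [himg j (Nat.lt_succ_iff.1 hj)]
    rcases Nat.lt_succ_iff_lt_or_eq.1 hj with h | rfl
    · rw [Function.update_of_ne h.ne]; exact hq j h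
    · rw [Function.update_self]; exact ⟨hyO, hy1, hy2⟩

/-- General position of the family `q` relative to the set `F`: `q` is injective and avoids `F`,
no three points are collinear and no three spanned lines are concurrent, except when only points
of `F` are involved. -/
structure GenPos {ι : Type*} (F : Set (ℝ × ℝ)) (q : ι → ℝ × ℝ) : Prop where
  inj : Function.Injective q
  notMem : ∀ a, q a ∉ F
  noncollinear : ∀ x ∈ F ∪ range q, ∀ y ∈ F ∪ range q, ∀ a, x ≠ y → x ≠ q a → y ≠ q a →
    cr x y (q a) ≠ 0
  nonconcurrent : ∀ x₁ ∈ F ∪ range q, ∀ x₂ ∈ F ∪ range q, ∀ y₁ ∈ F ∪ range q,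
    ∀ y₂ ∈ F ∪ range q, ∀ z₁ ∈ F ∪ range q, ∀ z₂ ∈ F ∪ range q,
    ¬ (x₁ ∈ F ∧ x₂ ∈ F ∧ y₁ ∈ F ∧ y₂ ∈ F ∧ z₁ ∈ F ∧ z₂ ∈ F) →
    crLin x₁ x₂ (y₂ - y₁) ≠ 0 → crLin y₁ y₂ (z₂ - z₁) ≠ 0 → crLin x₁ x₂ (z₂ - z₁) ≠ 0 →
    ∀ X, cr x₁ x₂ X = 0 → cr y₁ y₂ X = 0 → cr z₁ z₂ X = 0 →
    X = x₁ ∨ X = x₂ ∨ X = y₁ ∨ X = y₂ ∨ X = z₁ ∨ X = z₂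

lemma crLin_swap (a b c d : ℝ × ℝ) : crLin a b (d - c) = - crLin c d (b - a) := by
  simp only [crLin, Prod.fst_sub, Prod.snd_sub]; ring

lemma crLin_rev_left (a b c : ℝ × ℝ) : crLin a b c = - crLin b a c := by
  simp only [crLin]; ring

lemma nonconcurrent_aux {A : Set (ℝ × ℝ)} {w x₂ y₁ y₂ z₁ z₂ X : ℝ × ℝ}
    (hw : ∀ X ∈ lineClosure A, ∀ Y ∈ lineClosure A, X ≠ Y → cr X Y w ≠ 0)
    (hx₂ : x₂ ∈ A ∨ x₂ = w) (hy₁ : y₁ ∈ A ∨ y₁ = w) (hy₂ : y₂ ∈ A ∨ y₂ = w)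
    (hz₁ : z₁ ∈ A ∨ z₁ = w) (hz₂ : z₂ ∈ A ∨ z₂ = w)
    (hxy : crLin w x₂ (y₂ - y₁) ≠ 0) (hyz : crLin y₁ y₂ (z₂ - z₁) ≠ 0)
    (hxz : crLin w x₂ (z₂ - z₁) ≠ 0)
    (hX : cr w x₂ X = 0) (hY : cr y₁ y₂ X = 0) (hZ : cr z₁ z₂ X = 0) :
    X = w ∨ X = x₂ := by
  have hmem : ∀ {a b : ℝ × ℝ}, crLin w x₂ (b - a) ≠ 0 → cr a b X = 0 → (a = w ∨ b = w) →
      X = w := by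
    rintro a b hne hab (rfl | rfl)
    · exact eq_of_mem_two_lines hne hX hab (cr_self_left _ _) (cr_self_left _ _)
    · exact eq_of_mem_two_lines hne hX hab (cr_self_left _ _) (cr_self_right _ _)
  rcases hx₂ with hx₂ | rfl
  swap
  · simp [crLin] at hxy
  rcases hy₁ with hy₁ | h
  swap
  · exact Or.inl (hmem hxy hY (Or.inl h))
  rcases hy₂ with hy₂ | h
  swap
  · exact Or.inl (hmem hxy hY (Or.inr h))
  rcases hz₁ with hz₁ | h
  swap
  · exact Or.inl (hmem hxz hZ (Or.inl h))
  rcases hz₂ with hz₂ | h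
  swap
  · exact Or.inl (hmem hxz hZ (Or.inr h))
  by_contra! hc
  refine hw x₂ (Or.inl hx₂) X (Or.inr ⟨y₁, hy₁, y₂, hy₂, z₁, hz₁, z₂, hz₂, hyz, hY, hZ⟩)
    hc.2.symm ?_
  rw [cr_rotate, cr_rotate]; exact hX

lemma exists_genPos {ι : Type*} [Fintype ι] (O : ι → Set (ℝ × ℝ)) (hO : ∀ j, IsOpen (O j))
    (hne : ∀ j, (O j).Nonempty) {F : Set (ℝ × ℝ)} (hF : F.Finite) :
    ∃ q : ι → ℝ × ℝ, (∀ a, q a ∈ O a) ∧ GenPos F q := by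
  classical
  set n := Fintype.card ι
  let e : ι ≃ Fin n := Fintype.equivFin ι
  obtain ⟨q, hq⟩ := exists_generic_seq
    (fun j => if h : j < n then O (e.symm ⟨j, h⟩) else univ)
    (fun j => by split_ifs; exacts [hO _, isOpen_univ])
    (fun j => by split_ifs; exacts [hne _, univ_nonempty]) hF n
  have hinj : ∀ i < n, ∀ j < i, q i ≠ q j := fun i hi j hj h =>
    (hq i hi).2.1 (Or.inl (Or.inr ⟨j, hj, h.symm⟩))
  have hinj' : ∀ i < n, ∀ j < n, q i = q j → i = j := by
    intro i hi j hj h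
    rcases lt_trichotomy i j with h1 | h1 | h1
    · exact absurd h.symm (hinj j hj i h1)
    · exact h1
    · exact absurd h (hinj i hi j h1)
  have hrange : ∀ x ∈ F ∪ range (fun a => q (e a)), x ∈ F ∪ q '' Iio n := by
    rintro x (hx | ⟨a, rfl⟩)
    · exact Or.inl hx
    · exact Or.inr ⟨e a, (e a).2, rfl⟩
  have hstep : ∀ {x j}, x ∈ F ∪ q '' Iio (j + 1) → x ∈ F ∪ q '' Iio j ∨ x = q j := by
    rintro x j (hx | ⟨i, hi, rfl⟩)
    · exact Or.inl (Or.inl hx)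
    · rcases Nat.lt_succ_iff_lt_or_eq.1 hi with h | rfl
      · exact Or.inl (Or.inr ⟨i, h, rfl⟩)
      · exact Or.inr rfl
  have hmax : ∀ T : Set (ℝ × ℝ), T ⊆ F ∪ q '' Iio n → ¬ T ⊆ F →
      ∃ j < n, q j ∈ T ∧ ∀ x ∈ T, x ∈ F ∪ q '' Iio j ∨ x = q j := by
    intro T hT hTF
    have hex : ∃ m, T ⊆ F ∪ q '' Iio m := ⟨n, hT⟩
    obtain ⟨j, hj⟩ : ∃ j, Nat.find hex = j + 1 := by
      refine Nat.exists_eq_succ_of_ne_zero fun h0 => hTF ?_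
      have := Nat.find_spec hex
      rw [h0] at this
      simpa using this
    have hs := Nat.find_spec hex
    rw [hj] at hs
    have hjn : j < n := by
      have := Nat.find_min' hex hT
      omega
    have hmin := Nat.find_min hex (show j < Nat.find hex by omega)
    obtain ⟨x, hxT, hx⟩ := not_subset.1 hmin
    have hxq : x = q j := (hstep (hs hxT)).resolve_left hx
    exact ⟨j, hjn, hxq ▸ hxT, fun y hy => hstep (hs hy)⟩
  refine ⟨fun a => q (e a), fun a => ?_, ?_⟩
  · have := (hq (e a) (e a).2).1
    simpa using this
  refine ⟨?_, ?_, ?_, ?_⟩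
  · intro a b hab
    exact e.injective (Fin.ext (hinj' _ (e a).2 _ (e b).2 hab))
  · intro a ha
    exact (hq (e a) (e a).2).2.1 (Or.inl (Or.inl ha))
  · intro x hx y hy a hxy hxa hya h0
    obtain ⟨j, hj, hjT, hjall⟩ := hmax {x, y, q (e a)} (by
      rintro z (rfl | rfl | rfl)
      exacts [hrange _ hx, hrange _ hy, Or.inr ⟨e a, (e a).2, rfl⟩]) (fun h =>
        (hq (e a) (e a).2).2.1 (Or.inl (Or.inl (h (by simp)))))
    have h3 := (hq j hj).2.2
    have hx' := hjall x (by simp)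
    have hy' := hjall y (by simp)
    have hz' := hjall (q (e a)) (by simp)
    rcases hjT with h | h | h
    · refine h3 y (Or.inl (hy'.resolve_right ?_)) (q (e a)) (Or.inl (hz'.resolve_right ?_)) hya ?_
      · rw [h]; exact hxy.symm
      · rw [h]; exact hxa.symm
      · rw [h, ← cr_rotate]; exact h0
    · refine h3 (q (e a)) (Or.inl (hz'.resolve_right ?_)) x (Or.inl (hx'.resolve_right ?_))
        hxa.symm ?_
      · rw [h]; exact hya.symm
      · rw [h]; exact hxy
      · rw [h, ← cr_rotate, ← cr_rotate]; exact h0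
    · refine h3 x (Or.inl (hx'.resolve_right ?_)) y (Or.inl (hy'.resolve_right ?_)) hxy ?_
      · rw [h]; exact hxa
      · rw [h]; exact hya
      · rw [h]; exact h0
  · intro x₁ hx₁ x₂ hx₂ y₁ hy₁ y₂ hy₂ z₁ hz₁ z₂ hz₂ hF' hxy hyz hxz X hX hY hZ
    obtain ⟨j, hj, hjT, hjall⟩ := hmax {x₁, x₂, y₁, y₂, z₁, z₂} (by
      rintro z (rfl | rfl | rfl | rfl | rfl | rfl)
      all_goals (apply hrange; assumption)) (fun h => hF'
        ⟨h (by simp), h (by simp), h (by simp), h (by simp), h (by simp), h (by simp)⟩)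
    have h3 := (hq j hj).2.2
    have a1 := hjall x₁ (by simp)
    have a2 := hjall x₂ (by simp)
    have a3 := hjall y₁ (by simp)
    have a4 := hjall y₂ (by simp)
    have a5 := hjall z₁ (by simp)
    have a6 := hjall z₂ (by simp)
    have hyx : crLin y₁ y₂ (x₂ - x₁) ≠ 0 := by rw [crLin_swap]; exact neg_ne_zero.2 hxy
    have hzy : crLin z₁ z₂ (y₂ - y₁) ≠ 0 := by rw [crLin_swap]; exact neg_ne_zero.2 hyz
    have hzx : crLin z₁ z₂ (x₂ - x₁) ≠ 0 := by rw [crLin_swap]; exact neg_ne_zero.2 hxz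
    have rl : ∀ {a b c : ℝ × ℝ}, crLin a b c ≠ 0 → crLin b a c ≠ 0 := by
      intro a b c h; rw [crLin_rev_left]; exact neg_ne_zero.2 h
    have rc : ∀ {a b c : ℝ × ℝ}, cr a b c = 0 → cr b a c = 0 := by
      intro a b c h; rw [cr_swap, h, neg_zero]
    rcases hjT with h | h | h | h | h | h
    · rw [h] at h3 a1 a2 a3 a4 a5 a6
      have := nonconcurrent_aux h3 a2 a3 a4 a5 a6 hxy hyz hxz hX hY hZ
      rcases this with this | this <;> simp [this]
    · rw [h] at h3 a1 a2 a3 a4 a5 a6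
      have := nonconcurrent_aux h3 a1 a3 a4 a5 a6 (rl hxy) hyz (rl hxz) (rc hX) hY hZ
      rcases this with this | this <;> simp [this]
    · rw [h] at h3 a1 a2 a3 a4 a5 a6
      have := nonconcurrent_aux h3 a4 a1 a2 a5 a6 hyx hxz hyz hY hX hZ
      rcases this with this | this <;> simp [this]
    · rw [h] at h3 a1 a2 a3 a4 a5 a6
      have := nonconcurrent_aux h3 a3 a1 a2 a5 a6 (rl hyx) hxz (rl hyz) (rc hY) hX hZ
      rcases this with this | this <;> simp [this]
    · rw [h] at h3 a1 a2 a3 a4 a5 a6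
      have := nonconcurrent_aux h3 a6 a1 a2 a3 a4 hzx hxy hzy hZ hX hY
      rcases this with this | this <;> simp [this]
    · rw [h] at h3 a1 a2 a3 a4 a5 a6
      have := nonconcurrent_aux h3 a5 a1 a2 a3 a4 (rl hzx) hxy (rl hzy) (rc hZ) hX hY
      rcases this with this | this <;> simp [this]

lemma lineMap_lineMap_lineMap (a b : ℝ × ℝ) (α β θ : ℝ) :
    AffineMap.lineMap (AffineMap.lineMap a b α : ℝ × ℝ) (AffineMap.lineMap a b β) θ =
      (AffineMap.lineMap a b (α + θ * (β - α)) : ℝ × ℝ) := by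
  refine Prod.ext ?_ ?_
  · simp only [lineMap_fst']; ring
  · simp only [lineMap_snd']; ring

lemma mem_segment_lineMap {a b X : ℝ × ℝ} {α β : ℝ} (h : α < β) :
    X ∈ segment ℝ (AffineMap.lineMap a b α : ℝ × ℝ) (AffineMap.lineMap a b β) ↔
      ∃ θ, α ≤ θ ∧ θ ≤ β ∧ AffineMap.lineMap a b θ = X := by
  rw [mem_segment_iff_lineMap]
  have h' : 0 < β - α := sub_pos.2 h
  constructor
  · rintro ⟨θ, h0, h1, rfl⟩
    refine ⟨α + θ * (β - α), ?_, ?_, (lineMap_lineMap_lineMap _ _ _ _ _).symm⟩ <;> nlinarith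
  · rintro ⟨θ, h0, h1, rfl⟩
    refine ⟨(θ - α) / (β - α), div_nonneg (by linarith) h'.le, (div_le_one h').2 (by linarith), ?_⟩
    rw [lineMap_lineMap_lineMap, div_mul_cancel₀ _ h'.ne']; congr 1; ring

lemma mem_openSegment_lineMap {a b X : ℝ × ℝ} {α β : ℝ} (h : α < β) :
    X ∈ openSegment ℝ (AffineMap.lineMap a b α : ℝ × ℝ) (AffineMap.lineMap a b β) ↔
      ∃ θ, α < θ ∧ θ < β ∧ AffineMap.lineMap a b θ = X := by
  rw [mem_openSegment_iff_lineMap]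
  have h' : 0 < β - α := sub_pos.2 h
  constructor
  · rintro ⟨θ, h0, h1, rfl⟩
    refine ⟨α + θ * (β - α), ?_, ?_, (lineMap_lineMap_lineMap _ _ _ _ _).symm⟩ <;> nlinarith
  · rintro ⟨θ, h0, h1, rfl⟩
    refine ⟨(θ - α) / (β - α), div_pos (by linarith) h', (div_lt_one h').2 (by linarith), ?_⟩
    rw [lineMap_lineMap_lineMap, div_mul_cancel₀ _ h'.ne']; congr 1; ring

lemma mem_segment_cases {a b x : ℝ × ℝ} (h : x ∈ segment ℝ a b) :
    x = a ∨ x = b ∨ x ∈ openSegment ℝ a b := by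
  have := insert_endpoints_openSegment ℝ a b
  rw [← this] at h
  simpa using h

lemma isGeomDrawing_of_subsingleton {V : Type*} {G : SimpleGraph V} {pos : V → ℝ × ℝ}
    (hinj : Function.Injective pos)
    (hW : ∀ u v, G.Adj u v → ∀ w, pos w ∈ segment ℝ (pos u) (pos v) → w = u ∨ w = v)
    (hS : ∀ u v x y, G.Adj u v → G.Adj x y → s(u, v) ≠ s(x, y) →
      (segment ℝ (pos u) (pos v) ∩ segment ℝ (pos x) (pos y)).Subsingleton) :
    IsGeomDrawing G pos := by
  refine ⟨hinj, hW, fun u v x y huv hxy hne => ?_⟩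
  have hs := hS u v x y huv hxy hne
  by_cases hcross : ∃ p, p ∈ openSegment ℝ (pos u) (pos v) ∧ p ∈ openSegment ℝ (pos x) (pos y)
  · obtain ⟨p, h1, h2⟩ := hcross
    refine Or.inr ⟨p, ?_, h1, h2⟩
    exact hs.eq_singleton_of_mem ⟨openSegment_subset_segment _ _ _ h1,
      openSegment_subset_segment _ _ _ h2⟩
  · left
    have key : ∀ a b c d : V, G.Adj c d → ∀ p, p ∈ segment ℝ (pos c) (pos d) →
        (p = pos a ∨ p = pos b) → p ∈ pos '' {a, b} ∧ p ∈ pos '' {c, d} := by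
      rintro a b c d hcd p hp (rfl | rfl)
      · exact ⟨⟨a, by simp, rfl⟩, ⟨a, by simpa using hW c d hcd a hp, rfl⟩⟩
      · exact ⟨⟨b, by simp, rfl⟩, ⟨b, by simpa using hW c d hcd b hp, rfl⟩⟩
    rintro p ⟨h1, h2⟩
    rcases mem_segment_cases h1 with h | h | h
    · exact key u v x y hxy p h2 (Or.inl h)
    · exact key u v x y hxy p h2 (Or.inr h)
    · rcases mem_segment_cases h2 with h' | h' | h'
      · exact (key x y u v huv p h1 (Or.inl h')).symm
      · exact (key x y u v huv p h1 (Or.inr h')).symm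
      · exact absurd ⟨p, h, h'⟩ hcross

/-- A drawing all of whose edges are non-overlapping pieces of host segments `A h`, `B h`, such
that distinct host segments share at most one point, is a geometric `k`-planar drawing as soon as
the interior of each piece meets at most `k` other hosts. -/
lemma geomKPlanar_of_hosts {V E H : Type*} [Finite H] {G : SimpleGraph V} {pos : V → ℝ × ℝ}
    {k : ℕ} (x y : E → V) (host : E → H) (α β : E → ℝ) (A B : H → ℝ × ℝ)
    (hE : ∀ u v, G.Adj u v → ∃ ε, s(u, v) = s(x ε, y ε))
    (hAB : ∀ h, A h ≠ B h)
    (hx : ∀ ε, pos (x ε) = AffineMap.lineMap (A (host ε)) (B (host ε)) (α ε))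
    (hy : ∀ ε, pos (y ε) = AffineMap.lineMap (A (host ε)) (B (host ε)) (β ε))
    (h0 : ∀ ε, 0 ≤ α ε) (hαβ : ∀ ε, α ε < β ε) (h1 : ∀ ε, β ε ≤ 1)
    (hinj : Function.Injective pos)
    (hW : ∀ w ε θ, α ε < θ → θ < β ε →
      pos w ≠ AffineMap.lineMap (A (host ε)) (B (host ε)) θ)
    (hno : ∀ ε ε', ε ≠ ε' → host ε = host ε' → β ε ≤ α ε' ∨ β ε' ≤ α ε)
    (hS : ∀ h h', h ≠ h' → (segment ℝ (A h) (B h) ∩ segment ℝ (A h') (B h')).Subsingleton)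
    (hcnt : ∀ ε, {h | h ≠ host ε ∧ (openSegment ℝ (pos (x ε)) (pos (y ε)) ∩
      segment ℝ (A h) (B h)).Nonempty}.ncard ≤ k) :
    GeomKPlanar k G := by
  have hseg : ∀ u v ε, s(u, v) = s(x ε, y ε) → segment ℝ (pos u) (pos v) =
      segment ℝ (pos (x ε)) (pos (y ε)) := by
    intro u v ε h
    rcases Sym2.eq_iff.1 h with ⟨rfl, rfl⟩ | ⟨rfl, rfl⟩
    · rfl
    · exact segment_symm _ _ _
  have hoseg : ∀ u v ε, s(u, v) = s(x ε, y ε) → openSegment ℝ (pos u) (pos v) =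
      openSegment ℝ (pos (x ε)) (pos (y ε)) := by
    intro u v ε h
    rcases Sym2.eq_iff.1 h with ⟨rfl, rfl⟩ | ⟨rfl, rfl⟩
    · rfl
    · exact openSegment_symm _ _ _
  have hmem : ∀ ε X, X ∈ segment ℝ (pos (x ε)) (pos (y ε)) ↔ ∃ θ, α ε ≤ θ ∧ θ ≤ β ε ∧
      AffineMap.lineMap (A (host ε)) (B (host ε)) θ = X := by
    intro ε X; rw [hx, hy]; exact mem_segment_lineMap (hαβ ε)
  have homem : ∀ ε X, X ∈ openSegment ℝ (pos (x ε)) (pos (y ε)) ↔ ∃ θ, α ε < θ ∧ θ < β ε ∧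
      AffineMap.lineMap (A (host ε)) (B (host ε)) θ = X := by
    intro ε X; rw [hx, hy]; exact mem_openSegment_lineMap (hαβ ε)
  have hsub : ∀ ε, segment ℝ (pos (x ε)) (pos (y ε)) ⊆ segment ℝ (A (host ε)) (B (host ε)) := by
    intro ε X hX
    obtain ⟨θ, ha, hb, rfl⟩ := (hmem ε X).1 hX
    exact mem_segment_iff_lineMap.2 ⟨θ, (h0 ε).trans ha, hb.trans (h1 ε), rfl⟩
  have hopen : ∀ ε ε' X, host ε = host ε' → X ∈ openSegment ℝ (pos (x ε)) (pos (y ε)) →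
      X ∈ openSegment ℝ (pos (x ε')) (pos (y ε')) → ε = ε' := by
    intro ε ε' X hh hX hX'
    by_contra hne
    obtain ⟨θ, ha, hb, hθ⟩ := (homem ε X).1 hX
    obtain ⟨θ', ha', hb', hθ'⟩ := (homem ε' X).1 hX'
    rw [← hh, ← hθ] at hθ'
    have := lineMap_injective_of_ne (hAB _) hθ'
    rcases hno ε ε' hne hh with h | h <;> linarith
  refine ⟨pos, isGeomDrawing_of_subsingleton hinj ?_ ?_, ?_⟩
  · intro u v huv w hw
    obtain ⟨ε, hε⟩ := hE u v huv
    rw [hseg u v ε hε, hmem] at hw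
    obtain ⟨θ, ha, hb, hθ⟩ := hw
    have hw' : w = x ε ∨ w = y ε := by
      rcases ha.eq_or_lt with h | h
      · left; apply hinj; rw [hx, ← hθ, h]
      · rcases hb.eq_or_lt with h' | h'
        · right; apply hinj; rw [hy, ← hθ, h']
        · exact absurd hθ.symm (hW w ε θ h h')
    rcases Sym2.eq_iff.1 hε with ⟨rfl, rfl⟩ | ⟨rfl, rfl⟩
    · exact hw'
    · exact hw'.symm
  · intro u v u' v' huv huv' hne
    obtain ⟨ε, hε⟩ := hE u v huv
    obtain ⟨ε', hε'⟩ := hE u' v' huv'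
    have hεε : ε ≠ ε' := by rintro rfl; exact hne (hε.trans hε'.symm)
    rw [hseg u v ε hε, hseg u' v' ε' hε']
    by_cases hh : host ε = host ε'
    · rintro X ⟨hX, hX'⟩ Y ⟨hY, hY'⟩
      rw [hmem] at hX hX' hY hY'
      obtain ⟨θ, a1, a2, rfl⟩ := hX
      obtain ⟨θ', a3, a4, e1⟩ := hX'
      obtain ⟨φ, b1, b2, rfl⟩ := hY
      obtain ⟨φ', b3, b4, e2⟩ := hY'
      rw [← hh] at e1 e2
      have e1' := lineMap_injective_of_ne (hAB _) e1
      have e2' := lineMap_injective_of_ne (hAB _) e2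
      have : θ = φ := by rcases hno ε ε' hεε hh with h | h <;> linarith
      rw [this]
    · exact (hS _ _ hh).anti (inter_subset_inter (hsub ε) (hsub ε'))
  · intro u v huv
    obtain ⟨ε, hε⟩ := hE u v huv
    refine le_trans ?_ (hcnt ε)
    have hch : ∀ e ∈ crossingEdges G pos u v, ∃ ε', e = s(x ε', y ε') ∧ ∃ X,
        X ∈ openSegment ℝ (pos (x ε)) (pos (y ε)) ∧
        X ∈ openSegment ℝ (pos (x ε')) (pos (y ε')) ∧
        segment ℝ (pos (x ε)) (pos (y ε)) ∩ segment ℝ (pos (x ε')) (pos (y ε')) = {X} := by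
      rintro e ⟨heG, a, b, rfl, X, hX, hX1, hX2⟩
      obtain ⟨ε', hε'⟩ := hE a b heG
      rw [hseg u v ε hε, hseg a b ε' hε'] at hX
      rw [hoseg u v ε hε] at hX1
      rw [hoseg a b ε' hε'] at hX2
      exact ⟨ε', hε', X, hX1, hX2, hX⟩
    have hhost : ∀ ε' X, X ∈ openSegment ℝ (pos (x ε)) (pos (y ε)) →
        X ∈ openSegment ℝ (pos (x ε')) (pos (y ε')) →
        segment ℝ (pos (x ε)) (pos (y ε)) ∩ segment ℝ (pos (x ε')) (pos (y ε')) = {X} →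
        host ε' ≠ host ε := by
      intro ε' X h1 h2 h3 hh
      obtain rfl := hopen ε ε' X hh.symm h1 h2
      rw [inter_self] at h3
      have e1 : pos (x ε) ∈ ({X} : Set _) := h3 ▸ left_mem_segment ℝ _ _
      have e2 : pos (y ε) ∈ ({X} : Set _) := h3 ▸ right_mem_segment ℝ _ _
      have e3 : pos (x ε) = pos (y ε) := by rw [mem_singleton_iff.1 e1, mem_singleton_iff.1 e2]
      rw [hx, hy] at e3
      exact (hαβ ε).ne (lineMap_injective_of_ne (hAB _) e3)
    have : Nonempty E := ⟨ε⟩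
    choose! φ hφ X hX1 hX2 hX3 using hch
    refine Set.ncard_le_ncard_of_injOn (fun e => host (φ e)) ?_ ?_ (Set.toFinite _)
    · intro e he
      exact ⟨hhost (φ e) (X e) (hX1 e he) (hX2 e he) (hX3 e he), X e, hX1 e he,
        hsub _ (openSegment_subset_segment _ _ _ (hX2 e he))⟩
    · intro e he e' he' hee
      have hne := hhost (φ e) (X e) (hX1 e he) (hX2 e he) (hX3 e he)
      have hXX : X e = X e' := by
        refine hS _ _ hne ⟨hsub _ (openSegment_subset_segment _ _ _ (hX2 e he)),
          hsub _ (openSegment_subset_segment _ _ _ (hX1 e he))⟩ ⟨?_,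
          hsub _ (openSegment_subset_segment _ _ _ (hX1 e' he'))⟩
        simp only at hee
        rw [hee]
        exact hsub _ (openSegment_subset_segment _ _ _ (hX2 e' he'))
      have := hopen (φ e) (φ e') (X e) hee (hX2 e he) (hXX ▸ hX2 e' he')
      rw [hφ e he, hφ e' he', this]

/-- Breakpoints separating the finite set `C` and containing the integers between `0` and `n`. -/
lemma exists_breakpoints {n t : ℕ} (hn : 1 ≤ n) {C : Set ℝ} (hC : C.Finite)
    (hC' : ∀ c ∈ C, 0 < c ∧ c < n ∧ ∀ m : ℕ, c ≠ m) (ht : n + C.ncard ≤ t) :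
    ∃ τ : ℕ → ℝ, τ 0 = 0 ∧ τ t = n ∧ (∀ i j, i < j → j ≤ t → τ i < τ j) ∧
      (∀ m ≤ n, ∃ j ≤ t, τ j = m) ∧ (∀ j ≤ t, τ j ∉ C) ∧
      (∀ j < t, ∀ c ∈ C, ∀ c' ∈ C, τ j < c → c < τ (j + 1) → τ j < c' → c' < τ (j + 1) →
        c = c') := by
  classical
  have hsep : ∀ c ∈ C, ∃ d, c < d ∧ d < n ∧ d ∉ C ∧ ∀ c' ∈ C, c < c' → d < c' := by
    intro c hc
    obtain ⟨u, hu, hu2⟩ : ∃ u, c < u ∧ u ≤ n ∧ ∀ c' ∈ C, c < c' → u ≤ c' := by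
      have hfin : (insert (n : ℝ) {c' ∈ C | c < c'}).Finite := (hC.subset (sep_subset _ _)).insert _
      obtain ⟨u, hu, hmin⟩ := hfin.exists_minimalFor id _ ⟨_, mem_insert _ _⟩
      have hmin' : ∀ c' ∈ (insert (n : ℝ) {c' ∈ C | c < c'}), u ≤ c' := by
        intro c' h'
        rcases le_total u c' with h | h
        · exact h
        · exact hmin h' h
      refine ⟨u, ?_, hmin' _ (mem_insert _ _), fun c' h1 h2 => hmin' _ (Or.inr ⟨h1, h2⟩)⟩
      rcases hu with rfl | hu
      · exact (hC' c hc).2.1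
      · exact hu.2
    refine ⟨(c + u) / 2, by linarith, by linarith [hu2.1], fun hmem => ?_, fun c' h1 h2 => ?_⟩
    · have := hu2.2 _ hmem (by linarith); linarith
    · have := hu2.2 _ h1 h2; linarith
  choose! sep hs1 hs2 hs3 hs4 using hsep
  set B₁ : Finset ℝ := (Finset.range (n + 1)).image (fun m : ℕ => (m : ℝ)) ∪ hC.toFinset.image sep
  have hB₁card : B₁.card ≤ t + 1 := by
    refine (Finset.card_union_le _ _).trans ?_
    have h1 : ((Finset.range (n + 1)).image (fun m : ℕ => (m : ℝ))).card ≤ n + 1 :=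
      Finset.card_image_le.trans (by simp)
    have h2 : (hC.toFinset.image sep).card ≤ C.ncard :=
      Finset.card_image_le.trans (by rw [Set.ncard_eq_toFinset_card C hC])
    omega
  have hB₁ : ∀ d ∈ B₁, 0 ≤ d ∧ d ≤ n ∧ d ∉ C := by
    intro d hd
    rcases Finset.mem_union.1 hd with hd | hd
    · obtain ⟨m, hm, rfl⟩ := Finset.mem_image.1 hd
      refine ⟨by positivity, by exact_mod_cast Nat.lt_succ_iff.1 (Finset.mem_range.1 hm), ?_⟩
      exact fun h => (hC' _ h).2.2 m rfl
    · obtain ⟨c, hc, rfl⟩ := Finset.mem_image.1 hd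
      rw [Set.Finite.mem_toFinset] at hc
      exact ⟨((hC' c hc).1.trans (hs1 c hc)).le, (hs2 c hc).le, hs3 c hc⟩
  have hinf : (Icc (0 : ℝ) n \ (C ∪ B₁)).Infinite := by
    refine Set.Infinite.sdiff (Set.Icc_infinite ?_) (hC.union (Finset.finite_toSet _))
    exact_mod_cast hn
  obtain ⟨B₂, hB₂, hB₂c⟩ := hinf.exists_subset_card_eq (t + 1 - B₁.card)
  set Bf := B₁ ∪ B₂
  have hdisj : Disjoint B₁ B₂ := by
    rw [Finset.disjoint_left]
    intro d h1 h2
    exact (hB₂ h2).2 (Or.inr h1)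
  have hcard : Bf.card = t + 1 := by
    rw [Finset.card_union_of_disjoint hdisj, hB₂c]; omega
  have hBf : ∀ d ∈ Bf, 0 ≤ d ∧ d ≤ n ∧ d ∉ C := by
    intro d hd
    rcases Finset.mem_union.1 hd with hd | hd
    · exact hB₁ d hd
    · have := hB₂ hd
      exact ⟨this.1.1, this.1.2, fun h => this.2 (Or.inl h)⟩
  have hnat : ∀ m ≤ n, (m : ℝ) ∈ Bf := fun m hm => Finset.mem_union_left _ (Finset.mem_union_left _
    (Finset.mem_image.2 ⟨m, Finset.mem_range.2 (by omega), rfl⟩))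
  let o := Bf.orderEmbOfFin hcard
  have hsurj : ∀ d ∈ Bf, ∃ j : Fin (t + 1), o j = d := by
    intro d hd
    have : d ∈ range o := by rw [Finset.range_orderEmbOfFin]; exact hd
    exact this
  have homem : ∀ j, o j ∈ Bf := fun j => Finset.orderEmbOfFin_mem _ _ _
  let τ : ℕ → ℝ := fun j => if h : j < t + 1 then o ⟨j, h⟩ else 0
  have hτ : ∀ j (h : j ≤ t), τ j = o ⟨j, by omega⟩ := fun j h => by
    simp only [τ]; rw [dif_pos]
  have hmono : ∀ i j, i < j → j ≤ t → τ i < τ j := by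
    intro i j hij hj
    rw [hτ i (by omega), hτ j hj]
    exact o.strictMono hij
  have hsurj' : ∀ d ∈ Bf, ∃ j ≤ t, τ j = d := by
    intro d hd
    obtain ⟨j, hj⟩ := hsurj d hd
    exact ⟨j, by omega, by rw [hτ j (by omega), ← hj]⟩
  have hmono' : ∀ i j, i ≤ t → τ i < τ j → j ≤ t → i < j := by
    intro i j hi hij hj
    by_contra hc
    rcases (not_lt.1 hc).eq_or_lt with h | h
    · rw [h] at hij; exact lt_irrefl _ hij
    · exact absurd (hmono j i h hi) (not_lt.2 hij.le)
  refine ⟨τ, ?_, ?_, hmono, fun m hm => hsurj' _ (hnat m hm), ?_, ?_⟩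
  · obtain ⟨j, hj, hj0⟩ := hsurj' _ (hnat 0 (by omega))
    rcases Nat.eq_zero_or_pos j with rfl | hpos
    · simpa using hj0
    · have h2 := hmono 0 j hpos hj
      have h3 := (hBf (τ 0) (by rw [hτ 0 (by omega)]; exact homem _)).1
      push_cast at hj0
      linarith
  · obtain ⟨j, hj, hj0⟩ := hsurj' _ (hnat n le_rfl)
    rcases hj.eq_or_lt with rfl | hlt
    · exact hj0
    · have h2 := hmono j t hlt le_rfl
      have h3 := (hBf (τ t) (by rw [hτ t le_rfl]; exact homem _)).2.1
      linarith
  · intro j hj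
    rw [hτ j hj]
    exact (hBf _ (homem _)).2.2
  · intro j hj
    have hlt : ∀ c ∈ C, ∀ c' ∈ C, τ j < c → c < τ (j + 1) → τ j < c' → c' < τ (j + 1) →
        ¬ c < c' := by
      intro c hc c' hc' h1 h2 h3 h4 hcc
      obtain ⟨i, hi, hi'⟩ := hsurj' (sep c) (Finset.mem_union_left _ (Finset.mem_union_right _
        (Finset.mem_image.2 ⟨c, hC.mem_toFinset.2 hc, rfl⟩)))
      have h5 := hs1 c hc
      have h6 := hs4 c hc c' hc' hcc
      have h7 := hmono' j i (by omega) (by linarith) hi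
      have h8 := hmono' i (j + 1) hi (by linarith) (by omega)
      omega
    intro c hc c' hc' h1 h2 h3 h4
    exact le_antisymm (not_lt.1 (hlt c' hc' c hc h3 h4 h1 h2)) (not_lt.1 (hlt c hc c' hc' h1 h2 h3 h4))

/-- Indices of the segments of a system of polylines: single segments indexed by `S` and, for
each `i`, the `n i` segments of the `i`-th polyline. -/
abbrev Host {f : ℕ} (S : Type*) (n : Fin f → ℕ) := S ⊕ (Σ i : Fin f, Fin (n i))

def hostA {f : ℕ} {S : Type*} {n : Fin f → ℕ} (A : S → ℝ × ℝ) (b : Fin f → ℕ → ℝ × ℝ) :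
    Host S n → ℝ × ℝ
  | Sum.inl e => A e
  | Sum.inr ⟨i, r⟩ => b i r

def hostB {f : ℕ} {S : Type*} {n : Fin f → ℕ} (B : S → ℝ × ℝ) (b : Fin f → ℕ → ℝ × ℝ) :
    Host S n → ℝ × ℝ
  | Sum.inl e => B e
  | Sum.inr ⟨i, r⟩ => b i (r + 1)

def polyPoint (b : ℕ → ℝ × ℝ) (τ : ℝ) : ℝ × ℝ :=
  AffineMap.lineMap (b ⌊τ⌋₊) (b (⌊τ⌋₊ + 1)) (τ - ⌊τ⌋₊)

lemma polyPoint_eq (b : ℕ → ℝ × ℝ) {τ : ℝ} {r : ℕ} (h0 : (r : ℝ) ≤ τ) (h1 : τ ≤ r + 1) :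
    polyPoint b τ = AffineMap.lineMap (b r) (b (r + 1)) (τ - r) := by
  rcases h1.eq_or_lt with h1 | h1
  · have : ⌊τ⌋₊ = r + 1 := by rw [h1]; exact_mod_cast Nat.floor_natCast (r + 1)
    rw [polyPoint, this, h1]; simp
  · have : ⌊τ⌋₊ = r := by
      rw [Nat.floor_eq_iff (le_trans (Nat.cast_nonneg r) h0)]; exact ⟨h0, h1⟩
    rw [polyPoint, this]

lemma polyPoint_natCast (b : ℕ → ℝ × ℝ) (r : ℕ) : polyPoint b r = b r := by
  rw [polyPoint_eq b (r := r) le_rfl (by linarith)]; simp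

lemma ne_left_of_mem_openSegment {a b x : ℝ × ℝ} (h : a ≠ b) (hx : x ∈ openSegment ℝ a b) :
    x ≠ a := by
  rintro rfl
  obtain ⟨θ, h0, h1, e⟩ := mem_openSegment_iff_lineMap.1 hx
  have : (AffineMap.lineMap x b θ : ℝ × ℝ) = AffineMap.lineMap x b (0 : ℝ) := by rw [e]; simp
  exact h0.ne' (lineMap_injective_of_ne h this)

lemma ne_right_of_mem_openSegment {a b x : ℝ × ℝ} (h : a ≠ b) (hx : x ∈ openSegment ℝ a b) :
    x ≠ b := by
  rw [openSegment_symm] at hx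
  exact ne_left_of_mem_openSegment h.symm hx

/-- A graph whose edges are the segments indexed by `S` and, for every `i`, the edges of a path of
length `t`, is geometric `k`-planar if each path can be drawn along a generic polyline which has at
most `t` segments and crossings in total. -/
lemma geomKPlanar_of_polylines {V S : Type*} [Finite S] {f k t : ℕ} (hk : 1 ≤ k)
    {G' : SimpleGraph V} (sx sy : S → V) (g : Fin f → ℕ → V) (pt : V → ℝ × ℝ)
    (n : Fin f → ℕ) (b : Fin f → ℕ → ℝ × ℝ) (hn : ∀ i, 1 ≤ n i)
    (hadj : ∀ x y, G'.Adj x y → (∃ e, s(x, y) = s(sx e, sy e)) ∨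
      ∃ i, ∃ j < t, s(x, y) = s(g i j, g i (j + 1)))
    (hg : ∀ i j i' j', 0 < j → j < t → j' ≤ t → g i j = g i' j' → i = i' ∧ j = j')
    (hsx : ∀ e i j, 0 < j → j < t → sx e ≠ g i j ∧ sy e ≠ g i j)
    (hpt : Function.Injective pt) (hb0 : ∀ i, b i 0 = pt (g i 0))
    (hbn : ∀ i, b i (n i) = pt (g i t))
    (hbinj : ∀ i r i' r', 0 < r → r < n i → r' ≤ n i' → b i r = b i' r' → i = i' ∧ r = r')
    (hbpt : ∀ i r w, 0 < r → r < n i → b i r ≠ pt w)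
    (A B : Host S n → ℝ × ℝ) (hA : A = hostA (pt ∘ sx) b) (hB : B = hostB (pt ∘ sy) b)
    (hAB : ∀ σ, A σ ≠ B σ)
    (hW1 : ∀ σ w, pt w ∈ segment ℝ (A σ) (B σ) → pt w = A σ ∨ pt w = B σ)
    (hW2 : ∀ σ i r, 0 < r → r < n i → b i r ∈ segment ℝ (A σ) (B σ) → b i r = A σ ∨ b i r = B σ)
    (hS : ∀ h h', h ≠ h' → (segment ℝ (A h) (B h) ∩ segment ℝ (A h') (B h')).Subsingleton)
    (hNC : ∀ i (r : Fin (n i)) σ σ' X, σ ≠ Sum.inr ⟨i, r⟩ → σ' ≠ Sum.inr ⟨i, r⟩ →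
      X ∈ openSegment ℝ (b i r) (b i (r + 1)) → X ∈ segment ℝ (A σ) (B σ) →
      X ∈ segment ℝ (A σ') (B σ') → σ = σ')
    (hCs : ∀ e, {σ | σ ≠ Sum.inl e ∧ (openSegment ℝ (A (Sum.inl e)) (B (Sum.inl e)) ∩
      segment ℝ (A σ) (B σ)).Nonempty}.ncard ≤ k)
    (hCf : ∀ i, n i + {p : Fin (n i) × Host S n | p.2 ≠ Sum.inr ⟨i, p.1⟩ ∧
      (openSegment ℝ (b i p.1) (b i (p.1 + 1)) ∩ segment ℝ (A p.2) (B p.2)).Nonempty}.ncard ≤ t) :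
    GeomKPlanar k G' := by
  classical
  have hAi : ∀ i r, A (Sum.inr ⟨i, r⟩) = b i r := fun i r => by rw [hA]; rfl
  have hBi : ∀ i r, B (Sum.inr ⟨i, r⟩) = b i (r + 1) := fun i r => by rw [hB]; rfl
  have hAe : ∀ e, A (Sum.inl e) = pt (sx e) := fun e => by rw [hA]; rfl
  have hBe : ∀ e, B (Sum.inl e) = pt (sy e) := fun e => by rw [hB]; rfl
  -- parameters at which the `i`-th polyline meets another segment
  let C : Fin f → Set ℝ := fun i => {τ | ∃ r : Fin (n i), (r : ℝ) < τ ∧ τ < r + 1 ∧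
    ∃ σ, σ ≠ Sum.inr ⟨i, r⟩ ∧ polyPoint (b i) τ ∈ segment ℝ (A σ) (B σ)}
  have hopen : ∀ i (r : Fin (n i)) τ, (r : ℝ) < τ → τ < r + 1 →
      polyPoint (b i) τ ∈ openSegment ℝ (b i r) (b i (r + 1)) := by
    intro i r τ h0 h1
    rw [polyPoint_eq (b i) h0.le h1.le, mem_openSegment_iff_lineMap]
    exact ⟨_, by linarith, by linarith, rfl⟩
  have hCcard : ∀ i, (C i).Finite ∧ n i + (C i).ncard ≤ t := by
    intro i
    have hch : ∀ τ ∈ C i, ∃ p : Fin (n i) × Host S n, (p.1 : ℝ) < τ ∧ τ < p.1 + 1 ∧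
        p.2 ≠ Sum.inr ⟨i, p.1⟩ ∧ polyPoint (b i) τ ∈ segment ℝ (A p.2) (B p.2) := by
      rintro τ ⟨r, h0, h1, σ, h2, h3⟩
      exact ⟨(r, σ), h0, h1, h2, h3⟩
    have : Nonempty (Fin (n i) × Host S n) := ⟨⟨0, hn i⟩, Sum.inr ⟨i, ⟨0, hn i⟩⟩⟩
    choose! φ h0 h1 h2 h3 using hch
    have hmaps : MapsTo φ (C i) {p : Fin (n i) × Host S n | p.2 ≠ Sum.inr ⟨i, p.1⟩ ∧
      (openSegment ℝ (b i p.1) (b i (p.1 + 1)) ∩ segment ℝ (A p.2) (B p.2)).Nonempty} := by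
      intro τ hτ
      exact ⟨h2 τ hτ, _, hopen i _ τ (h0 τ hτ) (h1 τ hτ), h3 τ hτ⟩
    have hinj : InjOn φ (C i) := by
      intro τ hτ τ' hτ' he
      have e1 : polyPoint (b i) τ = polyPoint (b i) τ' := by
        refine hS _ _ (h2 τ hτ).symm ⟨?_, h3 τ hτ⟩ ⟨?_, ?_⟩
        · rw [hAi, hBi]; exact openSegment_subset_segment _ _ _ (hopen i _ τ (h0 τ hτ) (h1 τ hτ))
        · rw [hAi, hBi, he]
          exact openSegment_subset_segment _ _ _ (hopen i _ τ' (h0 τ' hτ') (h1 τ' hτ'))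
        · rw [he]; exact h3 τ' hτ'
      have h0' := h0 τ' hτ'
      have h1' := h1 τ' hτ'
      rw [← he] at h0' h1'
      rw [polyPoint_eq (b i) (h0 τ hτ).le (h1 τ hτ).le, polyPoint_eq (b i) h0'.le h1'.le] at e1
      have hne := hAB (Sum.inr ⟨i, (φ τ).1⟩)
      rw [hAi, hBi] at hne
      have := lineMap_injective_of_ne hne e1
      linarith
    refine ⟨Set.Finite.of_finite_image ((Set.toFinite _).subset hmaps.image_subset) hinj, ?_⟩
    have := Set.ncard_le_ncard_of_injOn φ hmaps hinj (Set.toFinite _)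
    have h := hCf i
    omega
  have hbp : ∀ i, _ := fun i => exists_breakpoints (C := C i) (t := t) (hn i) (hCcard i).1 (by
    rintro c ⟨r, h0, h1, -⟩
    refine ⟨lt_of_le_of_lt (Nat.cast_nonneg _) h0, ?_, ?_⟩
    · have : ((r : ℕ) : ℝ) + 1 ≤ n i := by exact_mod_cast r.2
      linarith
    · rintro m rfl
      have h0' : (r : ℕ) < m := by exact_mod_cast h0
      have h1' : m < (r : ℕ) + 1 := by exact_mod_cast h1
      omega) (hCcard i).2
  choose τ hτ0 hτt hτmono hτint hτC hτsep using hbp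
  have hτpos : ∀ i j, 0 < j → j ≤ t → 0 < τ i j := fun i j h0 h1 => by
    have := hτmono i 0 j h0 h1; rwa [hτ0] at this
  have hτlt : ∀ i j, j < t → τ i j < n i := fun i j h => by
    have := hτmono i j t h le_rfl; rwa [hτt] at this
  have hτnn : ∀ i j, j ≤ t → 0 ≤ τ i j := fun i j h => by
    rcases Nat.eq_zero_or_pos j with rfl | h'
    · rw [hτ0]
    · exact (hτpos i j h' h).le
  have hfl : ∀ i j, j < t → ⌊τ i j⌋₊ < n i := fun i j h =>
    (Nat.floor_lt (hτnn i j h.le)).2 (hτlt i j h)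
  have hfl1 : ∀ i j, j < t → τ i (j + 1) ≤ ⌊τ i j⌋₊ + 1 := by
    intro i j h
    obtain ⟨j', hj', e⟩ := hτint i (⌊τ i j⌋₊ + 1) (hfl i j h)
    have h1 : τ i j < τ i j' := by rw [e]; push_cast; exact Nat.lt_floor_add_one _
    have h2 : j < j' := by
      by_contra hc
      rcases (not_lt.1 hc).eq_or_lt with rfl | h3
      · exact lt_irrefl _ h1
      · exact absurd (hτmono i j' j h3 h.le) (not_lt.2 h1.le)
    push_cast at e
    rw [← e]
    rcases (Nat.succ_le_of_lt h2).eq_or_lt with h3 | h3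
    · rw [← h3]
    · exact (hτmono i _ _ h3 hj').le
  let isInt : V → Prop := fun w => ∃ p : Fin f × ℕ, 0 < p.2 ∧ p.2 < t ∧ w = g p.1 p.2
  let pos : V → ℝ × ℝ := fun w => if h : isInt w then
    polyPoint (b h.choose.1) (τ h.choose.1 h.choose.2) else pt w
  have hpos1 : ∀ i j, 0 < j → j < t → pos (g i j) = polyPoint (b i) (τ i j) := by
    intro i j h0 h1
    have h : isInt (g i j) := ⟨(i, j), h0, h1, rfl⟩
    have hs := h.choose_spec
    obtain ⟨e1, e2⟩ := hg i j _ _ h0 h1 hs.2.1.le hs.2.2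
    simp only [pos]
    rw [dif_pos h, ← e1, ← e2]
  have hpos2 : ∀ w, ¬ isInt w → pos w = pt w := fun w h => dif_neg h
  have hg0 : ∀ i, 0 < t → ¬ isInt (g i 0) := by
    rintro i ht ⟨⟨i', j'⟩, h0, h1, e⟩
    have := (hg i' j' i 0 h0 h1 ht.le e.symm).2
    simp only at h0; omega
  have hgt : ∀ i, ¬ isInt (g i t) := by
    rintro i ⟨⟨i', j'⟩, h0, h1, e⟩
    have := (hg i' j' i t h0 h1 le_rfl e.symm).2
    simp only at h1; omega
  have hposg : ∀ i j, 0 < t → j ≤ t → pos (g i j) = polyPoint (b i) (τ i j) := by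
    intro i j ht hj
    rcases Nat.eq_zero_or_pos j with rfl | h0
    · rw [hpos2 _ (hg0 i ht), hτ0, ← hb0]
      exact_mod_cast (polyPoint_natCast (b i) 0).symm
    · rcases hj.eq_or_lt with rfl | h1
      · rw [hpos2 _ (hgt i), hτt, ← hbn, polyPoint_natCast]
      · exact hpos1 i j h0 h1
  -- description of the new positions
  have hkind : ∀ i j, 0 < j → j < t → (∃ r, 0 < r ∧ r < n i ∧ pos (g i j) = b i r ∧ τ i j = r) ∨
      ∃ r : Fin (n i), (r : ℝ) < τ i j ∧ τ i j < r + 1 ∧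
        pos (g i j) ∈ openSegment ℝ (b i r) (b i (r + 1)) ∧
        ∀ σ, σ ≠ Sum.inr ⟨i, r⟩ → pos (g i j) ∉ segment ℝ (A σ) (B σ) := by
    intro i j h0 h1
    rw [hpos1 i j h0 h1]
    rcases (Nat.floor_le (hτnn i j h1.le)).eq_or_lt with h | h
    · left
      refine ⟨⌊τ i j⌋₊, ?_, hfl i j h1, ?_, h.symm⟩
      · have := hτpos i j h0 h1.le
        rw [← h] at this; exact_mod_cast this
      · conv_lhs => rw [← h]
        rw [polyPoint_natCast]
    · right
      refine ⟨⟨⌊τ i j⌋₊, hfl i j h1⟩, h, Nat.lt_floor_add_one _,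
        hopen i ⟨⌊τ i j⌋₊, hfl i j h1⟩ _ h (Nat.lt_floor_add_one _), fun σ hσ hmem => ?_⟩
      exact hτC i j h1.le ⟨⟨⌊τ i j⌋₊, hfl i j h1⟩, h, Nat.lt_floor_add_one _, σ, hσ, hmem⟩
  have hWo1 : ∀ σ w, pt w ∉ openSegment ℝ (A σ) (B σ) := by
    intro σ w hw
    rcases hW1 σ w (openSegment_subset_segment _ _ _ hw) with h | h
    · exact ne_left_of_mem_openSegment (hAB σ) hw h
    · exact ne_right_of_mem_openSegment (hAB σ) hw h
  have hWo2 : ∀ σ i r, 0 < r → r < n i → b i r ∉ openSegment ℝ (A σ) (B σ) := by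
    intro σ i r h0 h1 hw
    rcases hW2 σ i r h0 h1 (openSegment_subset_segment _ _ _ hw) with h | h
    · exact ne_left_of_mem_openSegment (hAB σ) hw h
    · exact ne_right_of_mem_openSegment (hAB σ) hw h
  have hWo3 : ∀ i j σ, 0 < j → j < t → pos (g i j) ∈ openSegment ℝ (A σ) (B σ) →
      ∃ r : Fin (n i), σ = Sum.inr ⟨i, r⟩ ∧ (r : ℝ) < τ i j ∧ τ i j < r + 1 := by
    intro i j σ h0 h1 hmem
    rcases hkind i j h0 h1 with ⟨r, hr0, hr1, e, -⟩ | ⟨r, hr0, hr1, -, hno⟩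
    · rw [e] at hmem
      exact absurd hmem (hWo2 σ i r hr0 hr1)
    · by_cases hσ : σ = Sum.inr ⟨i, r⟩
      · exact ⟨r, hσ, hr0, hr1⟩
      · exact absurd (openSegment_subset_segment _ _ _ hmem) (hno σ hσ)
  have hτinj : ∀ i j j', j ≤ t → j' ≤ t → τ i j = τ i j' → j = j' := by
    intro i j j' hj hj' e
    rcases lt_trichotomy j j' with h | h | h
    · exact absurd e (hτmono i j j' h hj').ne
    · exact h
    · exact absurd e (hτmono i j' j h hj).ne'
  have hnb : ∀ i (r : Fin (n i)), b i r ≠ b i (r + 1) := fun i r => by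
    have := hAB (Sum.inr ⟨i, r⟩); rwa [hAi, hBi] at this
  have hinj : Function.Injective pos := by
    have key : ∀ i j w, 0 < j → j < t → ¬ isInt w → pos (g i j) ≠ pos w := by
      intro i j w h0 h1 hw e
      rw [hpos2 w hw] at e
      rcases hkind i j h0 h1 with ⟨r, hr0, hr1, e', -⟩ | ⟨r, -, -, hmem, -⟩
      · exact hbpt i r w hr0 hr1 (e'.symm.trans e)
      · rw [e, ← hAi, ← hBi] at hmem
        exact hWo1 _ w hmem
    intro w w' e
    by_cases hw : isInt w
    · obtain ⟨⟨i, j⟩, h0, h1, rfl⟩ := hw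
      by_cases hw' : isInt w'
      · obtain ⟨⟨i', j'⟩, h0', h1', rfl⟩ := hw'
        simp only at h0 h1 h0' h1' e ⊢
        have hfin : ∀ (h : i = i'), τ i j = τ i' j' → g i j = g i' j' := by
          rintro rfl h
          rw [hτinj i j j' h1.le h1'.le h]
        rcases hkind i j h0 h1 with ⟨r, hr0, hr1, e1, e2⟩ | ⟨r, hr0, hr1, hmem, hno⟩
        · rcases hkind i' j' h0' h1' with ⟨r', hr0', hr1', e1', e2'⟩ | ⟨r', hr0', hr1', hmem', hno'⟩
          · obtain ⟨rfl, rfl⟩ := hbinj i r i' r' hr0 hr1 hr1'.le (by rw [← e1, e, e1'])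
            exact hfin rfl (e2.trans e2'.symm)
          · rw [← e, e1, ← hAi, ← hBi] at hmem'
            exact absurd hmem' (hWo2 _ i r hr0 hr1)
        · rw [← hAi, ← hBi, e] at hmem
          obtain ⟨r', h, h2, h3⟩ := hWo3 i' j' _ h0' h1' hmem
          simp only [Sum.inr.injEq, Sigma.mk.injEq] at h
          obtain ⟨rfl, h⟩ := h
          obtain rfl := eq_of_heq h
          refine hfin rfl ?_
          rw [hpos1 i j h0 h1, hpos1 i j' h0' h1', polyPoint_eq _ hr0.le hr1.le,
            polyPoint_eq _ h2.le h3.le] at e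
          have := lineMap_injective_of_ne (hnb i r) e
          linarith
      · exact absurd e (key i j w' h0 h1 hw')
    · by_cases hw' : isInt w'
      · obtain ⟨⟨i, j⟩, h0, h1, rfl⟩ := hw'
        exact absurd e.symm (key i j w h0 h1 hw)
      · rw [hpos2 w hw, hpos2 w' hw'] at e
        exact hpt e
  have hnint : ∀ e, ¬ isInt (sx e) ∧ ¬ isInt (sy e) := by
    refine fun e => ⟨?_, ?_⟩
    · rintro ⟨⟨i, j⟩, h0, h1, h⟩; exact (hsx e i j h0 h1).1 h
    · rintro ⟨⟨i, j⟩, h0, h1, h⟩; exact (hsx e i j h0 h1).2 h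
  let E := S ⊕ (Fin f × Fin t)
  let x : E → V := Sum.elim sx (fun p => g p.1 p.2)
  let y : E → V := Sum.elim sy (fun p => g p.1 (p.2 + 1))
  let host : E → Host S n :=
    Sum.elim Sum.inl (fun p => Sum.inr ⟨p.1, ⟨⌊τ p.1 p.2⌋₊, hfl p.1 p.2 p.2.2⟩⟩)
  let α : E → ℝ := Sum.elim (fun _ => 0) (fun p => τ p.1 p.2 - ⌊τ p.1 p.2⌋₊)
  let β : E → ℝ := Sum.elim (fun _ => 1) (fun p => τ p.1 (p.2 + 1) - ⌊τ p.1 p.2⌋₊)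
  have hαβ : ∀ ε, α ε < β ε := by
    rintro (e | ⟨i, j⟩)
    · exact zero_lt_one
    · have := hτmono i j (j + 1) (by omega) j.2
      simp only [α, β, Sum.elim_inr]; linarith
  have hα0 : ∀ ε, 0 ≤ α ε := by
    rintro (e | ⟨i, j⟩)
    · exact le_rfl
    · have := Nat.floor_le (hτnn i j j.2.le)
      simp only [α, Sum.elim_inr]; linarith
  have hβ1 : ∀ ε, β ε ≤ 1 := by
    rintro (e | ⟨i, j⟩)
    · exact le_rfl
    · have := hfl1 i j j.2
      simp only [β, Sum.elim_inr]; linarith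
  have hposx : ∀ ε, pos (x ε) = AffineMap.lineMap (A (host ε)) (B (host ε)) (α ε) := by
    rintro (e | ⟨i, j⟩)
    · simp only [x, host, α, Sum.elim_inl, AffineMap.lineMap_apply_zero]
      rw [hpos2 _ (hnint e).1, hAe]
    · simp only [x, host, α, Sum.elim_inr]
      rw [hposg i j (j.pos) j.2.le, hAi, hBi]
      rfl
  have hposy : ∀ ε, pos (y ε) = AffineMap.lineMap (A (host ε)) (B (host ε)) (β ε) := by
    rintro (e | ⟨i, j⟩)
    · simp only [y, host, β, Sum.elim_inl, AffineMap.lineMap_apply_one]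
      rw [hpos2 _ (hnint e).2, hBe]
    · simp only [y, host, β, Sum.elim_inr]
      rw [hposg i (j + 1) (j.pos) j.2, hAi, hBi]
      refine polyPoint_eq _ ?_ (hfl1 i j j.2)
      exact (Nat.floor_le (hτnn i j j.2.le)).trans (hτmono i j (j + 1) (by omega) j.2).le
  refine geomKPlanar_of_hosts (pos := pos) x y host α β A B ?_ hAB hposx hposy hα0 hαβ hβ1 hinj
    ?_ ?_ hS ?_
  · intro a c hac
    rcases hadj a c hac with ⟨e, he⟩ | ⟨i, j, hj, he⟩
    · exact ⟨Sum.inl e, he⟩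
    · exact ⟨Sum.inr (i, ⟨j, hj⟩), he⟩
  · intro w ε θ h0 h1 e
    have hmem : pos w ∈ openSegment ℝ (A (host ε)) (B (host ε)) := by
      rw [e, mem_openSegment_iff_lineMap]
      exact ⟨θ, lt_of_le_of_lt (hα0 ε) h0, lt_of_lt_of_le h1 (hβ1 ε), rfl⟩
    by_cases hw : isInt w
    · obtain ⟨⟨i', j'⟩, hj0, hj1, rfl⟩ := hw
      simp only at hj0 hj1 e hmem
      obtain ⟨r, hr, hr0, hr1⟩ := hWo3 i' j' _ hj0 hj1 hmem
      rcases ε with e' | ⟨i, j⟩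
      · simp [host] at hr
      · simp only [host, Sum.elim_inr, Sum.inr.injEq, Sigma.mk.injEq] at hr
        obtain ⟨rfl, hr⟩ := hr
        obtain rfl := eq_of_heq hr
        rw [hpos1 i j' hj0 hj1, polyPoint_eq _ hr0.le hr1.le] at e
        simp only [host, Sum.elim_inr, hAi, hBi] at e
        have e3 := lineMap_injective_of_ne (hnb i ⟨⌊τ i j⌋₊, hfl i j j.2⟩) e
        simp only [α, β, Sum.elim_inr] at h0 h1
        have h2 : τ i j < τ i j' := by linarith
        have h3 : τ i j' < τ i (j + 1) := by linarith
        rcases le_or_gt j' j with h | h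
        · rcases h.eq_or_lt with h | h
          · rw [h] at h2; exact lt_irrefl _ h2
          · have := hτmono i j' j h j.2.le; linarith
        · rcases (Nat.succ_le_of_lt h).eq_or_lt with h | h
          · rw [← h] at h3; exact lt_irrefl _ h3
          · have := hτmono i _ j' h hj1.le
            simp only [Nat.succ_eq_add_one] at this
            linarith
    · rw [hpos2 w hw] at hmem
      exact hWo1 _ w hmem
  · rintro (e | ⟨i, j⟩) (e' | ⟨i', j'⟩) hne hh
    · simp only [host, Sum.elim_inl, Sum.inl.injEq] at hh
      exact absurd (congrArg Sum.inl hh) hne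
    · simp [host] at hh
    · simp [host] at hh
    · simp only [host, Sum.elim_inr, Sum.inr.injEq, Sigma.mk.injEq] at hh
      obtain ⟨rfl, hh⟩ := hh
      have hh' := Fin.mk.inj_iff.1 (eq_of_heq hh)
      simp only [α, β, Sum.elim_inr]
      rw [hh']
      have hle : ∀ a c : Fin t, a < c → τ i (a + 1) ≤ τ i c := by
        intro a c hac
        rcases (Nat.succ_le_of_lt hac).eq_or_lt with h | h
        · exact le_of_eq (congrArg (τ i) h)
        · exact (hτmono i _ c h c.2.le).le
      rcases lt_trichotomy j j' with h | h | h
      · left; linarith [hle j j' h]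
      · exact absurd (by rw [h]) hne
      · right; linarith [hle j' j h]
  · rintro (e | ⟨i, j⟩)
    · simp only [x, y, host, Sum.elim_inl]
      rw [hpos2 _ (hnint e).1, hpos2 _ (hnint e).2, ← hAe, ← hBe]
      exact hCs e
    · refine le_trans (Set.ncard_le_one_iff_subsingleton.2 ?_) hk
      have hX : ∀ X ∈ openSegment ℝ (pos (x (Sum.inr (i, j)))) (pos (y (Sum.inr (i, j)))),
          ∃ c, τ i j < c ∧ c < τ i (j + 1) ∧ (⌊τ i j⌋₊ : ℝ) < c ∧ c < ⌊τ i j⌋₊ + 1 ∧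
            X = polyPoint (b i) c := by
        intro X hX
        rw [hposx, hposy, mem_openSegment_lineMap (hαβ _)] at hX
        obtain ⟨θ, h0, h1, rfl⟩ := hX
        simp only [α, β, Sum.elim_inr] at h0 h1
        have h2 := Nat.floor_le (hτnn i j j.2.le)
        have h3 := hfl1 i j j.2
        refine ⟨⌊τ i j⌋₊ + θ, by linarith, by linarith, by linarith, by linarith, ?_⟩
        rw [polyPoint_eq (b i) (r := ⌊τ i j⌋₊) (by linarith) (by linarith)]
        simp only [host, Sum.elim_inr, hAi, hBi]
        congr 1; ring
      rintro σ ⟨hσ, X, hX1, hX2⟩ σ' ⟨hσ', X', hX1', hX2'⟩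
      obtain ⟨c, c1, c2, c3, c4, rfl⟩ := hX X hX1
      obtain ⟨c', c1', c2', c3', c4', rfl⟩ := hX X' hX1'
      simp only [host, Sum.elim_inr] at hσ hσ'
      have hc : c ∈ C i := ⟨⟨⌊τ i j⌋₊, hfl i j j.2⟩, c3, c4, σ, hσ, hX2⟩
      have hc' : c' ∈ C i := ⟨⟨⌊τ i j⌋₊, hfl i j j.2⟩, c3', c4', σ', hσ', hX2'⟩
      obtain rfl := hτsep i j j.2 c hc c' hc' c1 c2 c1' c2'
      exact hNC i ⟨⌊τ i j⌋₊, hfl i j j.2⟩ σ σ' _ hσ hσ'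
        (hopen i ⟨⌊τ i j⌋₊, hfl i j j.2⟩ c c3 c4) hX2 hX2'

/-- Segments with endpoints among `F` and a family in general position relative to `F`. -/
structure GenHosts {ι H : Type*} (F : Set (ℝ × ℝ)) (q : ι → ℝ × ℝ) (A B : H → ℝ × ℝ) : Prop where
  gen : GenPos F q
  left_mem : ∀ σ, A σ ∈ F ∪ range q
  right_mem : ∀ σ, B σ ∈ F ∪ range q
  ne : ∀ σ, A σ ≠ B σ
  fixed_mem : ∀ σ, A σ ∈ F → B σ ∈ F → ∀ x ∈ F, x ∈ segment ℝ (A σ) (B σ) → x = A σ ∨ x = B σ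
  fixed_inter : ∀ σ σ', A σ ∈ F → B σ ∈ F → A σ' ∈ F → B σ' ∈ F → σ ≠ σ' →
    (segment ℝ (A σ) (B σ) ∩ segment ℝ (A σ') (B σ')).Subsingleton
  ends : ∀ σ σ', σ ≠ σ' → (A σ ∉ F ∨ B σ ∉ F) →
    ¬ (A σ = A σ' ∧ B σ = B σ') ∧ ¬ (A σ = B σ' ∧ B σ = A σ')

lemma GenPos.eq_ends_of_collinear {ι : Type*} {F : Set (ℝ × ℝ)} {q : ι → ℝ × ℝ}
    (hq : GenPos F q) {a : ι} {d x y : ℝ × ℝ} (hd : d ∈ F ∪ range q) (hx : x ∈ F ∪ range q)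
    (hy : y ∈ F ∪ range q) (hxy : x ≠ y) (hda : d ≠ q a) (h1 : cr x y (q a) = 0)
    (h2 : cr x y d = 0) : (q a = x ∧ d = y) ∨ (q a = y ∧ d = x) := by
  by_cases hax : x = q a
  · left
    refine ⟨hax.symm, ?_⟩
    by_contra hdy
    subst hax
    refine hq.noncollinear d hd y hy a hdy hda hxy.symm ?_
    exact cr_eq_zero_of_collinear hxy h2 (cr_self_right _ _) (cr_self_left _ _)
  · by_cases hay : y = q a
    · right
      refine ⟨hay.symm, ?_⟩
      by_contra hdx
      subst hay
      refine hq.noncollinear d hd x hx a hdx hda hxy ?_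
      exact cr_eq_zero_of_collinear hxy h2 (cr_self_left _ _) (cr_self_right _ _)
    · exact absurd h1 (hq.noncollinear x hx y hy a hxy hax hay)

/-- Two collinear segments with a common point which is interior to the first one contain an
endpoint of one of them. -/
lemma exists_endpoint_mem_of_collinear {a b c d X : ℝ × ℝ} (hab : a ≠ b)
    (hc : cr a b c = 0) (hd : cr a b d = 0) (hX : X ∈ segment ℝ a b) (hX' : X ∈ segment ℝ c d) :
    c ∈ segment ℝ a b ∨ d ∈ segment ℝ a b ∨ a ∈ segment ℝ c d := by
  obtain ⟨p, rfl⟩ := exists_lineMap_of_cr_eq_zero hab hc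
  obtain ⟨q, rfl⟩ := exists_lineMap_of_cr_eq_zero hab hd
  obtain ⟨x, hx0, hx1, rfl⟩ := mem_segment_iff_lineMap.1 hX
  obtain ⟨θ, h0, h1, e⟩ := mem_segment_iff_lineMap.1 hX'
  rw [lineMap_lineMap_lineMap] at e
  have e' := lineMap_injective_of_ne hab e
  by_cases hp : 0 ≤ p ∧ p ≤ 1
  · exact Or.inl (mem_segment_iff_lineMap.2 ⟨p, hp.1, hp.2, rfl⟩)
  by_cases hq : 0 ≤ q ∧ q ≤ 1
  · exact Or.inr (Or.inl (mem_segment_iff_lineMap.2 ⟨q, hq.1, hq.2, rfl⟩))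
  right; right
  have hpq : (p ≤ 0 ∧ 0 ≤ q) ∨ (q ≤ 0 ∧ 0 ≤ p) := by
    by_contra! hcon
    rcases le_total p 0 with h | h
    · have := hcon.1 h
      have hp' : p < 0 := by by_contra hh; exact hp ⟨not_lt.1 hh, by linarith⟩
      rcases le_total p q <;> nlinarith
    · have h' : 0 < q := by by_contra hh; linarith [hcon.2 (not_lt.1 hh)]
      have hp' : 1 < p := by by_contra hh; exact hp ⟨h, not_lt.1 hh⟩
      have hq' : 1 < q := by by_contra hh; exact hq ⟨h'.le, not_lt.1 hh⟩
      rcases le_total p q <;> nlinarith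
  rw [mem_segment_iff_lineMap]
  have hne : q - p ≠ 0 := by
    intro hh
    have : p = 0 := by rcases hpq with h | h <;> linarith
    exact hp ⟨this.ge, by linarith⟩
  refine ⟨-p / (q - p), ?_, ?_, ?_⟩
  · rcases hpq with h | h
    · exact div_nonneg (by linarith) (by linarith)
    · exact div_nonneg_of_nonpos (by linarith) (by linarith)
  · rcases hpq with h | h
    · exact div_le_one_of_le₀ (by linarith) (by linarith)
    · exact div_le_one_of_ge (by linarith) (by linarith)
  · rw [lineMap_lineMap_lineMap, div_mul_cancel₀ _ hne]; simp

namespace GenHosts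
variable {ι H : Type*} {F : Set (ℝ × ℝ)} {q : ι → ℝ × ℝ} {A B : H → ℝ × ℝ}

lemma eq_end_of_mem (h : GenHosts F q A B) {σ : H} {x : ℝ × ℝ} (hx : x ∈ F ∪ range q)
    (hmem : x ∈ segment ℝ (A σ) (B σ)) : x = A σ ∨ x = B σ := by
  have hcr := cr_eq_zero_of_mem_segment hmem
  by_cases hA : ∃ a, A σ = q a
  · obtain ⟨a, ha⟩ := hA
    by_contra! hne
    have := h.gen.eq_ends_of_collinear (a := a) (d := B σ) (h.right_mem σ) hx (h.right_mem σ)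
      hne.2 (ha ▸ (h.ne σ).symm) (ha ▸ cr_eq_zero_of_collinear (h.ne σ) hcr (cr_self_right _ _)
      (cr_self_left _ _)) (cr_self_right _ _)
    rcases this with h' | h'
    · exact hne.1 (by rw [ha, h'.1])
    · exact hne.2 h'.2.symm
  by_cases hB : ∃ a, B σ = q a
  · obtain ⟨a, ha⟩ := hB
    by_contra! hne
    have := h.gen.eq_ends_of_collinear (a := a) (d := A σ) (h.left_mem σ) hx (h.left_mem σ)
      hne.1 (ha ▸ (h.ne σ)) (ha ▸ cr_eq_zero_of_collinear (h.ne σ) hcr (cr_self_left _ _)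
      (cr_self_right _ _)) (cr_self_right _ _)
    rcases this with h' | h'
    · exact hne.2 (by rw [ha, h'.1])
    · exact hne.1 h'.2.symm
  have hAF : A σ ∈ F := (h.left_mem σ).resolve_right fun ⟨a, ha⟩ => hA ⟨a, ha.symm⟩
  have hBF : B σ ∈ F := (h.right_mem σ).resolve_right fun ⟨a, ha⟩ => hB ⟨a, ha.symm⟩
  rcases hx with hx | ⟨a, rfl⟩
  · exact h.fixed_mem σ hAF hBF x hx hmem
  · by_contra! hne
    exact h.gen.noncollinear _ (h.left_mem σ) _ (h.right_mem σ) a (h.ne σ) hne.1.symm hne.2.symm hcr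

lemma notMem_openSegment (h : GenHosts F q A B) {σ : H} {x : ℝ × ℝ} (hx : x ∈ F ∪ range q) :
    x ∉ openSegment ℝ (A σ) (B σ) := by
  intro hmem
  rcases h.eq_end_of_mem hx (openSegment_subset_segment _ _ _ hmem) with h' | h'
  · exact ne_left_of_mem_openSegment (h.ne σ) hmem h'
  · exact ne_right_of_mem_openSegment (h.ne σ) hmem h'

lemma not_collinear (h : GenHosts F q A B) {σ σ' : H} (hne : σ ≠ σ') (hσ : A σ ∉ F ∨ B σ ∉ F)
    (h1 : cr (A σ') (B σ') (A σ) = 0) (h2 : cr (A σ') (B σ') (B σ) = 0) : False := by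
  have hends := h.ends σ σ' hne hσ
  rcases hσ with hσ | hσ
  · obtain ⟨a, ha⟩ := (h.left_mem σ).resolve_left hσ
    rcases h.gen.eq_ends_of_collinear (a := a) (h.right_mem σ) (h.left_mem σ') (h.right_mem σ')
      (h.ne σ') (ha ▸ (h.ne σ).symm) (ha ▸ h1) h2 with h' | h'
    · exact hends.1 ⟨ha ▸ h'.1, h'.2⟩
    · exact hends.2 ⟨ha ▸ h'.1, h'.2⟩
  · obtain ⟨a, ha⟩ := (h.right_mem σ).resolve_left hσ
    rcases h.gen.eq_ends_of_collinear (a := a) (h.left_mem σ) (h.left_mem σ') (h.right_mem σ')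
      (h.ne σ') (ha ▸ (h.ne σ)) (ha ▸ h2) h1 with h' | h'
    · exact hends.2 ⟨h'.2, ha ▸ h'.1⟩
    · exact hends.1 ⟨h'.2, ha ▸ h'.1⟩

lemma subsingleton_inter (h : GenHosts F q A B) {σ σ' : H} (hne : σ ≠ σ') :
    (segment ℝ (A σ) (B σ) ∩ segment ℝ (A σ') (B σ')).Subsingleton := by
  have key : ∀ σ σ' : H, σ ≠ σ' → (A σ ∉ F ∨ B σ ∉ F) →
      (segment ℝ (A σ) (B σ) ∩ segment ℝ (A σ') (B σ')).Subsingleton := by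
    rintro σ σ' hne hσ X ⟨hX, hX'⟩ Y ⟨hY, hY'⟩
    by_contra hXY
    have c1 := cr_eq_zero_of_mem_segment hX
    have c2 := cr_eq_zero_of_mem_segment hX'
    have c3 := cr_eq_zero_of_mem_segment hY
    have c4 := cr_eq_zero_of_mem_segment hY'
    have d1 := cr_eq_zero_of_collinear (h.ne σ) c1 c3 (cr_self_left _ _)
    have d2 := cr_eq_zero_of_collinear (h.ne σ) c1 c3 (cr_self_right _ _)
    have d3 := cr_eq_zero_of_collinear (h.ne σ') c2 c4 (cr_self_left _ _)
    have d4 := cr_eq_zero_of_collinear (h.ne σ') c2 c4 (cr_self_right _ _)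
    exact h.not_collinear hne hσ (cr_eq_zero_of_collinear hXY d3 d4 d1)
      (cr_eq_zero_of_collinear hXY d3 d4 d2)
  by_cases hσ : A σ ∉ F ∨ B σ ∉ F
  · exact key σ σ' hne hσ
  by_cases hσ' : A σ' ∉ F ∨ B σ' ∉ F
  · rw [inter_comm]; exact key σ' σ hne.symm hσ'
  push Not at hσ hσ'
  exact h.fixed_inter σ σ' hσ.1 hσ.2 hσ'.1 hσ'.2 hne

/-- Segments through a common point one of which has a new endpoint are not parallel. -/
lemma crLin_ne_zero (h : GenHosts F q A B) {σ σ' : H} (hne : σ ≠ σ') (hσ : A σ ∉ F ∨ B σ ∉ F)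
    {X : ℝ × ℝ} (hX : cr (A σ) (B σ) X = 0) (hX' : cr (A σ') (B σ') X = 0) :
    crLin (A σ) (B σ) (B σ' - A σ') ≠ 0 := by
  intro h0
  rw [crLin_swap, neg_eq_zero] at h0
  obtain ⟨θ, hθ⟩ := exists_lineMap_of_cr_eq_zero (h.ne σ) hX
  rw [← hθ, cr_lineMap] at hX'
  rw [crLin_sub] at h0
  exact h.not_collinear hne hσ (by linear_combination hX' - θ * h0)
    (by linear_combination hX' + (1 - θ) * h0)

lemma eq_of_mem_openSegment (h : GenHosts F q A B) {σ σ₁ σ₂ : H} (hσ : A σ ∉ F ∨ B σ ∉ F)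
    (h1 : σ₁ ≠ σ) (h2 : σ₂ ≠ σ) {X : ℝ × ℝ} (hX : X ∈ openSegment ℝ (A σ) (B σ))
    (hX1 : X ∈ segment ℝ (A σ₁) (B σ₁)) (hX2 : X ∈ segment ℝ (A σ₂) (B σ₂)) : σ₁ = σ₂ := by
  by_contra hne
  have hXZ : X ∉ F ∪ range q := fun hh => h.notMem_openSegment hh hX
  have c := cr_eq_zero_of_mem_segment (openSegment_subset_segment _ _ _ hX)
  have c1 := cr_eq_zero_of_mem_segment hX1
  have c2 := cr_eq_zero_of_mem_segment hX2
  have hpar : crLin (A σ₁) (B σ₁) (B σ₂ - A σ₂) ≠ 0 := by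
    by_cases hσ1 : A σ₁ ∉ F ∨ B σ₁ ∉ F
    · exact h.crLin_ne_zero hne hσ1 c1 c2
    by_cases hσ2 : A σ₂ ∉ F ∨ B σ₂ ∉ F
    · rw [crLin_swap, neg_ne_zero]
      exact h.crLin_ne_zero (Ne.symm hne) hσ2 c2 c1
    intro h0
    push Not at hσ1 hσ2
    have hsub := h.fixed_inter σ₁ σ₂ hσ1.1 hσ1.2 hσ2.1 hσ2.2 hne
    obtain ⟨θ, -, -, hθ⟩ := mem_segment_iff_lineMap.1 hX2
    rw [← hθ, cr_lineMap] at c1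
    rw [crLin_sub] at h0
    rcases exists_endpoint_mem_of_collinear (h.ne σ₁) (c := A σ₂) (d := B σ₂)
      (by linear_combination c1 - θ * h0)
      (by linear_combination c1 + (1 - θ) * h0) hX1 hX2 with h' | h' | h'
    · exact hXZ (hsub ⟨hX1, hX2⟩ ⟨h', left_mem_segment ℝ _ _⟩ ▸ Or.inl hσ2.1)
    · exact hXZ (hsub ⟨hX1, hX2⟩ ⟨h', right_mem_segment ℝ _ _⟩ ▸ Or.inl hσ2.2)
    · exact hXZ (hsub ⟨hX1, hX2⟩ ⟨left_mem_segment ℝ _ _, h'⟩ ▸ Or.inl hσ1.1)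
  rcases h.gen.nonconcurrent _ (h.left_mem σ) _ (h.right_mem σ) _ (h.left_mem σ₁) _
    (h.right_mem σ₁) _ (h.left_mem σ₂) _ (h.right_mem σ₂)
    (fun hh => hσ.elim (fun h' => h' hh.1) (fun h' => h' hh.2.1))
    (h.crLin_ne_zero h1.symm hσ c c1) hpar (h.crLin_ne_zero h2.symm hσ c c2) X c c1 c2
    with e | e | e | e | e | e
  · exact hXZ (e ▸ h.left_mem σ)
  · exact hXZ (e ▸ h.right_mem σ)
  · exact hXZ (e ▸ h.left_mem σ₁)
  · exact hXZ (e ▸ h.right_mem σ₁)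
  · exact hXZ (e ▸ h.left_mem σ₂)
  · exact hXZ (e ▸ h.right_mem σ₂)

end GenHosts

/-- A straight-line drawing of the segments `sx e`, `sy e` and of the vertices in `K`. -/
structure StaticDrawing {V S : Type*} (K : Set V) (sx sy : S → V) (pos : V → ℝ × ℝ) : Prop where
  injOn : InjOn pos K
  left_mem : ∀ e, sx e ∈ K
  right_mem : ∀ e, sy e ∈ K
  ne : ∀ e, sx e ≠ sy e
  vert : ∀ e, ∀ w ∈ K, pos w ∈ segment ℝ (pos (sx e)) (pos (sy e)) → w = sx e ∨ w = sy e
  inter : ∀ e e', e ≠ e' → (segment ℝ (pos (sx e)) (pos (sy e)) ∩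
    segment ℝ (pos (sx e')) (pos (sy e'))).Subsingleton

/-- Polylines `b i` joining `u i` to `v i` in general position relative to a static drawing. -/
structure Realization {V S : Type*} {f : ℕ} (K : Set V) (sx sy : S → V) (pos : V → ℝ × ℝ)
    (u v : Fin f → V) (n : Fin f → ℕ) {ι : Type*} (q : ι → ℝ × ℝ) (pt : V → ℝ × ℝ)
    (b : Fin f → ℕ → ℝ × ℝ) : Prop where
  pt_eq : ∀ w ∈ K, pt w = pos w
  pt_inj : Function.Injective pt
  pt_mem : ∀ w, pt w ∈ pos '' K ∪ range q
  b_zero : ∀ i, b i 0 = pos (u i)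
  b_last : ∀ i, b i (n i) = pos (v i)
  b_mem : ∀ i r, 0 < r → r < n i → b i r ∈ range q
  b_inj : ∀ i r i' r', 0 < r → r < n i → r' ≤ n i' → b i r = b i' r' → i = i' ∧ r = r'
  b_ne : ∀ i r w, 0 < r → r < n i → b i r ≠ pt w
  hosts : GenHosts (pos '' K) q (hostA (n := n) (pos ∘ sx) b) (hostB (n := n) (pos ∘ sy) b)

lemma exists_uniform_radius {H : Type*} [Finite H] (A B : H → ℝ × ℝ) :
    ∃ ρ > 0, ∀ A' B' : H → ℝ × ℝ, (∀ σ, dist (A' σ) (A σ) < ρ) → (∀ σ, dist (B' σ) (B σ) < ρ) →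
      ∀ σ σ', Disjoint (segment ℝ (A σ) (B σ)) (segment ℝ (A σ') (B σ')) →
        Disjoint (segment ℝ (A' σ) (B' σ)) (segment ℝ (A' σ') (B' σ')) := by
  have hc : ∀ σ, IsCompact (segment ℝ (A σ) (B σ)) := fun σ => by
    rw [segment_eq_image_lineMap]
    exact isCompact_Icc.image (AffineMap.lineMap_continuous)
  have h1 : ∀ p : H × H, ∃ δ > 0, Disjoint (segment ℝ (A p.1) (B p.1)) (segment ℝ (A p.2) (B p.2)) →
      Disjoint (Metric.thickening δ (segment ℝ (A p.1) (B p.1)))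
        (Metric.thickening δ (segment ℝ (A p.2) (B p.2))) := by
    intro p
    by_cases hd : Disjoint (segment ℝ (A p.1) (B p.1)) (segment ℝ (A p.2) (B p.2))
    · obtain ⟨δ, hδ, h⟩ := hd.exists_thickenings (hc p.1) (hc p.2).isClosed
      exact ⟨δ, hδ, fun _ => h⟩
    · exact ⟨1, one_pos, fun h => absurd h hd⟩
  choose δ hδ hdisj using h1
  have hev : ∀ᶠ ρ in nhdsWithin (0 : ℝ) (Ioi 0), ∀ p, ρ < δ p := by
    rw [Filter.eventually_all]
    exact fun p => Filter.Eventually.filter_mono nhdsWithin_le_nhds (eventually_lt_nhds (hδ p))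
  obtain ⟨ρ, hρ, hρ0⟩ := (hev.and self_mem_nhdsWithin).exists
  refine ⟨ρ, hρ0, fun A' B' hA hB σ σ' hd => ?_⟩
  have hsub : ∀ τ, ∀ ε > ρ, segment ℝ (A' τ) (B' τ) ⊆
      Metric.thickening ε (segment ℝ (A τ) (B τ)) := by
    intro τ ε hε
    refine ((convex_segment _ _).thickening ε).segment_subset ?_ ?_
    · exact Metric.mem_thickening_iff.2 ⟨_, left_mem_segment ℝ _ _, (hA τ).trans hε⟩
    · exact Metric.mem_thickening_iff.2 ⟨_, right_mem_segment ℝ _ _, (hB τ).trans hε⟩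
  exact (hdisj (σ, σ') hd).mono (hsub σ _ (hρ (σ, σ'))) (hsub σ' _ (hρ (σ, σ')))

lemma exists_realization {V S : Type*} [Finite V] [Finite S] {f : ℕ} {K : Set V} {sx sy : S → V}
    {pos : V → ℝ × ℝ} (hst : StaticDrawing K sx sy pos) {u v : Fin f → V} (hu : ∀ i, u i ∈ K)
    (hv : ∀ i, v i ∈ K) (huv : ∀ i, u i ≠ v i) {n : Fin f → ℕ} (hn : ∀ i, 2 ≤ n i)
    (L : Fin f → ℕ → ℝ × ℝ) (U : Fin f → ℕ → Set (ℝ × ℝ)) (hL0 : ∀ i, L i 0 = pos (u i))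
    (hLn : ∀ i, L i (n i) = pos (v i)) (hU : ∀ i r, 0 < r → r < n i → IsOpen (U i r))
    (hLU : ∀ i r, 0 < r → r < n i → L i r ∈ closure (U i r)) :
    ∃ (q : ((Σ i, Fin (n i)) ⊕ V) → ℝ × ℝ) (pt : V → ℝ × ℝ) (b : Fin f → ℕ → ℝ × ℝ),
      Realization K sx sy pos u v n q pt b ∧ (∀ i r, 0 < r → r < n i → b i r ∈ U i r) ∧
      ∀ σ σ' : Host S n, Disjoint (segment ℝ (hostA (pos ∘ sx) L σ) (hostB (pos ∘ sy) L σ))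
          (segment ℝ (hostA (pos ∘ sx) L σ') (hostB (pos ∘ sy) L σ')) →
        Disjoint (segment ℝ (hostA (pos ∘ sx) b σ) (hostB (pos ∘ sy) b σ))
          (segment ℝ (hostA (pos ∘ sx) b σ') (hostB (pos ∘ sy) b σ')) := by
  classical
  have := Fintype.ofFinite V
  obtain ⟨ρ, hρ, hdisj⟩ := exists_uniform_radius (hostA (n := n) (pos ∘ sx) L)
    (hostB (n := n) (pos ∘ sy) L)
  let O : ((Σ i, Fin (n i)) ⊕ V) → Set (ℝ × ℝ) :=
    Sum.elim (fun p => if 0 < (p.2 : ℕ) then U p.1 p.2 ∩ Metric.ball (L p.1 p.2) ρ else univ)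
      fun _ => univ
  obtain ⟨q, hqO, hq⟩ := exists_genPos O (F := pos '' K) (by
    rintro (⟨i, r⟩ | w)
    · by_cases hr : 0 < (r : ℕ)
      · simp only [O, Sum.elim_inl, if_pos hr]
        exact (hU i r hr r.2).inter Metric.isOpen_ball
      · simp only [O, Sum.elim_inl, if_neg hr]; exact isOpen_univ
    · exact isOpen_univ) (by
    rintro (⟨i, r⟩ | w)
    · by_cases hr : 0 < (r : ℕ)
      · simp only [O, Sum.elim_inl, if_pos hr]
        rw [inter_comm]
        exact mem_closure_iff.1 (hLU i r hr r.2) _ Metric.isOpen_ball (Metric.mem_ball_self hρ)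
      · simp only [O, Sum.elim_inl, if_neg hr]; exact univ_nonempty
    · exact univ_nonempty) (Set.toFinite _)
  let b : Fin f → ℕ → ℝ × ℝ := fun i r => if r = 0 then pos (u i) else
    if h : r < n i then q (Sum.inl ⟨i, ⟨r, h⟩⟩) else pos (v i)
  let pt : V → ℝ × ℝ := fun w => if w ∈ K then pos w else q (Sum.inr w)
  have hb0 : ∀ i, b i 0 = pos (u i) := fun i => by simp [b]
  have hbn : ∀ i, b i (n i) = pos (v i) := fun i => by
    have : n i ≠ 0 := by have := hn i; omega
    simp [b, this]
  have hbq : ∀ i r (h0 : 0 < r) (h1 : r < n i), b i r = q (Sum.inl ⟨i, ⟨r, h1⟩⟩) := by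
    intro i r h0 h1
    simp only [b]
    rw [if_neg h0.ne', dif_pos h1]
  have hbO : ∀ i r, 0 < r → r < n i → b i r ∈ U i r ∩ Metric.ball (L i r) ρ := by
    intro i r h0 h1
    rw [hbq i r h0 h1]
    have := hqO (Sum.inl ⟨i, ⟨r, h1⟩⟩)
    simpa [O, h0] using this
  have hbF : ∀ i r, 0 < r → r < n i → b i r ∉ pos '' K := fun i r h0 h1 => by
    rw [hbq i r h0 h1]; exact hq.notMem _
  have hbcase : ∀ i r, r ≤ n i → r = 0 ∨ r = n i ∨ (0 < r ∧ r < n i) := by omega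
  have hbmem : ∀ i r, r ≤ n i → b i r ∈ pos '' K ∪ range q := by
    intro i r hr
    rcases hbcase i r hr with rfl | rfl | ⟨h0, h1⟩
    · rw [hb0]; exact Or.inl ⟨_, hu i, rfl⟩
    · rw [hbn]; exact Or.inl ⟨_, hv i, rfl⟩
    · rw [hbq i r h0 h1]; exact Or.inr ⟨_, rfl⟩
  have hbinj : ∀ i r i' r', 0 < r → r < n i → r' ≤ n i' → b i r = b i' r' → i = i' ∧ r = r' := by
    intro i r i' r' h0 h1 hr' e
    rcases hbcase i' r' hr' with rfl | rfl | ⟨h0', h1'⟩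
    · rw [hb0] at e; exact absurd (e ▸ mem_image_of_mem pos (hu i')) (hbF i r h0 h1)
    · rw [hbn] at e; exact absurd (e ▸ mem_image_of_mem pos (hv i')) (hbF i r h0 h1)
    · rw [hbq i r h0 h1, hbq i' r' h0' h1'] at e
      have := Sum.inl.inj (hq.inj e)
      rw [Sigma.mk.injEq] at this
      obtain ⟨rfl, h⟩ := this
      exact ⟨rfl, (Fin.mk.inj_iff.1 (eq_of_heq h))⟩
  have hbinj' : ∀ i r r', r ≤ n i → r' ≤ n i → b i r = b i r' → r = r' := by
    intro i r r' hr hr' e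
    rcases hbcase i r hr with h | h | ⟨h0, h1⟩
    · rcases hbcase i r' hr' with h' | h' | ⟨h0', h1'⟩
      · omega
      · subst h h'; rw [hb0, hbn] at e
        exact absurd (hst.injOn (hu i) (hv i) e) (huv i)
      · exact (hbinj i r' i r h0' h1' hr e.symm).2.symm
    · rcases hbcase i r' hr' with h' | h' | ⟨h0', h1'⟩
      · subst h h'; rw [hb0, hbn] at e
        exact absurd (hst.injOn (hu i) (hv i) e.symm) (huv i)
      · omega
      · exact (hbinj i r' i r h0' h1' hr e.symm).2.symm
    · exact (hbinj i r i r' h0 h1 hr' e).2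
  have hptmem : ∀ w, pt w ∈ pos '' K ∪ range q := by
    intro w
    by_cases hw : w ∈ K
    · simp only [pt, if_pos hw]; exact Or.inl ⟨w, hw, rfl⟩
    · simp only [pt, if_neg hw]; exact Or.inr ⟨_, rfl⟩
  refine ⟨q, pt, b, ⟨fun w hw => if_pos hw, ?_, hptmem, hb0, hbn,
    fun i r h0 h1 => ⟨_, (hbq i r h0 h1).symm⟩, hbinj, ?_, ?_⟩, fun i r h0 h1 => (hbO i r h0 h1).1, ?_⟩
  · intro w w' e
    simp only [pt] at e
    split_ifs at e with h h' h'
    · exact hst.injOn h h' e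
    · exact absurd (e ▸ mem_image_of_mem pos h) (hq.notMem _)
    · exact absurd (e ▸ mem_image_of_mem pos h') (hq.notMem _)
    · exact Sum.inr.inj (hq.inj e)
  · intro i r w h0 h1 e
    simp only [pt] at e
    split_ifs at e with h
    · exact hbF i r h0 h1 (e ▸ mem_image_of_mem pos h)
    · rw [hbq i r h0 h1] at e
      exact absurd (hq.inj e) (by simp)
  · have hnew : ∀ i (r : Fin (n i)), b i r ∉ pos '' K ∨ b i (r + 1) ∉ pos '' K := by
      intro i r
      have := hn i
      by_cases h0 : 0 < (r : ℕ)
      · exact Or.inl (hbF i r h0 r.2)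
      · exact Or.inr (hbF i (r + 1) (by omega) (by omega))
    have hflex : ∀ i (r : Fin (n i)) , hostA (pos ∘ sx) b (Sum.inr ⟨i, r⟩ : Host S n) ∈ pos '' K →
        hostB (pos ∘ sy) b (Sum.inr ⟨i, r⟩ : Host S n) ∈ pos '' K → False := by
      intro i r h1 h2
      exact (hnew i r).elim (fun h => h h1) (fun h => h h2)
    refine ⟨hq, ?_, ?_, ?_, ?_, ?_, ?_⟩
    · rintro (e | ⟨i, r⟩)
      · exact Or.inl ⟨_, hst.left_mem e, rfl⟩
      · exact hbmem i r r.2.le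
    · rintro (e | ⟨i, r⟩)
      · exact Or.inl ⟨_, hst.right_mem e, rfl⟩
      · exact hbmem i (r + 1) r.2
    · rintro (e | ⟨i, r⟩) h
      · exact hst.ne e (hst.injOn (hst.left_mem e) (hst.right_mem e) h)
      · have := hbinj' i r (r + 1) r.2.le r.2 h
        omega
    · rintro (e | ⟨i, r⟩) h1 h2 x ⟨w, hw, rfl⟩ hx
      · rcases hst.vert e w hw hx with rfl | rfl
        · exact Or.inl rfl
        · exact Or.inr rfl
      · exact (hflex i r h1 h2).elim
    · rintro (e | ⟨i, r⟩) (e' | ⟨i', r'⟩) h1 h2 h3 h4 hne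
      · exact hst.inter e e' (fun h => hne (by rw [h]))
      · exact (hflex i' r' h3 h4).elim
      · exact (hflex i r h1 h2).elim
      · exact (hflex i r h1 h2).elim
    · rintro (e | ⟨i, r⟩) σ' hne hnF
      · rcases hnF with h | h
        · exact absurd ⟨_, hst.left_mem e, rfl⟩ h
        · exact absurd ⟨_, hst.right_mem e, rfl⟩ h
      · rcases σ' with e' | ⟨i', r'⟩
        · constructor
          · rintro ⟨h1, h2⟩
            exact hflex i r (h1 ▸ ⟨_, hst.left_mem e', rfl⟩) (h2 ▸ ⟨_, hst.right_mem e', rfl⟩)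
          · rintro ⟨h1, h2⟩
            exact hflex i r (h1 ▸ ⟨_, hst.right_mem e', rfl⟩) (h2 ▸ ⟨_, hst.left_mem e', rfl⟩)
        · have hi : ∀ a c, b i r = b i' a → b i (r + 1) = b i' c → a ≤ n i' → c ≤ n i' → i = i' := by
            intro a c h1 h2 ha hc
            have := hn i
            by_cases h0 : 0 < (r : ℕ)
            · exact (hbinj i r i' a h0 r.2 ha h1).1
            · exact (hbinj i (r + 1) i' c (by omega) (by omega) hc h2).1
          have hr' := r'.2
          constructor
          · rintro ⟨h1, h2⟩
            obtain rfl := hi r' (r' + 1) h1 h2 hr'.le hr'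
            have := hbinj' i r r' r.2.le hr'.le h1
            exact hne (by rw [Fin.ext this])
          · rintro ⟨h1, h2⟩
            obtain rfl := hi (r' + 1) r' h1 h2 hr' hr'.le
            have := hbinj' i r (r' + 1) r.2.le hr' h1
            have := hbinj' i (r + 1) r' r.2 hr'.le h2
            omega
  · have hdist : ∀ i r, r ≤ n i → dist (b i r) (L i r) < ρ := by
      intro i r hr
      rcases hbcase i r hr with rfl | rfl | ⟨h0, h1⟩
      · rw [hb0, hL0, dist_self]; exact hρ
      · rw [hbn, hLn, dist_self]; exact hρ
      · exact (hbO i r h0 h1).2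
    refine hdisj _ _ ?_ ?_
    · rintro (e | ⟨i, r⟩)
      · simpa [hostA] using hρ
      · exact hdist i r r.2.le
    · rintro (e | ⟨i, r⟩)
      · simpa [hostB] using hρ
      · exact hdist i (r + 1) r.2

/-- The sign attached to a truth value. -/
def sgn (b : Bool) : ℝ := if b then 1 else -1

lemma sgn_not (b : Bool) : sgn (!b) = - sgn b := by cases b <;> simp [sgn]

lemma sgn_ne_zero (b : Bool) : sgn b ≠ 0 := by cases b <;> simp [sgn]

lemma sgn_decide_mul {x y : ℝ} (h : 0 < x * y) : 0 < sgn (decide (0 < x)) * y := by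
  by_cases hx : 0 < x
  · simpa [sgn, hx] using (pos_iff_pos_of_mul_pos h).1 hx
  · have : y < 0 := by
      by_contra hy
      exact absurd h (not_lt.2 (mul_nonpos_of_nonpos_of_nonneg (not_lt.1 hx) (not_lt.1 hy)))
    simpa [sgn, hx] using this

section Cells
variable {S : Type*} (A B : S → ℝ × ℝ)

/-- The open cell of the arrangement of the lines `A e`, `B e` with sign vector `c`. -/
def region (c : S → Bool) : Set (ℝ × ℝ) := {x | ∀ e, 0 < sgn (c e) * cr (A e) (B e) x}

/-- `x` lies in the closed cell with sign vector `c`. -/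
def Near (c : S → Bool) (x : ℝ × ℝ) : Prop := ∀ e, 0 ≤ sgn (c e) * cr (A e) (B e) x

/-- `p` lies in the relative interior of a common side of the cells `c` and `c'`. -/
structure CellStep (c : S → Bool) (p : ℝ × ℝ) (c' : S → Bool) : Prop where
  exists_zero : ∃ e, cr (A e) (B e) p = 0
  pos : ∀ e, cr (A e) (B e) p ≠ 0 → 0 < sgn (c e) * cr (A e) (B e) p ∧ c' e = c e
  flip : ∀ e, cr (A e) (B e) p = 0 → c' e = !c e
  dir : ∃ d, ∀ e, cr (A e) (B e) p = 0 → 0 < sgn (c' e) * crLin (A e) (B e) d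
  parallel : ∀ e e', cr (A e) (B e) p = 0 → cr (A e') (B e') p = 0 →
    crLin (A e) (B e) (B e' - A e') = 0

/-- A route from `x` to `y` through the cells `c 0, …, c m`, changing cells at `p 0, …, p (m - 1)`,
which uses each segment `A e`, `B e` at most `N e` times. -/
structure Route (x y : ℝ × ℝ) (N : S → ℕ) (m : ℕ) (c : ℕ → S → Bool) (p : ℕ → ℝ × ℝ) : Prop where
  start : Near A B (c 0) x
  last : Near A B (c m) y
  step : ∀ r < m, CellStep A B (c r) (p r) (c (r + 1))
  nonempty : ∀ r ≤ m, (region A B (c r)).Nonempty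
  count : ∀ e, {r | r < m ∧ p r ∈ segment ℝ (A e) (B e)}.ncard ≤ N e

variable {A B}

lemma region_open [Finite S] (c : S → Bool) : IsOpen (region A B c) := by
  have : region A B c = ⋂ e, {x | 0 < sgn (c e) * cr (A e) (B e) x} := by
    ext x; simp [region]
  rw [this]
  exact isOpen_iInter_of_finite fun e => isOpen_lt continuous_const
    (continuous_const.mul (continuous_cr _ _))

lemma region_disjoint {c c' : S → Bool} {x : ℝ × ℝ} (h : x ∈ region A B c)
    (h' : x ∈ region A B c') : c = c' := by
  funext e
  have h1 := h e
  have h2 := h' e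
  cases hc : c e <;> cases hc' : c' e <;> simp [hc, hc', sgn] at h1 h2 ⊢ <;> linarith

/-- Points lying on a common line both of whose lines through the first point agree. -/
lemma cr_eq_zero_of_parallel {a b c d x p : ℝ × ℝ} (hab : a ≠ b)
    (hx : cr a b x = 0) (hp : cr a b p = 0) (hp' : cr c d p = 0)
    (hpar : crLin a b (d - c) = 0) : cr c d x = 0 := by
  obtain ⟨θ, rfl⟩ := exists_lineMap_of_cr_eq_zero hab hx
  obtain ⟨φ, rfl⟩ := exists_lineMap_of_cr_eq_zero hab hp
  have h : crLin c d (b - a) = 0 := by rw [crLin_swap, neg_eq_zero] at hpar; exact hpar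
  rw [cr_lineMap] at hp' ⊢
  rw [crLin_sub] at h
  linear_combination hp' + (θ - φ) * h

lemma CellStep.cr_eq_zero {c c' : S → Bool} {p x : ℝ × ℝ} (hAB : ∀ e, A e ≠ B e)
    (h : CellStep A B c p c') {e e' : S} (he : cr (A e) (B e) p = 0) (he' : cr (A e') (B e') p = 0)
    (hx : cr (A e) (B e) x = 0) : cr (A e') (B e') x = 0 :=
  cr_eq_zero_of_parallel (hAB e) hx he he' (h.parallel e e' he he')

lemma CellStep.near {c c' : S → Bool} {p : ℝ × ℝ} (h : CellStep A B c p c') : Near A B c p := by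
  intro e
  by_cases he : cr (A e) (B e) p = 0
  · rw [he, mul_zero]
  · exact (h.pos e he).1.le

lemma CellStep.near' {c c' : S → Bool} {p : ℝ × ℝ} (h : CellStep A B c p c') : Near A B c' p := by
  intro e
  by_cases he : cr (A e) (B e) p = 0
  · rw [he, mul_zero]
  · rw [(h.pos e he).2]; exact (h.pos e he).1.le

namespace Route
variable {x y : ℝ × ℝ} {N : S → ℕ} {m : ℕ} {c : ℕ → S → Bool} {p : ℕ → ℝ × ℝ}

lemma cut (h : Route A B x y N m c p) {a b : ℕ} (hab : a < b) (hb : b ≤ m) (hc : c a = c b) :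
    Route A B x y N (m - (b - a)) (fun r => if r ≤ a then c r else c (r + (b - a)))
      (fun r => if r < a then p r else p (r + (b - a))) := by
  refine ⟨?_, ?_, ?_, ?_, ?_⟩
  · simpa using h.start
  · by_cases hbm : b = m
    · have : m - (b - a) ≤ a := by omega
      simp only [this, if_true]
      have h2 : m - (b - a) = a := by omega
      rw [h2, hc, hbm]; exact h.last
    · have : ¬ m - (b - a) ≤ a := by omega
      simp only [this, if_false]
      have h2 : m - (b - a) + (b - a) = m := by omega
      rw [h2]; exact h.last
  · intro r hr
    rcases lt_trichotomy r a with h1 | h1 | h1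
    · have h2 : r + 1 ≤ a := h1
      simp only [h1, h1.le, h2, if_true]
      exact h.step r (by omega)
    · subst h1
      have h2 : ¬ r + 1 ≤ r := by omega
      simp only [le_refl, lt_irrefl, h2, if_true, if_false]
      have h3 : r + (b - r) = b := by omega
      have h4 : r + 1 + (b - r) = b + 1 := by omega
      rw [h3, h4, hc]
      exact h.step b (by omega)
    · have h2 : ¬ r ≤ a := by omega
      have h3 : ¬ r < a := by omega
      have h4 : ¬ r + 1 ≤ a := by omega
      simp only [h2, h3, h4, if_false]
      have h5 : r + 1 + (b - a) = r + (b - a) + 1 := by omega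
      rw [h5]
      exact h.step _ (by omega)
  · intro r hr
    by_cases h1 : r ≤ a
    · simp only [h1, if_true]; exact h.nonempty r (by omega)
    · simp only [h1, if_false]; exact h.nonempty _ (by omega)
  · intro e
    refine le_trans ?_ (h.count e)
    refine Set.ncard_le_ncard_of_injOn (fun r => if r < a then r else r + (b - a)) ?_ ?_
      ((finite_lt_nat m).subset fun r hr => hr.1)
    · rintro r ⟨hr, hmem⟩
      by_cases h1 : r < a
      · simp only [h1, if_true] at hmem ⊢; exact ⟨by omega, hmem⟩
      · simp only [h1, if_false] at hmem ⊢; exact ⟨by omega, hmem⟩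
    · rintro r - r' - he
      simp only at he
      split_ifs at he <;> omega

lemma dropFirst (hAB : ∀ e, A e ≠ B e) (h : Route A B x y N m c p) (hm : 0 < m) {e : S}
    (hx : cr (A e) (B e) x = 0) (hp : cr (A e) (B e) (p 0) = 0) :
    Route A B x y N (m - 1) (fun r => c (r + 1)) (fun r => p (r + 1)) := by
  refine ⟨?_, ?_, fun r hr => h.step (r + 1) (by omega), fun r hr => h.nonempty _ (by omega), ?_⟩
  · intro e'
    have hs := h.step 0 hm
    by_cases he' : cr (A e') (B e') (p 0) = 0
    · rw [hs.cr_eq_zero hAB hp he' hx, mul_zero]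
    · have := h.start e'
      rwa [← (hs.pos e' he').2] at this
  · have : m - 1 + 1 = m := by omega
    simp only [this]; exact h.last
  · intro e
    refine le_trans ?_ (h.count e)
    refine Set.ncard_le_ncard_of_injOn (fun r => r + 1) ?_ ?_
      ((finite_lt_nat m).subset fun r hr => hr.1)
    · rintro r ⟨hr, hmem⟩
      exact ⟨by omega, hmem⟩
    · rintro r - r' - he
      simpa using he

lemma dropLast (hAB : ∀ e, A e ≠ B e) (h : Route A B x y N m c p) (hm : 0 < m) {e : S}
    (hy : cr (A e) (B e) y = 0) (hp : cr (A e) (B e) (p (m - 1)) = 0) :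
    Route A B x y N (m - 1) c p := by
  refine ⟨h.start, ?_, fun r hr => h.step r (by omega), fun r hr => h.nonempty _ (by omega), ?_⟩
  · intro e'
    have hs := h.step (m - 1) (by omega)
    have hm1 : m - 1 + 1 = m := by omega
    rw [hm1] at hs
    by_cases he' : cr (A e') (B e') (p (m - 1)) = 0
    · rw [hs.cr_eq_zero hAB hp he' hy, mul_zero]
    · have := h.last e'
      rwa [(hs.pos e' he').2] at this
  · intro e
    refine le_trans (Set.ncard_le_ncard ?_ ((finite_lt_nat m).subset fun r hr => hr.1)) (h.count e)
    rintro r ⟨hr, hmem⟩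
    exact ⟨by omega, hmem⟩

/-- A shortest route visits each cell at most once and never changes cells at a point of a line
which contains the adjacent end. -/
lemma exists_reduced (hAB : ∀ e, A e ≠ B e) (h : Route A B x y N m c p) :
    ∃ m c p, Route A B x y N m c p ∧ InjOn c (Iic m) ∧
      (0 < m → ∀ e, cr (A e) (B e) x = 0 → cr (A e) (B e) (p 0) ≠ 0) ∧
      (0 < m → ∀ e, cr (A e) (B e) y = 0 → cr (A e) (B e) (p (m - 1)) ≠ 0) := by
  classical
  have hex : ∃ m, ∃ c p, Route A B x y N m c p := ⟨m, c, p, h⟩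
  obtain ⟨c, p, hr⟩ := Nat.find_spec hex
  have hmin : ∀ m' c' p', Route A B x y N m' c' p' → Nat.find hex ≤ m' := fun m' c' p' h' =>
    Nat.find_min' hex ⟨c', p', h'⟩
  refine ⟨Nat.find hex, c, p, hr, ?_, ?_, ?_⟩
  · have key : ∀ a b, a < b → b ≤ Nat.find hex → c a ≠ c b := by
      intro a b hab hb hc
      have := hmin _ _ _ (hr.cut hab hb hc)
      omega
    intro a ha b hb hc
    rcases lt_trichotomy a b with h1 | h1 | h1
    · exact absurd hc (key a b h1 hb)
    · exact h1
    · exact absurd hc.symm (key b a h1 ha)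
  · intro hm e hx hp
    have := hmin _ _ _ (hr.dropFirst hAB hm hx hp)
    omega
  · intro hm e hy hp
    have := hmin _ _ _ (hr.dropLast hAB hm hy hp)
    omega

end Route

/-- Three lines cannot have all eight sign patterns. -/
lemma not_all_patterns (a b : Fin 3 → ℝ × ℝ)
    (h : ∀ c : Fin 3 → Bool, ∃ x, ∀ j, 0 < sgn (c j) * cr (a j) (b j) x) : False := by
  let D : Fin 3 → ℝ × ℝ := fun j => b j - a j
  have hdep : ∃ l : Fin 3 → ℝ, (∑ j, l j • D j = 0) ∧ ∃ j, l j ≠ 0 := by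
    have : ¬ LinearIndependent ℝ D := by
      intro hli
      have := hli.fintype_card_le_finrank
      simp at this
    rw [Fintype.not_linearIndependent_iff] at this
    exact this
  obtain ⟨l, hl, j0, hj0⟩ := hdep
  have hl1 := congrArg Prod.fst hl
  have hl2 := congrArg Prod.snd hl
  simp only [Fin.sum_univ_three, D, Prod.fst_add, Prod.snd_add, Prod.smul_fst, Prod.smul_snd,
    Prod.fst_sub, Prod.snd_sub, smul_eq_mul, Prod.fst_zero, Prod.snd_zero] at hl1 hl2
  have hconst : ∀ x y, ∑ j, l j * cr (a j) (b j) x = ∑ j, l j * cr (a j) (b j) y := by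
    intro x y
    simp only [Fin.sum_univ_three, cr]
    linear_combination (x.2 - y.2) * hl1 - (x.1 - y.1) * hl2
  have hterm : ∀ (j : Fin 3) (t : ℝ), 0 < sgn (decide (0 < l j)) * t → 0 ≤ l j * t ∧
      (l j ≠ 0 → 0 < l j * t) := by
    intro j t ht
    by_cases hj : 0 < l j
    · simp only [hj, decide_true, sgn, if_true, one_mul] at ht
      exact ⟨by positivity, fun _ => by positivity⟩
    · simp only [hj, decide_false, sgn] at ht
      simp at ht
      exact ⟨by nlinarith, fun h => mul_pos_of_neg_of_neg (lt_of_le_of_ne (not_lt.1 hj) h) ht⟩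
  obtain ⟨x, hx⟩ := h fun j => decide (0 < l j)
  obtain ⟨y, hy⟩ := h fun j => !decide (0 < l j)
  have h1 : 0 < ∑ j, l j * cr (a j) (b j) x :=
    Finset.sum_pos' (fun j _ => (hterm j _ (hx j)).1) ⟨j0, Finset.mem_univ _, (hterm j0 _ (hx j0)).2 hj0⟩
  have hy' : ∀ j, 0 < sgn (decide (0 < l j)) * (-cr (a j) (b j) y) := fun j => by
    have := hy j
    rw [sgn_not] at this; linarith
  have h2 : 0 < ∑ j, l j * (-cr (a j) (b j) y) :=
    Finset.sum_pos' (fun j _ => (hterm j _ (hy' j)).1)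
      ⟨j0, Finset.mem_univ _, (hterm j0 _ (hy' j0)).2 hj0⟩
  rw [hconst x y] at h1
  simp only [mul_neg, Finset.sum_neg_distrib] at h2
  linarith

/-- The number of cells of an arrangement of `s` lines is at most `1 + s + s(s-1)/2`. -/
lemma card_cells_le [Fintype S] {m : ℕ} {c : ℕ → S → Bool} (hinj : InjOn c (Iic m))
    (hne : ∀ r ≤ m, (region A B (c r)).Nonempty) :
    2 * (m + 1) ≤ Fintype.card S ^ 2 + Fintype.card S + 2 := by
  classical
  let φ : ℕ → Finset S := fun r => Finset.univ.filter fun e => c r e = true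
  have hφ : InjOn φ (Iic m) := by
    intro r hr r' hr' he
    refine hinj hr hr' (funext fun e => ?_)
    have : e ∈ φ r ↔ e ∈ φ r' := by rw [he]
    simp only [φ, Finset.mem_filter, Finset.mem_univ, true_and] at this
    exact Bool.eq_iff_iff.2 this
  let 𝒜 : Finset (Finset S) := (Finset.range (m + 1)).image φ
  have hcard : 𝒜.card = m + 1 := by
    rw [Finset.card_image_of_injOn, Finset.card_range]
    intro r hr r' hr' he
    simp only [Finset.coe_range, mem_Iio] at hr hr'
    exact hφ (mem_Iic.2 (by omega)) (mem_Iic.2 (by omega)) he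
  have hvc : 𝒜.vcDim ≤ 2 := by
    refine Finset.sup_le fun s hs => ?_
    rw [Finset.mem_shatterer] at hs
    by_contra hc
    obtain ⟨t, hts, htc⟩ := Finset.exists_subset_card_eq (show 3 ≤ s.card by omega)
    have ht : 𝒜.Shatters t := hs.mono_right hts
    let ψ : Fin 3 ≃ t := (t.equivFinOfCardEq htc).symm
    refine not_all_patterns (fun j => A (ψ j)) (fun j => B (ψ j)) fun d => ?_
    obtain ⟨w, hw, hwt⟩ := ht (t := (Finset.univ.filter fun j => d j = true).image fun j => (ψ j : S))
      (by intro e he; obtain ⟨j, -, rfl⟩ := Finset.mem_image.1 he; exact (ψ j).2)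
    obtain ⟨r, hr, rfl⟩ := Finset.mem_image.1 hw
    obtain ⟨z, hz⟩ := hne r (by have := Finset.mem_range.1 hr; omega)
    refine ⟨z, fun j => ?_⟩
    have hcd : c r (ψ j) = d j := by
      have h1 : ((ψ j : S) ∈ t ∩ φ r) ↔ d j = true := by
        rw [hwt, Finset.mem_image]
        constructor
        · rintro ⟨j', hj', e⟩
          have : j' = j := ψ.injective (Subtype.ext e)
          rw [← this]; exact (Finset.mem_filter.1 hj').2
        · intro h
          exact ⟨j, Finset.mem_filter.2 ⟨Finset.mem_univ _, h⟩, rfl⟩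
      have h2 : ((ψ j : S) ∈ t ∩ φ r) ↔ c r (ψ j) = true := by
        simp [φ, (ψ j).2]
      exact Bool.eq_iff_iff.2 (h2.symm.trans h1)
    rw [← hcd]; exact hz _
  have h1 : m + 1 ≤ ∑ k ∈ Finset.Iic 2, (Fintype.card S).choose k := by
    rw [← hcard]
    refine (Finset.card_le_card_shatterer 𝒜).trans ((Finset.card_shatterer_le_sum_vcDim).trans ?_)
    exact Finset.sum_le_sum_of_subset (Finset.Iic_subset_Iic.2 hvc)
  have h2 : (Finset.Iic 2 : Finset ℕ) = {0, 1, 2} := by decide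
  rw [h2] at h1
  simp only [Finset.sum_insert, Finset.mem_insert, Finset.mem_singleton, OfNat.zero_ne_ofNat,
    zero_ne_one, or_self, not_false_eq_true, Finset.sum_singleton, Nat.choose_zero_right,
    Nat.choose_one_right, OfNat.one_ne_ofNat] at h1
  rw [Nat.choose_two_right] at h1
  set s := Fintype.card S
  have h3 := Nat.div_mul_le_self (s * (s - 1)) 2
  have h4 : s * (s - 1) + s = s ^ 2 := by
    cases s with
    | zero => rfl
    | succ s => simp only [Nat.add_sub_cancel]; ring
  omega

end Cells

/-- The point with parameter `τ` of the polyline `b 0, …, b n`. -/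
def polyline (b : ℕ → ℝ × ℝ) (n : ℕ) (τ : ℝ) : ℝ × ℝ :=
  b 0 + ∑ k ∈ Finset.range n, (max 0 (min 1 (τ - k))) • (b (k + 1) - b k)

lemma continuous_polyline (b : ℕ → ℝ × ℝ) (n : ℕ) : Continuous (polyline b n) := by
  unfold polyline; fun_prop

lemma polyline_eq (b : ℕ → ℝ × ℝ) {n r : ℕ} (hr : r < n) {τ : ℝ} (h0 : (r : ℝ) ≤ τ)
    (h1 : τ ≤ r + 1) : polyline b n τ = AffineMap.lineMap (b r) (b (r + 1)) (τ - r) := by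
  have e1 : ∑ k ∈ Finset.range r, (max 0 (min 1 (τ - k))) • (b (k + 1) - b k) = b r - b 0 := by
    rw [← Finset.sum_range_sub]
    refine Finset.sum_congr rfl fun k hk => ?_
    have : (k : ℝ) + 1 ≤ r := by exact_mod_cast Finset.mem_range.1 hk
    rw [min_eq_left (by linarith), max_eq_right zero_le_one, one_smul]
  have e2 : ∑ k ∈ Finset.Ico (r + 1) n, (max 0 (min 1 (τ - k))) • (b (k + 1) - b k) = 0 := by
    refine Finset.sum_eq_zero fun k hk => ?_
    have : (r : ℝ) + 1 ≤ k := by exact_mod_cast (Finset.mem_Ico.1 hk).1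
    rw [max_eq_left ((min_le_right _ _).trans (by linarith)), zero_smul]
  rw [polyline, ← Finset.sum_range_add_sum_Ico _ (show r + 1 ≤ n from hr), Finset.sum_range_succ,
    e1, e2, min_eq_right (by linarith), max_eq_right (by linarith), AffineMap.lineMap_apply]
  simp only [vsub_eq_sub, vadd_eq_add]
  abel

lemma nonneg_mul_of_no_zero {g : ℝ → ℝ} (hg : Continuous g) {x y : ℝ} (hxy : x ≤ y)
    (h : ∀ z, x < z → z < y → g z ≠ 0) : 0 ≤ g x * g y := by
  by_contra hc
  push Not at hc
  have hx : g x ≠ 0 := fun h0 => by rw [h0, zero_mul] at hc; exact lt_irrefl _ hc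
  have hy : g y ≠ 0 := fun h0 => by rw [h0, mul_zero] at hc; exact lt_irrefl _ hc
  have hz : ∃ z ∈ Icc x y, g z = 0 := by
    rcases mul_neg_iff.1 hc with ⟨h1, h2⟩ | ⟨h1, h2⟩
    · exact intermediate_value_Icc' hxy hg.continuousOn ⟨h2.le, h1.le⟩
    · exact intermediate_value_Icc hxy hg.continuousOn ⟨h1.le, h2.le⟩
  obtain ⟨z, ⟨hz1, hz2⟩, hz0⟩ := hz
  exact h z (lt_of_le_of_ne hz1 fun e => hx (e ▸ hz0)) (lt_of_le_of_ne hz2 fun e => hy (e ▸ hz0)) hz0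

lemma sgn_decide_mul_nonneg {x y : ℝ} (hx0 : x ≠ 0) (h : 0 ≤ x * y) :
    0 ≤ sgn (decide (0 < x)) * y := by
  rcases h.eq_or_lt with h | h
  · rcases mul_eq_zero.1 h.symm with h' | h'
    · exact absurd h' hx0
    · rw [h', mul_zero]
  · exact (sgn_decide_mul h).le

lemma decide_pos_eq {x y : ℝ} (h : 0 < x * y) : decide (0 < x) = decide (0 < y) := by
  rw [decide_eq_decide]; exact pos_iff_pos_of_mul_pos h

lemma exists_sorted {a : ℝ} (ha : 0 < a) {T : Set ℝ} (hT : T.Finite) (hT' : T ⊆ Ioo 0 a) :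
    ∃ (m : ℕ) (τ : ℕ → ℝ), τ 0 = 0 ∧ τ (m + 1) = a ∧ (∀ i j, i < j → j ≤ m + 1 → τ i < τ j) ∧
      (∀ j, 0 < j → j ≤ m → τ j ∈ T) ∧ ∀ x ∈ T, ∀ j ≤ m, τ j < x → ¬ x < τ (j + 1) := by
  classical
  let T' : Finset ℝ := insert 0 (insert a hT.toFinset)
  have hcard : T'.card = hT.toFinset.card + 1 + 1 := by
    have h1 : a ∉ hT.toFinset := fun h => lt_irrefl _ (hT' (hT.mem_toFinset.1 h)).2
    have h2 : (0 : ℝ) ∉ insert a hT.toFinset := by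
      rw [Finset.mem_insert]
      rintro (h | h)
      · exact ha.ne h
      · exact lt_irrefl _ (hT' (hT.mem_toFinset.1 h)).1
    rw [Finset.card_insert_of_notMem h2, Finset.card_insert_of_notMem h1]
  set m := hT.toFinset.card
  let o := T'.orderEmbOfFin hcard
  have homem : ∀ j, o j ∈ T' := fun j => Finset.orderEmbOfFin_mem _ _ _
  have hsurj : ∀ d ∈ T', ∃ j, o j = d := by
    intro d hd
    have : d ∈ range o := by rw [Finset.range_orderEmbOfFin]; exact hd
    exact this
  have hb : ∀ d ∈ T', 0 ≤ d ∧ d ≤ a := by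
    intro d hd
    simp only [T', Finset.mem_insert, Set.Finite.mem_toFinset] at hd
    rcases hd with rfl | rfl | hd
    · exact ⟨le_rfl, ha.le⟩
    · exact ⟨ha.le, le_rfl⟩
    · exact ⟨(hT' hd).1.le, (hT' hd).2.le⟩
  let τ : ℕ → ℝ := fun j => if h : j < m + 1 + 1 then o ⟨j, h⟩ else 0
  have hτ : ∀ j (h : j ≤ m + 1), τ j = o ⟨j, by omega⟩ := fun j h => by
    simp only [τ]; rw [dif_pos]
  have hmono : ∀ i j, i < j → j ≤ m + 1 → τ i < τ j := by
    intro i j hij hj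
    rw [hτ i (by omega), hτ j hj]
    exact o.strictMono hij
  have hτ0 : τ 0 = 0 := by
    obtain ⟨j, hj⟩ := hsurj 0 (by simp [T'])
    refine le_antisymm ?_ ?_
    · rw [hτ 0 (by omega), ← hj]; exact o.monotone (Fin.zero_le j)
    · rw [hτ 0 (by omega)]; exact (hb _ (homem _)).1
  have hτn : τ (m + 1) = a := by
    obtain ⟨j, hj⟩ := hsurj a (by simp [T'])
    refine le_antisymm ?_ ?_
    · rw [hτ _ le_rfl]; exact (hb _ (homem _)).2
    · rw [hτ _ le_rfl, ← hj]; exact o.monotone (Fin.le_last j)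
  refine ⟨m, τ, hτ0, hτn, hmono, ?_, ?_⟩
  · intro j h0 hj
    have h1 := hmono 0 j h0 (by omega)
    have h2 := hmono j (m + 1) (by omega) le_rfl
    have h3 : τ j ∈ T' := by rw [hτ j (by omega)]; exact homem _
    simp only [T', Finset.mem_insert, Set.Finite.mem_toFinset] at h3
    rcases h3 with h3 | h3 | h3
    · rw [hτ0, h3] at h1; exact absurd h1 (lt_irrefl _)
    · rw [hτn, h3] at h2; exact absurd h2 (lt_irrefl _)
    · exact h3
  · intro x hx j hj h1 h2
    obtain ⟨i, rfl⟩ := hsurj x (by simp [T', hx])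
    rw [hτ j (by omega)] at h1
    rw [hτ (j + 1) (by omega)] at h2
    have h1' := o.lt_iff_lt.1 h1
    have h2' := o.lt_iff_lt.1 h2
    simp only [Fin.lt_def] at h1' h2'
    omega

/-- Every polyline in general position gives a route. -/
lemma exists_route {S : Type*} [Finite S] {A B : S → ℝ × ℝ} {b : ℕ → ℝ × ℝ}
    {n : ℕ} (hn : 2 ≤ n) (hoff : ∀ r, 0 < r → r < n → ∀ e, cr (A e) (B e) (b r) ≠ 0)
    (hmulti : ∀ r < n, ∀ X ∈ openSegment ℝ (b r) (b (r + 1)), ∀ e e', cr (A e) (B e) X = 0 →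
      cr (A e') (B e') X = 0 → crLin (A e) (B e) (B e' - A e') = 0) :
    ∃ m c p, Route A B (b 0) (b n) (fun e => {r | r < n ∧ (openSegment ℝ (b r) (b (r + 1)) ∩
      segment ℝ (A e) (B e)).Nonempty}.ncard) m c p := by
  classical
  let γ := polyline b n
  let l : S → ℝ → ℝ := fun e τ => cr (A e) (B e) (γ τ)
  have hl : ∀ e, Continuous (l e) := fun e => (continuous_cr _ _).comp (continuous_polyline b n)
  have hlr : ∀ e r, r < n → ∀ τ : ℝ, (r : ℝ) ≤ τ → τ ≤ r + 1 → l e τ =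
      (1 - (τ - r)) * cr (A e) (B e) (b r) + (τ - r) * cr (A e) (B e) (b (r + 1)) := by
    intro e r hr τ h0 h1
    simp only [l, γ]
    rw [polyline_eq b hr h0 h1, cr_lineMap]
  have hslope : ∀ e r, r < n → (∃ τ : ℝ, (r : ℝ) ≤ τ ∧ τ ≤ r + 1 ∧ l e τ = 0) →
      crLin (A e) (B e) (b (r + 1) - b r) ≠ 0 := by
    rintro e r hr ⟨τ, h0, h1, hz⟩ hs
    rw [crLin_sub] at hs
    rw [hlr e r hr τ h0 h1] at hz
    by_cases hr0 : 0 < r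
    · exact hoff r hr0 hr e (by linear_combination hz - (τ - r) * hs)
    · exact hoff (r + 1) (by omega) (by omega) e (by linear_combination hz + (1 - (τ - r)) * hs)
  have hline : ∀ e r, r < n → ∀ τ₀ : ℝ, (r : ℝ) ≤ τ₀ → τ₀ ≤ r + 1 → l e τ₀ = 0 → ∀ τ : ℝ,
      (r : ℝ) ≤ τ → τ ≤ r + 1 → l e τ = (τ - τ₀) * crLin (A e) (B e) (b (r + 1) - b r) := by
    intro e r hr τ₀ h0 h1 hz τ h0' h1'
    rw [hlr e r hr τ₀ h0 h1] at hz
    rw [hlr e r hr τ h0' h1', crLin_sub]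
    linear_combination hz
  have huniq : ∀ e r, r < n → ∀ τ₀ τ : ℝ, (r : ℝ) ≤ τ₀ → τ₀ ≤ r + 1 → (r : ℝ) ≤ τ → τ ≤ r + 1 →
      l e τ₀ = 0 → l e τ = 0 → τ = τ₀ := by
    intro e r hr τ₀ τ h0 h1 h0' h1' hz hz'
    rw [hline e r hr τ₀ h0 h1 hz τ h0' h1'] at hz'
    rcases mul_eq_zero.1 hz' with h | h
    · linarith
    · exact absurd h (hslope e r hr ⟨τ₀, h0, h1, hz⟩)
  have hn0 : (0 : ℝ) < n := by exact_mod_cast (by omega : 0 < n)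
  let T : Set ℝ := {τ | τ ∈ Ioo (0 : ℝ) n ∧ ∃ e, l e τ = 0}
  have hfloor : ∀ τ ∈ Ioo (0 : ℝ) n, ⌊τ⌋₊ < n ∧ (⌊τ⌋₊ : ℝ) ≤ τ ∧ τ < ⌊τ⌋₊ + 1 := fun τ hτ =>
    ⟨(Nat.floor_lt hτ.1.le).2 hτ.2, Nat.floor_le hτ.1.le, Nat.lt_floor_add_one _⟩
  have hTfin : T.Finite := by
    have hsub : T ⊆ ⋃ r ∈ Iio n, ⋃ e, {τ : ℝ | (r : ℝ) ≤ τ ∧ τ ≤ r + 1 ∧ l e τ = 0} := by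
      rintro τ ⟨hτ, e, he⟩
      obtain ⟨h1, h2, h3⟩ := hfloor τ hτ
      exact mem_biUnion (mem_Iio.2 h1) (mem_iUnion.2 ⟨e, h2, h3.le, he⟩)
    refine Set.Finite.subset ((finite_Iio n).biUnion fun r hr => Set.finite_iUnion fun e =>
      Set.Subsingleton.finite ?_) hsub
    rintro τ ⟨h1, h2, h3⟩ τ' ⟨h1', h2', h3'⟩
    exact huniq e r hr _ _ h1' h2' h1 h2 h3' h3
  obtain ⟨m, τ, hτ0, hτn, hmono, hτT, hτsep⟩ := exists_sorted hn0 hTfin fun τ h => h.1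
  have hnz : ∀ r ≤ m, ∀ x, τ r < x → x < τ (r + 1) → ∀ e, l e x ≠ 0 := by
    intro r hr x h1 h2 e he
    have h3 : 0 ≤ τ r := by
      rcases Nat.eq_zero_or_pos r with rfl | h
      · exact hτ0.ge
      · exact hτ0 ▸ (hmono 0 r h (by omega)).le
    have h4 : τ (r + 1) ≤ n := by
      rcases (Nat.succ_le_succ hr).eq_or_lt with h | h
      · exact (show τ (r + 1) = n by rw [← hτn]; exact congrArg τ h).le
      · exact hτn ▸ (hmono (r + 1) (m + 1) h le_rfl).le
    exact hτsep x ⟨⟨by linarith, by linarith⟩, e, he⟩ r hr h1 h2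
  let μ : ℕ → ℝ := fun r => (τ r + τ (r + 1)) / 2
  have hμ : ∀ r ≤ m, τ r < μ r ∧ μ r < τ (r + 1) := by
    intro r hr
    have := hmono r (r + 1) (by omega) (by omega)
    simp only [μ]; constructor <;> linarith
  have hμnz : ∀ r ≤ m, ∀ e, l e (μ r) ≠ 0 := fun r hr e => hnz r hr _ (hμ r hr).1 (hμ r hr).2 e
  -- the sign is constant on each closed interval between consecutive events
  have hsign : ∀ r ≤ m, ∀ x, τ r ≤ x → x ≤ τ (r + 1) → ∀ e, 0 ≤ l e (μ r) * l e x := by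
    intro r hr x h1 h2 e
    rcases le_total (μ r) x with h | h
    · refine nonneg_mul_of_no_zero (hl e) h fun z hz1 hz2 => hnz r hr z ?_ ?_ e
      · exact (hμ r hr).1.trans hz1
      · linarith
    · rw [mul_comm]
      refine nonneg_mul_of_no_zero (hl e) h fun z hz1 hz2 => hnz r hr z ?_ ?_ e
      · linarith
      · exact hz2.trans (hμ r hr).2
  have hsign' : ∀ r ≤ m, ∀ x, τ r ≤ x → x ≤ τ (r + 1) → ∀ e, l e x ≠ 0 →
      0 < l e (μ r) * l e x := fun r hr x h1 h2 e hx =>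
    lt_of_le_of_ne (hsign r hr x h1 h2 e) (mul_ne_zero (hμnz r hr e) hx).symm
  let c : ℕ → S → Bool := fun r e => decide (0 < l e (μ r))
  let p : ℕ → ℝ × ℝ := fun r => γ (τ (r + 1))
  have hγ0 : γ 0 = b 0 := by
    simp only [γ]
    rw [polyline_eq b (r := 0) (by omega) (by simp) (by simp)]; simp
  have hγn : γ n = b n := by
    have h : ((n - 1 : ℕ) : ℝ) = n - 1 := by rw [Nat.cast_sub (by omega)]; simp
    simp only [γ]
    rw [polyline_eq b (r := n - 1) (by omega) (by rw [h]; linarith) (by rw [h]; linarith), h]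
    have h2 : n - 1 + 1 = n := by omega
    simp [h2]
  -- position of the events
  have hev : ∀ r < m, ∃ ρ < n, (ρ : ℝ) < τ (r + 1) ∧ τ (r + 1) < ρ + 1 ∧
      p r ∈ openSegment ℝ (b ρ) (b (ρ + 1)) := by
    intro r hr
    obtain ⟨hT1, e, he⟩ := hτT (r + 1) (by omega) (by omega)
    obtain ⟨h1, h2, h3⟩ := hfloor _ hT1
    have h4 : (⌊τ (r + 1)⌋₊ : ℝ) < τ (r + 1) := by
      refine lt_of_le_of_ne h2 fun h => ?_
      have h5 : γ (τ (r + 1)) = b ⌊τ (r + 1)⌋₊ := by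
        simp only [γ]
        rw [polyline_eq b h1 h2 h3.le, ← h]; simp
      refine hoff ⌊τ (r + 1)⌋₊ ?_ h1 e (h5 ▸ he)
      have := hT1.1
      rw [← h] at this; exact_mod_cast this
    refine ⟨_, h1, h4, h3, ?_⟩
    simp only [p, γ]
    rw [polyline_eq b h1 h2 h3.le, mem_openSegment_iff_lineMap]
    exact ⟨_, by linarith, by linarith, rfl⟩
  refine ⟨m, c, p, ?_, ?_, ?_, ?_, ?_⟩
  · intro e
    refine sgn_decide_mul_nonneg (hμnz 0 (by omega) e) ?_
    have := hsign 0 (by omega) 0 hτ0.le (hτ0 ▸ (hmono 0 1 (by omega) (by omega)).le) e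
    simpa [l, hγ0] using this
  · intro e
    refine sgn_decide_mul_nonneg (hμnz m le_rfl e) ?_
    have := hsign m le_rfl n (hτn ▸ (hmono m (m + 1) (by omega) le_rfl).le) hτn.ge e
    simpa [l, hγn] using this
  · intro r hr
    obtain ⟨ρ, hρ, h1, h2, hmem⟩ := hev r hr
    have hm1 := hμ r hr.le
    have hm2 := hμ (r + 1) hr
    have hflip : ∀ e, l e (τ (r + 1)) = 0 →
        l e (μ r) * crLin (A e) (B e) (b (ρ + 1) - b ρ) < 0 ∧
        0 < l e (μ (r + 1)) * crLin (A e) (B e) (b (ρ + 1) - b ρ) := by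
      intro e he
      have hL := hline e ρ hρ _ h1.le h2.le he
      have hs := hslope e ρ hρ ⟨_, h1.le, h2.le, he⟩
      constructor
      · have hx := max_lt h1 hm1.2
        have hx1 := hnz r hr.le (max ρ (μ r)) (hm1.1.trans_le (le_max_right _ _)) hx e
        have h3 := hsign' r hr.le (max ρ (μ r)) (hm1.1.trans_le (le_max_right _ _)).le hx.le e hx1
        rw [hL _ (le_max_left _ _) (by linarith)] at h3
        have h4 : 0 < (τ (r + 1) - max ↑ρ (μ r)) := by linarith
        by_contra hcon
        push Not at hcon
        nlinarith [mul_nonneg h4.le hcon]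
      · have hx := lt_min h2 hm2.1
        have hx1 := hnz (r + 1) hr (min (ρ + 1) (μ (r + 1))) hx
          ((min_le_right _ _).trans_lt hm2.2) e
        have h3 := hsign' (r + 1) hr (min (ρ + 1) (μ (r + 1))) hx.le
          ((min_le_right _ _).trans_lt hm2.2).le e hx1
        rw [hL _ (by linarith) (min_le_left _ _)] at h3
        have h4 : 0 < (min ((ρ:ℝ) + 1) (μ (r + 1)) - τ (r + 1)) := by linarith
        by_contra hcon
        push Not at hcon
        nlinarith [mul_nonneg h4.le (neg_nonneg.2 hcon)]
    refine ⟨?_, ?_, ?_, ?_, ?_⟩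
    · exact (hτT (r + 1) (by omega) (by omega)).2
    · intro e he
      have h3 := hsign' r hr.le (τ (r + 1)) (hmono r (r + 1) (by omega) (by omega)).le le_rfl e he
      have h4 := hsign' (r + 1) hr (τ (r + 1)) le_rfl
        (hmono (r + 1) (r + 2) (by omega) (by omega)).le e he
      refine ⟨sgn_decide_mul h3, ?_⟩
      simp only [c]
      rw [decide_pos_eq h3, decide_pos_eq h4]
    · intro e he
      obtain ⟨h3, h4⟩ := hflip e he
      have h5 : 0 < l e (μ (r + 1)) * (- l e (μ r)) := by
        by_contra hcon
        push Not at hcon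
        have h6 : 0 < crLin (A e) (B e) (b (ρ + 1) - b ρ) ^ 2 := by
          have := hslope e ρ hρ ⟨_, h1.le, h2.le, he⟩
          positivity
        nlinarith [mul_pos h4 (neg_pos.2 h3)]
      have h6 := hμnz r hr.le e
      simp only [c]
      rw [decide_pos_eq h5]
      rcases lt_or_gt_of_ne h6 with h | h
      · simp [h, h.le]
      · simp [h, h.le]
    · exact ⟨b (ρ + 1) - b ρ, fun e he => sgn_decide_mul (hflip e he).2⟩
    · intro e e' he he'
      exact hmulti ρ hρ _ hmem e e' he he'
  · intro r hr
    refine ⟨γ (μ r), fun e => sgn_decide_mul (mul_self_pos.2 (hμnz r hr e))⟩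
  · intro e
    choose! ρ hρ h1 h2 hmem using hev
    refine Set.ncard_le_ncard_of_injOn ρ ?_ ?_ ((finite_lt_nat n).subset fun r hr => hr.1)
    · rintro r ⟨hr, hp⟩
      exact ⟨hρ r hr, p r, hmem r hr, hp⟩
    · rintro r ⟨hr, hp⟩ r' ⟨hr', hp'⟩ he
      have h1' := h1 r' hr'
      have h2' := h2 r' hr'
      rw [← he] at h1' h2'
      have := huniq e (ρ r) (hρ r hr) _ _ (h1 r hr).le (h2 r hr).le h1'.le h2'.le
        (cr_eq_zero_of_mem_segment hp) (cr_eq_zero_of_mem_segment hp')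
      rcases lt_trichotomy r r' with h | h | h
      · have := hmono (r + 1) (r' + 1) (by omega) (by omega); linarith
      · exact h
      · have := hmono (r' + 1) (r + 1) (by omega) (by omega); linarith

namespace Realization
variable {V S : Type*} {f : ℕ} {K : Set V} {sx sy : S → V} {pos : V → ℝ × ℝ} {u v : Fin f → V}
  {n : Fin f → ℕ} {ι : Type*} {q : ι → ℝ × ℝ} {pt : V → ℝ × ℝ} {b : Fin f → ℕ → ℝ × ℝ}

lemma b_notMem (h : Realization K sx sy pos u v n q pt b) {i : Fin f} {r : ℕ} (h0 : 0 < r)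
    (h1 : r < n i) : b i r ∉ pos '' K := by
  obtain ⟨a, ha⟩ := h.b_mem i r h0 h1
  rw [← ha]; exact h.hosts.gen.notMem a

lemma exists_new (h : Realization K sx sy pos u v n q pt b) (hn : ∀ i, 2 ≤ n i) (i : Fin f)
    (r : Fin (n i)) : b i r ∉ pos '' K ∨ b i (r + 1) ∉ pos '' K := by
  by_cases hr : 0 < (r : ℕ)
  · exact Or.inl (h.b_notMem hr r.2)
  · exact Or.inr (h.b_notMem (by omega) (by have := hn i; omega))

lemma mem_fixed_or_range (h : Realization K sx sy pos u v n q pt b) (hu : ∀ i, u i ∈ K)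
    (hv : ∀ i, v i ∈ K) {i : Fin f} {r : ℕ} (hr : r ≤ n i) : b i r ∈ pos '' K ∪ range q := by
  rcases Nat.eq_zero_or_pos r with rfl | h0
  · rw [h.b_zero]; exact Or.inl ⟨_, hu i, rfl⟩
  rcases hr.eq_or_lt with rfl | h1
  · rw [h.b_last]; exact Or.inl ⟨_, hv i, rfl⟩
  · exact Or.inr (h.b_mem i r h0 h1)

lemma cr_ne_zero (h : Realization K sx sy pos u v n q pt b) (hst : StaticDrawing K sx sy pos)
    {i : Fin f} {r : ℕ} (h0 : 0 < r) (h1 : r < n i) (e : S) :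
    cr (pos (sx e)) (pos (sy e)) (b i r) ≠ 0 := by
  obtain ⟨a, ha⟩ := h.b_mem i r h0 h1
  rw [← ha]
  have hA : pos (sx e) ∈ pos '' K := ⟨_, hst.left_mem e, rfl⟩
  have hB : pos (sy e) ∈ pos '' K := ⟨_, hst.right_mem e, rfl⟩
  refine h.hosts.gen.noncollinear _ (Or.inl hA) _ (Or.inl hB) a (h.hosts.ne (Sum.inl e)) ?_ ?_
  · intro e'; exact h.hosts.gen.notMem a (e' ▸ hA)
  · intro e'; exact h.hosts.gen.notMem a (e' ▸ hB)

lemma crLin_eq_zero (h : Realization K sx sy pos u v n q pt b) (hn : ∀ i, 2 ≤ n i)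
    {i : Fin f} {r : ℕ} (hr : r < n i) {X : ℝ × ℝ}
    (hX : X ∈ openSegment ℝ (b i r) (b i (r + 1))) {e e' : S}
    (he : cr (pos (sx e)) (pos (sy e)) X = 0) (he' : cr (pos (sx e')) (pos (sy e')) X = 0) :
    crLin (pos (sx e)) (pos (sy e)) (pos (sy e') - pos (sx e')) = 0 := by
  by_contra hcon
  have hX' := cr_eq_zero_of_mem_segment (openSegment_subset_segment _ _ _ hX)
  have hnew := h.exists_new hn i ⟨r, hr⟩
  have key : ∀ e, cr (pos (sx e)) (pos (sy e)) X = 0 →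
      crLin (pos (sx e)) (pos (sy e)) (b i (r + 1) - b i r) ≠ 0 := by
    intro e he
    have := h.hosts.crLin_ne_zero (σ := Sum.inr ⟨i, ⟨r, hr⟩⟩) (σ' := Sum.inl e) (by simp) hnew hX' he
    rw [crLin_swap, neg_ne_zero] at this
    exact this
  have hm : ∀ e, pos (sx e) ∈ pos '' K ∪ range q ∧ pos (sy e) ∈ pos '' K ∪ range q := fun e =>
    ⟨h.hosts.left_mem (Sum.inl e), h.hosts.right_mem (Sum.inl e)⟩
  have hz1 := h.hosts.left_mem (Sum.inr ⟨i, ⟨r, hr⟩⟩)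
  have hz2 := h.hosts.right_mem (Sum.inr ⟨i, ⟨r, hr⟩⟩)
  have := h.hosts.gen.nonconcurrent _ (hm e).1 _ (hm e).2 _ (hm e').1 _ (hm e').2 _ hz1 _ hz2
    (fun hh => hnew.elim (fun h' => h' hh.2.2.2.2.1) fun h' => h' hh.2.2.2.2.2)
    hcon (key e' he') (key e he) X he he' hX'
  refine h.hosts.notMem_openSegment (σ := Sum.inr ⟨i, ⟨r, hr⟩⟩) ?_ hX
  rcases this with h | h | h | h | h | h <;> rw [h]
  exacts [(hm e).1, (hm e).2, (hm e').1, (hm e').2, hz1, hz2]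

lemma geomKPlanar [Finite S] {k t : ℕ} (hk : 1 ≤ k) {G' : SimpleGraph V}
    (h : Realization K sx sy pos u v n q pt b) (hst : StaticDrawing K sx sy pos)
    (hn : ∀ i, 2 ≤ n i) (hu : ∀ i, u i ∈ K) (hv : ∀ i, v i ∈ K) (g : Fin f → ℕ → V)
    (hg0 : ∀ i, g i 0 = u i) (hgt : ∀ i, g i t = v i)
    (hadj : ∀ x y, G'.Adj x y → (∃ e, s(x, y) = s(sx e, sy e)) ∨
      ∃ i, ∃ j < t, s(x, y) = s(g i j, g i (j + 1)))
    (hg : ∀ i j i' j', 0 < j → j < t → j' ≤ t → g i j = g i' j' → i = i' ∧ j = j')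
    (hsx : ∀ e i j, 0 < j → j < t → sx e ≠ g i j ∧ sy e ≠ g i j)
    (hCs : ∀ e, {σ : Host S n | σ ≠ Sum.inl e ∧ (openSegment ℝ (pos (sx e)) (pos (sy e)) ∩
      segment ℝ (hostA (pos ∘ sx) b σ) (hostB (pos ∘ sy) b σ)).Nonempty}.ncard ≤ k)
    (hCf : ∀ i, n i + {p : Fin (n i) × Host S n | p.2 ≠ Sum.inr ⟨i, p.1⟩ ∧
      (openSegment ℝ (b i p.1) (b i (p.1 + 1)) ∩
        segment ℝ (hostA (pos ∘ sx) b p.2) (hostB (pos ∘ sy) b p.2)).Nonempty}.ncard ≤ t) :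
    GeomKPlanar k G' := by
  have e1 : pt ∘ sx = pos ∘ sx := funext fun e => h.pt_eq _ (hst.left_mem e)
  have e2 : pt ∘ sy = pos ∘ sy := funext fun e => h.pt_eq _ (hst.right_mem e)
  refine geomKPlanar_of_polylines hk sx sy g pt n b (fun i => by have := hn i; omega) hadj hg hsx
    h.pt_inj (fun i => ?_) (fun i => ?_) h.b_inj h.b_ne (hostA (n := n) (pos ∘ sx) b)
    (hostB (n := n) (pos ∘ sy) b) (by rw [e1]) (by rw [e2]) h.hosts.ne
    (fun σ w hw => h.hosts.eq_end_of_mem (h.pt_mem w) hw)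
    (fun σ i r h0 h1 hm => h.hosts.eq_end_of_mem (Or.inr (h.b_mem i r h0 h1)) hm)
    (fun σ σ' hne => h.hosts.subsingleton_inter hne)
    (fun i r σ σ' X h1 h2 hX hX1 hX2 => h.hosts.eq_of_mem_openSegment
      (σ := Sum.inr ⟨i, r⟩) (h.exists_new hn i r) h1 h2 hX hX1 hX2) hCs hCf
  · rw [h.b_zero, hg0, h.pt_eq _ (hu i)]
  · rw [h.b_last, hgt, h.pt_eq _ (hv i)]

end Realization

/-- The steps of the polyline `L` from `a` to `b` that meet the segment from `x` to `y` and are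
not incident to it. -/
def meetingSteps {V : Type*} (pos : V → ℝ × ℝ) (L : ℕ → ℝ × ℝ) (n : ℕ) (a b x y : V) : Set ℕ :=
  {r | r < n ∧ (segment ℝ (L r) (L (r + 1)) ∩ segment ℝ (pos x) (pos y)).Nonempty ∧
    (r = 0 → a ≠ x ∧ a ≠ y) ∧ (r + 1 = n → b ≠ x ∧ b ≠ y)}

lemma exists_routes {V S : Type*} [Finite V] [Finite S] {f : ℕ} {K : Set V} {sx sy : S → V}
    {pos : V → ℝ × ℝ} (hst : StaticDrawing K sx sy pos) {u v : Fin f → V} (hu : ∀ i, u i ∈ K)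
    (hv : ∀ i, v i ∈ K) (huv : ∀ i, u i ≠ v i) {n : Fin f → ℕ} (hn : ∀ i, 2 ≤ n i)
    (L : Fin f → ℕ → ℝ × ℝ) (hL0 : ∀ i, L i 0 = pos (u i)) (hLn : ∀ i, L i (n i) = pos (v i))
    (i : Fin f) : ∃ m c p, Route (pos ∘ sx) (pos ∘ sy) (pos (u i)) (pos (v i))
      (fun e => (meetingSteps pos (L i) (n i) (u i) (v i) (sx e) (sy e)).ncard) m c p := by
  obtain ⟨q, pt, b, hR, -, hdisj⟩ := exists_realization hst hu hv huv hn L (fun _ _ => univ) hL0 hLn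
    (fun _ _ _ _ => isOpen_univ) (fun _ _ _ _ => by simp)
  obtain ⟨m, c, p, h⟩ := exists_route (A := pos ∘ sx) (B := pos ∘ sy) (hn i)
    (fun r h0 h1 e => hR.cr_ne_zero hst h0 h1 e)
    (fun r hr X hX e e' he he' => hR.crLin_eq_zero hn hr hX he he')
  rw [hR.b_zero, hR.b_last] at h
  refine ⟨m, c, p, h.start, h.last, h.step, h.nonempty, fun e => (h.count e).trans ?_⟩
  refine ncard_le_ncard ?_ ((finite_Iio (n i)).subset fun r hr => hr.1)
  rintro r ⟨hr, X, hX, hXe⟩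
  have hne : (Sum.inr ⟨i, ⟨r, hr⟩⟩ : Host S n) ≠ Sum.inl e := by simp
  have hX' := openSegment_subset_segment _ _ _ hX
  have hsub := hR.hosts.subsingleton_inter hne
  have hbne := hR.hosts.ne (Sum.inr ⟨i, ⟨r, hr⟩⟩)
  refine ⟨hr, ?_, ?_, ?_⟩
  · by_contra hcon
    rw [← not_disjoint_iff_nonempty_inter, not_not] at hcon
    exact disjoint_left.1 (hdisj (Sum.inr ⟨i, ⟨r, hr⟩⟩) (Sum.inl e) hcon) hX' hXe
  · rintro rfl
    have key : pos (u i) ∉ segment ℝ (pos (sx e)) (pos (sy e)) := fun hm =>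
      ne_left_of_mem_openSegment hbne hX (hsub ⟨hX', hXe⟩
        ⟨left_mem_segment ℝ (b i 0) _, by
          change b i 0 ∈ segment ℝ (pos (sx e)) (pos (sy e)); rw [hR.b_zero]; exact hm⟩)
    exact ⟨fun hh => key (hh ▸ left_mem_segment ℝ _ _), fun hh => key (hh ▸ right_mem_segment ℝ _ _)⟩
  · intro hrn
    have key : pos (v i) ∉ segment ℝ (pos (sx e)) (pos (sy e)) := fun hm =>
      ne_right_of_mem_openSegment hbne hX (hsub ⟨hX', hXe⟩
        ⟨right_mem_segment ℝ _ (b i (r + 1)), by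
          change b i (r + 1) ∈ segment ℝ (pos (sx e)) (pos (sy e))
          rw [hrn, hR.b_last]; exact hm⟩)
    exact ⟨fun hh => key (hh ▸ left_mem_segment ℝ _ _), fun hh => key (hh ▸ right_mem_segment ℝ _ _)⟩

section Slide
variable {S : Type*} {A B : S → ℝ × ℝ}

/-- The point at which two neighbouring cells are exchanged can be moved along their side. -/
lemma CellStep.infinite_slide [Finite S] (hAB : ∀ e, A e ≠ B e) {c c' : S → Bool} {p : ℝ × ℝ}
    (h : CellStep A B c p c') :
    {p' | CellStep A B c p' c' ∧ (∀ e, cr (A e) (B e) p' = 0 ↔ cr (A e) (B e) p = 0) ∧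
      ∀ e, p' ∈ segment ℝ (A e) (B e) → p ∈ segment ℝ (A e) (B e)}.Infinite := by
  obtain ⟨e₀, he₀⟩ := h.exists_zero
  let φ : ℝ → ℝ × ℝ := fun α => p + α • (B e₀ - A e₀)
  have hφ : Continuous φ := by fun_prop
  have hφ0 : φ 0 = p := by simp [φ]
  have hφi : Function.Injective φ := by
    intro α β hαβ
    have : α • (B e₀ - A e₀) = β • (B e₀ - A e₀) := add_left_cancel hαβ
    exact smul_left_injective ℝ (sub_ne_zero.2 (hAB e₀).symm) this
  have hz : ∀ e, cr (A e) (B e) p = 0 → ∀ α, cr (A e) (B e) (φ α) = 0 := by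
    intro e he α
    simp only [φ]
    rw [cr_add, crLin_smul, h.parallel e e₀ he he₀, he]; ring
  have hev1 : ∀ᶠ α in nhds (0 : ℝ), ∀ e, cr (A e) (B e) p ≠ 0 →
      0 < sgn (c e) * cr (A e) (B e) (φ α) := by
    rw [Filter.eventually_all]
    intro e
    by_cases he : cr (A e) (B e) p = 0
    · exact Filter.Eventually.of_forall fun α hh => absurd he hh
    · have hc : Continuous fun α => sgn (c e) * cr (A e) (B e) (φ α) :=
        continuous_const.mul ((continuous_cr _ _).comp hφ)
      have := hc.continuousAt.eventually (lt_mem_nhds (a := 0) (b := sgn (c e) *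
        cr (A e) (B e) (φ 0)) (by rw [hφ0]; exact (h.pos e he).1))
      exact this.mono fun α hα _ => hα
  have hev2 : ∀ᶠ α in nhds (0 : ℝ), ∀ e, φ α ∈ segment ℝ (A e) (B e) → p ∈ segment ℝ (A e) (B e) := by
    rw [Filter.eventually_all]
    intro e
    by_cases he : p ∈ segment ℝ (A e) (B e)
    · exact Filter.Eventually.of_forall fun α _ => he
    · have hcl : IsClosed (segment ℝ (A e) (B e)) := by
        rw [segment_eq_image_lineMap]
        exact (isCompact_Icc.image (AffineMap.lineMap_continuous)).isClosed
      have := hφ.continuousAt.eventually (hcl.isOpen_compl.mem_nhds (x := φ 0) (by rw [hφ0]; exact he))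
      exact this.mono fun α hα hh => absurd hh hα
  refine ((infinite_of_mem_nhds (0 : ℝ) (hev1.and hev2)).image hφi.injOn).mono ?_
  rintro _ ⟨α, ⟨h1, h2⟩, rfl⟩
  have hiff : ∀ e, cr (A e) (B e) (φ α) = 0 ↔ cr (A e) (B e) p = 0 := by
    refine fun e => ⟨fun hh => ?_, fun hh => hz e hh α⟩
    by_contra he
    have := h1 e he
    rw [hh, mul_zero] at this
    exact lt_irrefl _ this
  refine ⟨⟨⟨e₀, hz e₀ he₀ α⟩, ?_, ?_, ?_, ?_⟩, hiff, h2⟩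
  · intro e he
    rw [Ne, hiff] at he
    exact ⟨h1 e he, (h.pos e he).2⟩
  · intro e he; exact h.flip e ((hiff e).1 he)
  · obtain ⟨d, hd⟩ := h.dir
    exact ⟨d, fun e he => hd e ((hiff e).1 he)⟩
  · exact fun e e' he he' => h.parallel e e' ((hiff e).1 he) ((hiff e').1 he')

lemma CellStep.mem_closure [Finite S] {c c' : S → Bool} {p : ℝ × ℝ} (h : CellStep A B c p c') :
    p ∈ closure (region A B c) ∧ p ∈ closure (region A B c') := by
  obtain ⟨d, hd⟩ := h.dir
  have key : ∀ (c'' : S → Bool) (d' : ℝ × ℝ), (∀ e, cr (A e) (B e) p ≠ 0 →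
      0 < sgn (c'' e) * cr (A e) (B e) p) → (∀ e, cr (A e) (B e) p = 0 →
      0 < sgn (c'' e) * crLin (A e) (B e) d') → p ∈ closure (region A B c'') := by
    intro c'' d' h1 h2
    have hφ : Continuous fun α : ℝ => p + α • d' := by fun_prop
    have ht : Filter.Tendsto (fun α : ℝ => p + α • d') (nhdsWithin 0 (Ioi 0)) (nhds p) := by
      have := (hφ.tendsto 0).mono_left (nhdsWithin_le_nhds (s := Ioi 0))
      simpa using this
    refine mem_closure_of_tendsto ht ?_
    have : ∀ᶠ α in nhdsWithin (0 : ℝ) (Ioi 0), ∀ e,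
        0 < sgn (c'' e) * cr (A e) (B e) (p + α • d') := by
      rw [Filter.eventually_all]
      intro e
      by_cases he : cr (A e) (B e) p = 0
      · filter_upwards [self_mem_nhdsWithin] with α hα
        rw [cr_add, crLin_smul, he]
        have := mul_pos (show (0 : ℝ) < α from hα) (h2 e he)
        linarith [this]
      · have hc : Continuous fun α : ℝ => sgn (c'' e) * cr (A e) (B e) (p + α • d') :=
          continuous_const.mul ((continuous_cr _ _).comp hφ)
        have := (hc.tendsto 0).eventually (lt_mem_nhds (a := 0) (by simpa using h1 e he))
        exact this.filter_mono nhdsWithin_le_nhds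
    exact this
  constructor
  · refine key c (-d) (fun e he => (h.pos e he).1) fun e he => ?_
    have := hd e he
    rw [h.flip e he, sgn_not] at this
    have e1 : crLin (A e) (B e) (-d) = - crLin (A e) (B e) d := by
      simp only [crLin, Prod.fst_neg, Prod.snd_neg]; ring
    rw [e1]; linarith
  · exact key c' d (fun e he => by rw [(h.pos e he).2]; exact (h.pos e he).1) hd

end Slide

lemma exists_injective_choice {ι α : Type*} [Finite ι] (T : ι → Set α) (hT : ∀ a, (T a).Infinite) :
    ∃ φ : ι → α, Function.Injective φ ∧ ∀ a, φ a ∈ T a := by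
  classical
  have := Fintype.ofFinite ι
  have h1 : ∀ a, ∃ s : Finset α, ↑s ⊆ T a ∧ s.card = Fintype.card ι := fun a =>
    (hT a).exists_subset_card_eq _
  choose s hs hc using h1
  obtain ⟨φ, hφ, hm⟩ := (Finset.all_card_le_biUnion_card_iff_exists_injective s).1 (by
    intro t
    rcases t.eq_empty_or_nonempty with rfl | ⟨a, ha⟩
    · simp
    · exact (Finset.card_le_univ t).trans ((hc a).ge.trans
        (Finset.card_le_card (Finset.subset_biUnion_of_mem s ha))))
  exact ⟨φ, hφ, fun a => hs a (hm a)⟩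

/-- Reduced routes for a family of pairs of terminals, changing cells at distinct points which
avoid `Z`. -/
structure RouteSystem {S : Type*} {f : ℕ} (A B : S → ℝ × ℝ) (x y : Fin f → ℝ × ℝ)
    (N : Fin f → S → ℕ) (Z : Set (ℝ × ℝ)) (m : Fin f → ℕ) (c : Fin f → ℕ → S → Bool)
    (p : Fin f → ℕ → ℝ × ℝ) : Prop where
  route : ∀ i, Route A B (x i) (y i) (N i) (m i) (c i) (p i)
  injOn : ∀ i, InjOn (c i) (Iic (m i))
  first : ∀ i, 0 < m i → ∀ e, cr (A e) (B e) (x i) = 0 → cr (A e) (B e) (p i 0) ≠ 0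
  final : ∀ i, 0 < m i → ∀ e, cr (A e) (B e) (y i) = 0 → cr (A e) (B e) (p i (m i - 1)) ≠ 0
  distinct : ∀ i r i' r', r < m i → r' < m i' → p i r = p i' r' → i = i' ∧ r = r'
  avoid : ∀ i r, r < m i → p i r ∉ Z

lemma exists_routeSystem {S : Type*} [Finite S] {f : ℕ} {A B : S → ℝ × ℝ} (hAB : ∀ e, A e ≠ B e)
    {x y : Fin f → ℝ × ℝ} {N : Fin f → S → ℕ} {Z : Set (ℝ × ℝ)} (hZ : Z.Finite)
    (h : ∀ i, ∃ m c p, Route A B (x i) (y i) (N i) m c p) :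
    ∃ m c p, RouteSystem A B x y N Z m c p := by
  have h' : ∀ i, ∃ m c p, Route A B (x i) (y i) (N i) m c p ∧ InjOn c (Iic m) ∧
      (0 < m → ∀ e, cr (A e) (B e) (x i) = 0 → cr (A e) (B e) (p 0) ≠ 0) ∧
      (0 < m → ∀ e, cr (A e) (B e) (y i) = 0 → cr (A e) (B e) (p (m - 1)) ≠ 0) := fun i => by
    obtain ⟨m, c, p, hr⟩ := h i
    exact hr.exists_reduced hAB
  choose m c p hr hinj h0 h1 using h'
  obtain ⟨φ, hφ, hφT⟩ := exists_injective_choice (ι := Σ i, Fin (m i))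
    (fun a => {p' | CellStep A B (c a.1 a.2) p' (c a.1 (a.2 + 1)) ∧
      (∀ e, cr (A e) (B e) p' = 0 ↔ cr (A e) (B e) (p a.1 a.2) = 0) ∧
      ∀ e, p' ∈ segment ℝ (A e) (B e) → p a.1 a.2 ∈ segment ℝ (A e) (B e)} \ Z)
    (fun a => (((hr a.1).step a.2 a.2.2).infinite_slide hAB).sdiff hZ)
  refine ⟨m, c, fun i r => if hr : r < m i then φ ⟨i, ⟨r, hr⟩⟩ else 0, ?_, hinj, ?_, ?_, ?_, ?_⟩
  · refine fun i => ⟨(hr i).start, (hr i).last, ?_, (hr i).nonempty, ?_⟩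
    · intro r hrm
      rw [dif_pos hrm]; exact (hφT ⟨i, ⟨r, hrm⟩⟩).1.1
    · intro e
      refine (ncard_le_ncard ?_ ((finite_Iio (m i)).subset fun r hr => hr.1)).trans ((hr i).count e)
      rintro r ⟨hrm, hmem⟩
      rw [dif_pos hrm] at hmem
      exact ⟨hrm, (hφT ⟨i, ⟨r, hrm⟩⟩).1.2.2 e hmem⟩
  · intro i hm e he
    rw [dif_pos hm, Ne, (hφT ⟨i, ⟨0, hm⟩⟩).1.2.1]
    exact h0 i hm e he
  · intro i hm e he
    have hm' : m i - 1 < m i := by omega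
    rw [dif_pos hm', Ne, (hφT ⟨i, ⟨m i - 1, hm'⟩⟩).1.2.1]
    exact h1 i hm e he
  · intro i r i' r' hrm hrm' e
    rw [dif_pos hrm, dif_pos hrm'] at e
    have := hφ e
    rw [Sigma.mk.injEq] at this
    obtain ⟨rfl, h⟩ := this
    exact ⟨rfl, (Fin.mk.inj_iff.1 (eq_of_heq h))⟩
  · intro i r hrm
    rw [dif_pos hrm]; exact (hφT ⟨i, ⟨r, hrm⟩⟩).2

lemma openSegment_subset_region {S : Type*} {A B : S → ℝ × ℝ} {c : S → Bool} {a b : ℝ × ℝ}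
    (ha : Near A B c a) (hb : Near A B c b)
    (hne : ∀ e, cr (A e) (B e) a = 0 → cr (A e) (B e) b ≠ 0) :
    openSegment ℝ a b ⊆ region A B c := by
  intro x hx e
  obtain ⟨θ, h0, h1, rfl⟩ := mem_openSegment_iff_lineMap.1 hx
  rw [cr_lineMap]
  have ha' := ha e
  have hb' := hb e
  have h1' : 0 < 1 - θ := by linarith
  have e1 : sgn (c e) * ((1 - θ) * cr (A e) (B e) a + θ * cr (A e) (B e) b) =
    (1 - θ) * (sgn (c e) * cr (A e) (B e) a) + θ * (sgn (c e) * cr (A e) (B e) b) := by ring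
  rw [e1]
  by_cases hz : cr (A e) (B e) a = 0
  · have : 0 < sgn (c e) * cr (A e) (B e) b :=
      lt_of_le_of_ne hb' (mul_ne_zero (sgn_ne_zero _) (hne e hz)).symm
    have := mul_pos h0 this
    have := mul_nonneg h1'.le ha'
    linarith
  · have : 0 < sgn (c e) * cr (A e) (B e) a :=
      lt_of_le_of_ne ha' (mul_ne_zero (sgn_ne_zero _) hz).symm
    have := mul_pos h1' this
    have := mul_nonneg h0.le hb'
    linarith

/-- The number of segments of the polyline realizing a route with `m` changes of cells. -/
def steps (m : ℕ) : ℕ := max 2 (2 * m + 1)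

/-- The segments of this polyline which pass from one cell to the next one. -/
def IsHop (m r : ℕ) : Prop := r % 2 = 1 ∧ r / 2 < m

/-- The limit position of the vertices of this polyline. -/
def layout (x y z : ℝ × ℝ) (m : ℕ) (p : ℕ → ℝ × ℝ) (r : ℕ) : ℝ × ℝ :=
  if r = 0 then x else if steps m ≤ r then y else if (r - 1) / 2 < m then p ((r - 1) / 2) else z

lemma two_le_steps (m : ℕ) : 2 ≤ steps m := le_max_left _ _

lemma layout_zero (x y z : ℝ × ℝ) (m : ℕ) (p : ℕ → ℝ × ℝ) : layout x y z m p 0 = x := by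
  simp [layout]

lemma layout_steps (x y z : ℝ × ℝ) (m : ℕ) (p : ℕ → ℝ × ℝ) : layout x y z m p (steps m) = y := by
  have := two_le_steps m
  simp [layout, show steps m ≠ 0 by omega]

lemma layout_inner (x y z : ℝ × ℝ) {m : ℕ} (p : ℕ → ℝ × ℝ) {r : ℕ} (h0 : 0 < r)
    (h1 : r < steps m) (h : (r - 1) / 2 < m) : layout x y z m p r = p ((r - 1) / 2) := by
  simp [layout, h0.ne', not_le.2 h1, h]

lemma layout_one (x y z : ℝ × ℝ) (p : ℕ → ℝ × ℝ) : layout x y z 0 p 1 = z := by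
  simp [layout, steps]

lemma layout_hop (x y z : ℝ × ℝ) {m : ℕ} (p : ℕ → ℝ × ℝ) {r : ℕ} (h : IsHop m r) :
    layout x y z m p r = p (r / 2) ∧ layout x y z m p (r + 1) = p (r / 2) := by
  obtain ⟨h1, h2⟩ := h
  have h3 : r + 1 < steps m := lt_of_lt_of_le (by omega) (le_max_right _ _)
  constructor
  · rw [layout_inner _ _ _ _ (by omega) (by omega) (by omega)]; congr 1; omega
  · rw [layout_inner _ _ _ _ (by omega) h3 (by omega)]; congr 1

namespace RouteSystem
variable {S : Type*} {f : ℕ} {A B : S → ℝ × ℝ} {x y : Fin f → ℝ × ℝ} {N : Fin f → S → ℕ}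
  {Z : Set (ℝ × ℝ)} {m : Fin f → ℕ} {c : Fin f → ℕ → S → Bool} {p : Fin f → ℕ → ℝ × ℝ}

lemma layout_mem_closure [Finite S] (h : RouteSystem A B x y N Z m c p) {z : Fin f → ℝ × ℝ}
    (hz : ∀ i, z i ∈ region A B (c i 0)) (i : Fin f) {r : ℕ} (h0 : 0 < r) (h1 : r < steps (m i)) :
    layout (x i) (y i) (z i) (m i) (p i) r ∈ closure (region A B (c i (r / 2))) := by
  by_cases hm : (r - 1) / 2 < m i
  · rw [layout_inner _ _ _ _ h0 h1 hm]
    have hc := ((h.route i).step _ hm).mem_closure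
    rcases Nat.mod_two_eq_zero_or_one r with hr | hr
    · have : (r - 1) / 2 + 1 = r / 2 := by omega
      rw [this] at hc; exact hc.2
    · have : (r - 1) / 2 = r / 2 := by omega
      rw [this] at hc ⊢; exact hc.1
  · unfold steps at h1
    have hm0 : m i = 0 := by omega
    have hr : r = 1 := by omega
    subst hr
    rw [hm0, layout_one]
    exact subset_closure (hz i)

/-- Consecutive changes of cells take place on different lines. -/
lemma cr_ne_zero_succ (hAB : ∀ e, A e ≠ B e) (h : RouteSystem A B x y N Z m c p) {i : Fin f}
    {r : ℕ} (hr : r + 1 < m i) {e : S} (he : cr (A e) (B e) (p i r) = 0) :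
    cr (A e) (B e) (p i (r + 1)) ≠ 0 := by
  intro he'
  have s1 := (h.route i).step r (by omega)
  have s2 := (h.route i).step (r + 1) hr
  have hc : c i r = c i (r + 1 + 1) := by
    funext e'
    by_cases hz : cr (A e') (B e') (p i r) = 0
    · have hz' := s1.cr_eq_zero hAB he hz he'
      rw [s2.flip e' hz', s1.flip e' hz, Bool.not_not]
    · have hz' : cr (A e') (B e') (p i (r + 1)) ≠ 0 := fun hh => hz (s2.cr_eq_zero hAB he' hh he)
      rw [(s2.pos e' hz').2, (s1.pos e' hz).2]
  have := h.injOn i (show r ∈ Iic (m i) from mem_Iic.2 (by omega))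
    (show r + 1 + 1 ∈ Iic (m i) from mem_Iic.2 (by omega)) hc
  omega

lemma layout_subset_region (hAB : ∀ e, A e ≠ B e) (h : RouteSystem A B x y N Z m c p)
    {z : Fin f → ℝ × ℝ} (hz : ∀ i, z i ∈ region A B (c i 0)) (i : Fin f) {r : ℕ}
    (h1 : r < steps (m i)) (hr : ¬ IsHop (m i) r) :
    openSegment ℝ (layout (x i) (y i) (z i) (m i) (p i) r)
      (layout (x i) (y i) (z i) (m i) (p i) (r + 1)) ⊆ region A B (c i (r / 2)) := by
  have hzn : ∀ e, cr (A e) (B e) (z i) ≠ 0 := fun e he => by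
    have := hz i e; rw [he, mul_zero] at this; exact lt_irrefl _ this
  have hR := h.route i
  by_cases hm : m i = 0
  · have hst : steps (m i) = 2 := by rw [hm]; rfl
    have hl := hR.last
    rw [hm] at hl
    have h2 : r = 0 ∨ r = 1 := by omega
    rcases h2 with rfl | rfl
    · rw [layout_zero, zero_add, hm, layout_one]
      exact openSegment_subset_region hR.start (fun e => (hz i e).le) fun e _ => hzn e
    · have e2 : layout (x i) (y i) (z i) (m i) (p i) (1 + 1) = y i := by
        rw [show 1 + 1 = steps (m i) from hst.symm, layout_steps]
      rw [e2, hm, layout_one]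
      exact openSegment_subset_region (fun e => (hz i e).le) hl fun e he => absurd he (hzn e)
  · have hst : steps (m i) = 2 * m i + 1 := by unfold steps; omega
    have hr2 : r % 2 = 0 := by
      by_contra hcon
      exact hr ⟨by omega, by omega⟩
    rcases Nat.eq_zero_or_pos r with rfl | h0
    · rw [layout_zero, layout_inner _ _ _ _ (by omega) (by omega) (by omega)]
      exact openSegment_subset_region hR.start (hR.step 0 (by omega)).near (h.first i (by omega))
    have e1 : layout (x i) (y i) (z i) (m i) (p i) r = p i (r / 2 - 1) := by
      rw [layout_inner _ _ _ _ h0 h1 (by omega)]; congr 1; omega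
    have n1 : Near A B (c i (r / 2)) (p i (r / 2 - 1)) := by
      have := (hR.step (r / 2 - 1) (by omega)).near'
      rwa [show r / 2 - 1 + 1 = r / 2 by omega] at this
    rw [e1]
    by_cases hl : r + 1 = steps (m i)
    · have e3 : r / 2 = m i := by omega
      rw [hl, layout_steps]
      rw [e3] at n1 ⊢
      exact openSegment_subset_region n1 hR.last fun e he he' => h.final i (by omega) e he' he
    · have e2 : layout (x i) (y i) (z i) (m i) (p i) (r + 1) = p i (r / 2) := by
        rw [layout_inner _ _ _ _ (by omega) (by omega) (by omega)]; congr 1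
      rw [e2]
      refine openSegment_subset_region n1 (hR.step _ (by omega)).near fun e he => ?_
      have := h.cr_ne_zero_succ hAB (i := i) (r := r / 2 - 1) (by omega) he
      rwa [show r / 2 - 1 + 1 = r / 2 by omega] at this

/-- A change of cells lies on the limit polylines only where it has to. -/
lemma eq_of_mem_layout (hAB : ∀ e, A e ≠ B e) (h : RouteSystem A B x y N Z m c p)
    {z : Fin f → ℝ × ℝ} (hz : ∀ i, z i ∈ region A B (c i 0)) (hx : ∀ i, x i ∈ Z)
    (hy : ∀ i, y i ∈ Z) {i j : Fin f} {r ρ : ℕ} (h1 : r < steps (m i)) (hρ : IsHop (m j) ρ)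
    (hmem : p j (ρ / 2) ∈ segment ℝ (layout (x i) (y i) (z i) (m i) (p i) r)
      (layout (x i) (y i) (z i) (m i) (p i) (r + 1))) :
    i = j ∧ (r = ρ ∨ r + 1 = ρ ∨ r = ρ + 1) := by
  obtain ⟨e, he⟩ := ((h.route j).step _ hρ.2).exists_zero
  have hreg : ∀ c', p j (ρ / 2) ∉ region A B c' := fun c' hh => by
    have := hh e; rw [he, mul_zero] at this; exact lt_irrefl _ this
  have hpt : ∀ r', r' ≤ steps (m i) → p j (ρ / 2) = layout (x i) (y i) (z i) (m i) (p i) r' →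
      i = j ∧ 0 < r' ∧ (r' - 1) / 2 = ρ / 2 := by
    intro r' hr' e'
    rcases Nat.eq_zero_or_pos r' with rfl | h0
    · rw [layout_zero] at e'; exact absurd (e' ▸ hx i) (h.avoid j _ hρ.2)
    rcases hr'.eq_or_lt with rfl | h2
    · rw [layout_steps] at e'; exact absurd (e' ▸ hy i) (h.avoid j _ hρ.2)
    by_cases hm : (r' - 1) / 2 < m i
    · rw [layout_inner _ _ _ _ h0 h2 hm] at e'
      obtain ⟨hij, h3⟩ := h.distinct _ _ _ _ hρ.2 hm e'
      exact ⟨hij.symm, h0, h3.symm⟩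
    · unfold steps at h2
      have hm0 : m i = 0 := by omega
      have hr : r' = 1 := by omega
      subst hr
      rw [hm0, layout_one] at e'
      exact absurd (e' ▸ hz i) (hreg _)
  have hρ2 := hρ.1
  by_cases hhop : IsHop (m i) r
  · obtain ⟨h2, h3⟩ := layout_hop (x i) (y i) (z i) (p i) hhop
    rw [h2, h3, segment_same] at hmem
    obtain ⟨hij, h0, h4⟩ := hpt r h1.le (by rw [h2]; exact hmem)
    have := hhop.1
    exact ⟨hij, by omega⟩
  · rcases mem_segment_cases hmem with h' | h' | h'
    · obtain ⟨hij, h0, h4⟩ := hpt r h1.le h'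
      exact ⟨hij, by omega⟩
    · obtain ⟨hij, h0, h4⟩ := hpt (r + 1) h1 h'
      exact ⟨hij, by omega⟩
    · exact absurd (h.layout_subset_region hAB hz i h1 hhop h') (hreg _)

end RouteSystem

/-- A polyline realizing a route system is realized near its layout. -/
structure HopDrawing {V S : Type*} {f : ℕ} (sx sy : S → V) (pos : V → ℝ × ℝ)
    (m : Fin f → ℕ) (c : Fin f → ℕ → S → Bool) (p : Fin f → ℕ → ℝ × ℝ)
    (b : Fin f → ℕ → ℝ × ℝ) : Prop where
  main : ∀ i r, r < steps (m i) → ¬ IsHop (m i) r →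
    openSegment ℝ (b i r) (b i (r + 1)) ⊆ region (pos ∘ sx) (pos ∘ sy) (c i (r / 2))
  hop : ∀ i (r : Fin (steps (m i))), IsHop (m i) r → ∀ σ : Host S (fun i => steps (m i)),
    σ ≠ Sum.inr ⟨i, r⟩ → ∀ X, X ∈ segment ℝ (b i r) (b i (r + 1)) →
    X ∈ segment ℝ (hostA (pos ∘ sx) b σ) (hostB (pos ∘ sy) b σ) →
    (X ∈ openSegment ℝ (b i r) (b i (r + 1)) ∨
      X ∈ openSegment ℝ (hostA (pos ∘ sx) b σ) (hostB (pos ∘ sy) b σ)) →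
    ∃ e, σ = Sum.inl e ∧ p i (r / 2) ∈ segment ℝ (pos (sx e)) (pos (sy e))

lemma exists_hopDrawing {V S : Type*} [Finite V] [Finite S] {f : ℕ} {K : Set V} {sx sy : S → V}
    {pos : V → ℝ × ℝ} (hst : StaticDrawing K sx sy pos) {u v : Fin f → V} (hu : ∀ i, u i ∈ K)
    (hv : ∀ i, v i ∈ K) (huv : ∀ i, u i ≠ v i) {N : Fin f → S → ℕ} {Z : Set (ℝ × ℝ)}
    (hZ : pos '' K ⊆ Z) {m : Fin f → ℕ} {c : Fin f → ℕ → S → Bool} {p : Fin f → ℕ → ℝ × ℝ}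
    (h : RouteSystem (pos ∘ sx) (pos ∘ sy) (pos ∘ u) (pos ∘ v) N Z m c p) :
    ∃ (q : ((Σ i, Fin (steps (m i))) ⊕ V) → ℝ × ℝ) (pt : V → ℝ × ℝ) (b : Fin f → ℕ → ℝ × ℝ),
      Realization K sx sy pos u v (fun i => steps (m i)) q pt b ∧ HopDrawing sx sy pos m c p b := by
  have hAB : ∀ e, (pos ∘ sx) e ≠ (pos ∘ sy) e := fun e he =>
    hst.ne e (hst.injOn (hst.left_mem e) (hst.right_mem e) he)
  have hz : ∀ i, ∃ z, z ∈ region (pos ∘ sx) (pos ∘ sy) (c i 0) := fun i =>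
    (h.route i).nonempty 0 (Nat.zero_le _)
  choose z hz using hz
  have hn : ∀ i, 2 ≤ steps (m i) := fun i => two_le_steps _
  obtain ⟨q, pt, b, hR, hbU, hdisj⟩ := exists_realization hst hu hv huv hn
    (fun i => layout (pos (u i)) (pos (v i)) (z i) (m i) (p i))
    (fun i r => region (pos ∘ sx) (pos ∘ sy) (c i (r / 2))) (fun i => layout_zero _ _ _ _ _)
    (fun i => layout_steps _ _ _ _ _) (fun i r _ _ => region_open _)
    (fun i r h0 h1 => h.layout_mem_closure hz i h0 h1)
  refine ⟨q, pt, b, hR, ?_, ?_⟩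
  · intro i r hr hhop
    have hst' : steps (m i) = max 2 (2 * m i + 1) := rfl
    have hpar : r % 2 = 0 ∨ (m i = 0 ∧ r = 1) := by
      by_contra! hcon
      exact hhop ⟨by omega, by omega⟩
    refine openSegment_subset_region ?_ ?_ ?_
    · rcases Nat.eq_zero_or_pos r with rfl | h0
      · rw [hR.b_zero]; exact (h.route i).start
      · exact fun e => (hbU i r h0 hr e).le
    · by_cases hl : r + 1 = steps (m i)
      · have e1 := hR.b_last i
        rw [hl, e1, show r / 2 = m i by omega]
        exact (h.route i).last
      · have := hbU i (r + 1) (by omega) (by omega)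
        rw [show (r + 1) / 2 = r / 2 by omega] at this
        exact fun e => (this e).le
    · intro e he
      rcases Nat.eq_zero_or_pos r with rfl | h0
      · exact hR.cr_ne_zero hst (by omega) (by omega) e
      · exact absurd he (hR.cr_ne_zero hst h0 hr e)
  · intro j ρ hρ σ hσ X hX hXσ hor
    have hlay := layout_hop (pos (u j)) (pos (v j)) (z j) (p j) hρ
    have hnd : p j (ρ / 2) ∈ segment ℝ
        (hostA (pos ∘ sx) (fun i => layout (pos (u i)) (pos (v i)) (z i) (m i) (p i)) σ)
        (hostB (pos ∘ sy) (fun i => layout (pos (u i)) (pos (v i)) (z i) (m i) (p i)) σ) := by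
      by_contra hcon
      refine disjoint_left.1 (hdisj (Sum.inr ⟨j, ρ⟩) σ ?_) hX hXσ
      simp only [hostA, hostB]
      rw [hlay.1, hlay.2, segment_same, disjoint_singleton_left]
      exact hcon
    rcases σ with e | ⟨i, r⟩
    · exact ⟨e, rfl, hnd⟩
    · exfalso
      have key : ∀ W, W ∈ pos '' K ∪ range q → W ∈ segment ℝ (b j ρ) (b j (ρ + 1)) →
          W ∈ segment ℝ (b i r) (b i (r + 1)) → False := by
        intro W hW h1 h2
        have : X = W := hR.hosts.subsingleton_inter hσ.symm ⟨hX, hXσ⟩ ⟨h1, h2⟩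
        subst this
        rcases hor with h' | h'
        · exact hR.hosts.notMem_openSegment (σ := Sum.inr ⟨j, ρ⟩) hW h'
        · exact hR.hosts.notMem_openSegment hW h'
      obtain ⟨rfl, h3⟩ := h.eq_of_mem_layout hAB hz (fun i => hZ ⟨_, hu i, rfl⟩)
        (fun i => hZ ⟨_, hv i, rfl⟩) r.2 hρ hnd
      rcases h3 with h3 | h3 | h3
      · exact hσ (by rw [Fin.ext h3])
      · exact key (b i ρ) (hR.mem_fixed_or_range hu hv ρ.2.le) (left_mem_segment ℝ _ _)
          (h3 ▸ right_mem_segment ℝ _ _)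
      · exact key (b i (ρ + 1)) (hR.mem_fixed_or_range hu hv ρ.2) (right_mem_segment ℝ _ _)
          (h3 ▸ left_mem_segment ℝ _ _)

section Counting
variable {V S : Type*} {f : ℕ} {K : Set V} {sx sy : S → V} {pos : V → ℝ × ℝ} {u v : Fin f → V}
  {N : Fin f → S → ℕ} {Z : Set (ℝ × ℝ)} {m : Fin f → ℕ} {c : Fin f → ℕ → S → Bool}
  {p : Fin f → ℕ → ℝ × ℝ} {b : Fin f → ℕ → ℝ × ℝ} {ι : Type*} {q : ι → ℝ × ℝ} {pt : V → ℝ × ℝ}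

lemma HopDrawing.static_count_le [Finite S] (hD : HopDrawing sx sy pos m c p b)
    (hR : Realization K sx sy pos u v (fun i => steps (m i)) q pt b)
    {x y : Fin f → ℝ × ℝ} (h : RouteSystem (pos ∘ sx) (pos ∘ sy) x y N Z m c p) (e : S) :
    {σ : Host S (fun i => steps (m i)) | σ ≠ Sum.inl e ∧
      (openSegment ℝ (pos (sx e)) (pos (sy e)) ∩
      segment ℝ (hostA (pos ∘ sx) b σ) (hostB (pos ∘ sy) b σ)).Nonempty}.ncard ≤
    {e' | e' ≠ e ∧ (openSegment ℝ (pos (sx e)) (pos (sy e)) ∩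
      segment ℝ (pos (sx e')) (pos (sy e'))).Nonempty}.ncard + ∑ i, N i e := by
  let T : Set S := {e' | e' ≠ e ∧ (openSegment ℝ (pos (sx e)) (pos (sy e)) ∩
      segment ℝ (pos (sx e')) (pos (sy e'))).Nonempty}
  let Q : Fin f → Set ℕ := fun i => {r | r < m i ∧ p i r ∈ segment ℝ (pos (sx e)) (pos (sy e))}
  have hQ : ∀ i, (Q i).Finite := fun i => (finite_Iio (m i)).subset fun r hr => hr.1
  let φ : ∀ i, ℕ → Host S (fun i => steps (m i)) := fun i r =>
    if hr : 2 * r + 1 < steps (m i) then Sum.inr ⟨i, ⟨2 * r + 1, hr⟩⟩ else Sum.inl e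
  have hsub : {σ : Host S (fun i => steps (m i)) | σ ≠ Sum.inl e ∧
      (openSegment ℝ (pos (sx e)) (pos (sy e)) ∩
      segment ℝ (hostA (pos ∘ sx) b σ) (hostB (pos ∘ sy) b σ)).Nonempty} ⊆
      Sum.inl '' T ∪ ⋃ i, φ i '' Q i := by
    rintro (e' | ⟨i, r⟩) ⟨hne, X, hX, hXσ⟩
    · exact Or.inl ⟨e', ⟨fun hh => hne (by rw [hh]), X, hX, hXσ⟩, rfl⟩
    · right
      have hXe := openSegment_subset_segment _ _ _ hX
      by_cases hhop : IsHop (m i) r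
      · obtain ⟨e', he', hm⟩ := hD.hop i r hhop (Sum.inl e) (by simp) X hXσ hXe (Or.inr hX)
        cases Sum.inl.inj he'
        refine mem_iUnion.2 ⟨i, r / 2, ⟨hhop.2, hm⟩, ?_⟩
        have h2 : 2 * ((r : ℕ) / 2) + 1 = r := by have := hhop.1; omega
        have h3 : 2 * ((r : ℕ) / 2) + 1 < steps (m i) := by rw [h2]; exact r.2
        simp only [φ]
        rw [dif_pos h3]
        congr 3
      · exfalso
        rcases mem_segment_cases hXσ with h' | h' | h'
        · exact hR.hosts.notMem_openSegment (σ := Sum.inl e)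
            (hR.hosts.left_mem (Sum.inr ⟨i, r⟩)) (h' ▸ hX)
        · exact hR.hosts.notMem_openSegment (σ := Sum.inl e)
            (hR.hosts.right_mem (Sum.inr ⟨i, r⟩)) (h' ▸ hX)
        · have := hD.main i r r.2 hhop h' e
          have h0 : cr ((pos ∘ sx) e) ((pos ∘ sy) e) X = 0 := cr_eq_zero_of_mem_segment hXe
          rw [h0, mul_zero] at this
          exact lt_irrefl _ this
  refine (ncard_le_ncard hsub (toFinite _)).trans ((ncard_union_le _ _).trans ?_)
  refine add_le_add (ncard_image_le (toFinite _)) ((ncard_iUnion_le_of_fintype _).trans ?_)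
  exact Finset.sum_le_sum fun i _ => (ncard_image_le (hQ i)).trans ((h.route i).count e)

/-- The pairs formed by a segment of the `i`-th polyline and a segment meeting it are determined
by their images under this map. -/
def crossingCode {f : ℕ} {S : Type*} {n : Fin f → ℕ} (i : Fin f) (x : Fin (n i) × Host S n) :
    ℕ × Fin f × ℕ :=
  (x.1, match x.2 with
    | Sum.inl _ => (i, 0)
    | Sum.inr ⟨j, r⟩ => (j, r % 2))

lemma HopDrawing.flexible_count_le (hD : HopDrawing sx sy pos m c p b)
    (hR : Realization K sx sy pos u v (fun i => steps (m i)) q pt b)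
    {x y : Fin f → ℝ × ℝ} (h : RouteSystem (pos ∘ sx) (pos ∘ sy) x y N Z m c p)
    (hZ : ∀ e e', e ≠ e' → segment ℝ (pos (sx e)) (pos (sy e)) ∩
      segment ℝ (pos (sx e')) (pos (sy e')) ⊆ Z) (i : Fin f) :
    {x : Fin (steps (m i)) × Host S (fun i => steps (m i)) | x.2 ≠ Sum.inr ⟨i, x.1⟩ ∧
      (openSegment ℝ (b i x.1) (b i (x.1 + 1)) ∩
        segment ℝ (hostA (pos ∘ sx) b x.2) (hostB (pos ∘ sy) b x.2)).Nonempty}.ncard ≤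
      m i + (if m i = 0 then 2 else m i + 1) * ((f - 1) * 2) := by
  classical
  let Hp := (Finset.range (steps (m i))).filter (IsHop (m i))
  let Mn := (Finset.range (steps (m i))).filter fun r => ¬ IsHop (m i) r
  let T : Finset (ℕ × Fin f × ℕ) := Hp ×ˢ ({i} ×ˢ {0}) ∪ Mn ×ˢ ((Finset.univ.erase i) ×ˢ Finset.range 2)
  have hst' : steps (m i) = max 2 (2 * m i + 1) := rfl
  have hHp : Hp.card ≤ m i := by
    rw [← Finset.card_range (m i)]
    refine Finset.card_le_card_of_injOn (fun r => r / 2) (fun r hr => ?_) (fun r hr r' hr' he => ?_)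
    · simp only [Hp, Finset.coe_filter, mem_ofPred_eq] at hr
      simpa using hr.2.2
    · simp only [Hp, Finset.coe_filter, mem_ofPred_eq] at hr hr'
      have h1 := hr.2.1; have h2 := hr'.2.1
      simp only at he; omega
  have hMn : Mn.card ≤ if m i = 0 then 2 else m i + 1 := by
    split_ifs with hm
    · refine (Finset.card_filter_le _ _).trans ?_
      rw [Finset.card_range, hst', hm]; rfl
    · have hpar : ∀ r ∈ Mn, r % 2 = 0 ∧ r < 2 * m i + 1 := by
        intro r hr
        simp only [Mn, Finset.mem_filter, Finset.mem_range] at hr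
        refine ⟨?_, by omega⟩
        by_contra hcon
        exact hr.2 ⟨by omega, by omega⟩
      rw [← Finset.card_range (m i + 1)]
      refine Finset.card_le_card_of_injOn (fun r => r / 2) (fun r hr => ?_)
        (fun r hr r' hr' he => ?_)
      · have := hpar r hr
        simp only [Finset.coe_range, mem_Iio]; omega
      · have h1 := hpar r hr
        have h2 := hpar r' hr'
        simp only at he; omega
  have hT : T.card ≤ m i + (if m i = 0 then 2 else m i + 1) * ((f - 1) * 2) := by
    refine (Finset.card_union_le _ _).trans ?_
    rw [Finset.card_product, Finset.card_product, Finset.card_product, Finset.card_product,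
      Finset.card_singleton, Finset.card_singleton, Finset.card_erase_of_mem (Finset.mem_univ i),
      Finset.card_univ, Fintype.card_fin, Finset.card_range]
    gcongr
    omega
  refine le_trans ?_ hT
  rw [← ncard_coe_finset T]
  -- the segments meeting a segment which stays inside a cell
  have hmain : ∀ (r : Fin (steps (m i))) (σ : Host S (fun i => steps (m i))),
      ¬ IsHop (m i) r → σ ≠ Sum.inr ⟨i, r⟩ → (openSegment ℝ (b i r) (b i (r + 1)) ∩
        segment ℝ (hostA (pos ∘ sx) b σ) (hostB (pos ∘ sy) b σ)).Nonempty →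
      ∃ j, ∃ r' : Fin (steps (m j)), σ = Sum.inr ⟨j, r'⟩ ∧ j ≠ i ∧ (r' : ℕ) / 2 ≤ m j ∧
        c j (r' / 2) = c i (r / 2) := by
    rintro r σ hr hσ ⟨X, hX, hXσ⟩
    have hreg := hD.main i r r.2 hr hX
    have hX' := openSegment_subset_segment _ _ _ hX
    rcases σ with e | ⟨j, r'⟩
    · have := hreg e
      have h0 : cr ((pos ∘ sx) e) ((pos ∘ sy) e) X = 0 := cr_eq_zero_of_mem_segment hXσ
      rw [h0, mul_zero] at this
      exact absurd this (lt_irrefl _)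
    by_cases hr' : IsHop (m j) r'
    · obtain ⟨e, he, -⟩ := hD.hop j r' hr' (Sum.inr ⟨i, r⟩) hσ.symm X hXσ hX' (Or.inr hX)
      exact absurd he (by simp)
    have hst'' : steps (m j) = max 2 (2 * m j + 1) := rfl
    have hX2 : X ∈ openSegment ℝ (b j r') (b j (r' + 1)) := by
      rcases mem_segment_cases hXσ with h' | h' | h'
      · exact absurd (h' ▸ hX) (hR.hosts.notMem_openSegment (σ := Sum.inr ⟨i, r⟩)
          (hR.hosts.left_mem (Sum.inr ⟨j, r'⟩)))
      · exact absurd (h' ▸ hX) (hR.hosts.notMem_openSegment (σ := Sum.inr ⟨i, r⟩)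
          (hR.hosts.right_mem (Sum.inr ⟨j, r'⟩)))
      · exact h'
    have hc := region_disjoint (hD.main j r' r'.2 hr' hX2) hreg
    have hle : ∀ j (r : Fin (steps (m j))), (r : ℕ) / 2 ≤ m j := fun j r => by
      have : steps (m j) = max 2 (2 * m j + 1) := rfl
      have := r.2
      omega
    refine ⟨j, r', rfl, ?_, hle j r', hc⟩
    rintro rfl
    have heq := h.injOn j (hle j r') (hle j r) hc
    have hrne : (r' : ℕ) ≠ r := fun hh => hσ (by rw [Fin.ext hh])
    have key : ∀ W, W ∈ segment ℝ (b j r) (b j (r + 1)) → W ∈ segment ℝ (b j r') (b j (r' + 1)) →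
        X = W := fun W h1 h2 => hR.hosts.subsingleton_inter hσ.symm ⟨hX', hXσ⟩ ⟨h1, h2⟩
    have hne := hR.hosts.ne (Sum.inr ⟨j, r⟩)
    rcases lt_or_gt_of_ne hrne with hlt | hlt
    · have e1 : (r' : ℕ) + 1 = r := by omega
      refine ne_left_of_mem_openSegment hne hX (key _ (left_mem_segment ℝ _ _) ?_)
      rw [e1]; exact right_mem_segment ℝ _ _
    · have e1 : (r : ℕ) + 1 = r' := by omega
      refine ne_right_of_mem_openSegment hne hX (key _ (right_mem_segment ℝ _ _) ?_)
      change b j (r + 1) ∈ _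
      rw [e1]; exact left_mem_segment ℝ _ _
  have hhop : ∀ (r : Fin (steps (m i))) (σ : Host S (fun i => steps (m i))),
      IsHop (m i) r → σ ≠ Sum.inr ⟨i, r⟩ → (openSegment ℝ (b i r) (b i (r + 1)) ∩
        segment ℝ (hostA (pos ∘ sx) b σ) (hostB (pos ∘ sy) b σ)).Nonempty →
      ∃ e, σ = Sum.inl e ∧ p i (r / 2) ∈ segment ℝ (pos (sx e)) (pos (sy e)) := by
    rintro r σ hr hσ ⟨X, hX, hXσ⟩
    exact hD.hop i r hr σ hσ X (openSegment_subset_segment _ _ _ hX) hXσ (Or.inl hX)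
  refine ncard_le_ncard_of_injOn (crossingCode (n := fun i => steps (m i)) i) ?_ ?_ (Finset.finite_toSet T)
  · rintro ⟨r, σ⟩ ⟨hσ, hX⟩
    have hr := Finset.mem_range.2 r.2
    simp only [T, Finset.coe_union, mem_union, Finset.mem_coe, Finset.mem_product, Hp, Mn,
      Finset.mem_filter, crossingCode]
    by_cases hr' : IsHop (m i) r
    · obtain ⟨e, rfl, -⟩ := hhop r σ hr' hσ hX
      left
      exact ⟨⟨hr, hr'⟩, by simp, by simp⟩
    · obtain ⟨j, r', rfl, hj, -⟩ := hmain r σ hr' hσ hX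
      right
      exact ⟨⟨hr, hr'⟩, by simpa using hj, by simpa using Nat.mod_lt _ two_pos⟩
  · rintro ⟨r, σ⟩ ⟨hσ, hX⟩ ⟨r₂, σ₂⟩ ⟨hσ₂, hX₂⟩ he
    simp only at hσ hσ₂ hX hX₂
    have hrr : r = r₂ := Fin.ext (congrArg Prod.fst he)
    subst hrr
    by_cases hr' : IsHop (m i) r
    · obtain ⟨e, rfl, he1⟩ := hhop r σ hr' hσ hX
      obtain ⟨e₂, rfl, he2⟩ := hhop r σ₂ hr' hσ₂ hX₂
      by_cases hee : e = e₂
      · rw [hee]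
      · exact absurd (hZ e e₂ hee ⟨he1, he2⟩) (h.avoid i _ hr'.2)
    · obtain ⟨j, r', rfl, hj, hle, hc⟩ := hmain r σ hr' hσ hX
      obtain ⟨j₂, r₂', rfl, hj₂, hle₂, hc₂⟩ := hmain r σ₂ hr' hσ₂ hX₂
      have h2 := congrArg Prod.snd he
      simp only [crossingCode, Prod.mk.injEq] at h2
      obtain ⟨rfl, h3⟩ := h2
      have h4 := h.injOn j hle hle₂ (hc.trans hc₂.symm)
      have h5 : r' = r₂' := Fin.ext (by omega)
      rw [h5]

end Counting

lemma geomKPlanar_of_routes {V S : Type*} [Finite V] [Fintype S] {f k t : ℕ} (hk : 1 ≤ k)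
    {K : Set V} {sx sy : S → V} {pos : V → ℝ × ℝ} (hst : StaticDrawing K sx sy pos)
    {u v : Fin f → V} (hu : ∀ i, u i ∈ K) (hv : ∀ i, v i ∈ K) (huv : ∀ i, u i ≠ v i)
    (N : Fin f → S → ℕ)
    (hroute : ∀ i, ∃ m c p, Route (pos ∘ sx) (pos ∘ sy) (pos (u i)) (pos (v i)) (N i) m c p)
    (hN : ∀ e, {e' | e' ≠ e ∧ (openSegment ℝ (pos (sx e)) (pos (sy e)) ∩
      segment ℝ (pos (sx e')) (pos (sy e'))).Nonempty}.ncard + ∑ i, N i e ≤ k)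
    (hS : 1 ≤ Fintype.card S)
    (ht : t = (Fintype.card S ^ 2 + 3 * Fintype.card S + 1) * (f + 1) + 1)
    {G' : SimpleGraph V} (g : Fin f → ℕ → V)
    (hg0 : ∀ i, g i 0 = u i) (hgt : ∀ i, g i t = v i)
    (hadj : ∀ x y, G'.Adj x y → (∃ e, s(x, y) = s(sx e, sy e)) ∨
      ∃ i, ∃ j < t, s(x, y) = s(g i j, g i (j + 1)))
    (hg : ∀ i j i' j', 0 < j → j < t → j' ≤ t → g i j = g i' j' → i = i' ∧ j = j')
    (hsx : ∀ e i j, 0 < j → j < t → sx e ≠ g i j ∧ sy e ≠ g i j) :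
    GeomKPlanar k G' := by
  have hAB : ∀ e, (pos ∘ sx) e ≠ (pos ∘ sy) e := fun e he =>
    hst.ne e (hst.injOn (hst.left_mem e) (hst.right_mem e) he)
  let Z : Set (ℝ × ℝ) := pos '' K ∪ ⋃ e, ⋃ e' ∈ {e' | e ≠ e'},
    segment ℝ (pos (sx e)) (pos (sy e)) ∩ segment ℝ (pos (sx e')) (pos (sy e'))
  have hZ : Z.Finite := (toFinite _).union (finite_iUnion fun e => (toFinite _).biUnion
    fun e' he => (hst.inter e e' he).finite)
  obtain ⟨m, c, p, h⟩ := exists_routeSystem hAB (x := pos ∘ u) (y := pos ∘ v) hZ hroute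
  obtain ⟨q, pt, b, hR, hD⟩ := exists_hopDrawing hst hu hv huv subset_union_left h
  refine hR.geomKPlanar hk hst (fun i => two_le_steps _) hu hv g hg0 hgt hadj hg hsx
    (fun e => (hD.static_count_le hR h e).trans (hN e)) fun i => ?_
  have h1 := hD.flexible_count_le hR h (fun e e' hne => (subset_iUnion_of_subset e
    (subset_biUnion_of_mem (u := fun e' => segment ℝ (pos (sx e)) (pos (sy e)) ∩
      segment ℝ (pos (sx e')) (pos (sy e'))) hne)).trans subset_union_right) i
  refine (Nat.add_le_add_left h1 _).trans ?_
  have h2 := card_cells_le (h.injOn i) (h.route i).nonempty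
  have hf : 1 ≤ f := by have := i.2; omega
  obtain ⟨d, rfl⟩ : ∃ d, f = d + 1 := ⟨f - 1, by omega⟩
  rw [ht, Nat.add_sub_cancel]
  have hst' : steps (m i) = max 2 (2 * m i + 1) := rfl
  have hQ : 5 ≤ Fintype.card S ^ 2 + 3 * Fintype.card S + 1 := by nlinarith
  split_ifs with hm
  · rw [hm, show steps 0 = 2 from rfl]
    nlinarith [Nat.mul_le_mul_right (d + 2) hQ]
  · have e1 : steps (m i) = 2 * m i + 1 := by omega
    rw [e1]
    have h3 : 2 * (m i + 1) ≤ Fintype.card S ^ 2 + 3 * Fintype.card S + 1 := by omega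
    nlinarith [Nat.mul_le_mul_right (d + 2) h3]

lemma eq_of_mem_both_halves {u v β X : ℝ × ℝ} (huv : u ≠ v) (hβ : β ∈ openSegment ℝ u v)
    (h1 : X ∈ segment ℝ u β) (h2 : X ∈ segment ℝ β v) : X = β := by
  obtain ⟨θ, h0, h1', rfl⟩ := mem_openSegment_iff_lineMap.1 hβ
  obtain ⟨a, ha0, ha1, rfl⟩ := mem_segment_iff_lineMap.1 h1
  obtain ⟨c, hc0, hc1, e⟩ := mem_segment_iff_lineMap.1 h2
  have e1 : (AffineMap.lineMap u (AffineMap.lineMap u v θ : ℝ × ℝ) a : ℝ × ℝ) =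
      AffineMap.lineMap u v (a * θ) := by
    refine Prod.ext ?_ ?_
    · simp only [lineMap_fst']; ring
    · simp only [lineMap_snd']; ring
  have e2 : (AffineMap.lineMap (AffineMap.lineMap u v θ : ℝ × ℝ) v c : ℝ × ℝ) =
      AffineMap.lineMap u v (θ + c * (1 - θ)) := by
    refine Prod.ext ?_ ?_
    · simp only [lineMap_fst']; ring
    · simp only [lineMap_snd']; ring
  rw [e1, e2] at e
  have e3 := lineMap_injective_of_ne huv e
  have : a = 1 := by nlinarith [mul_nonneg hc0 (sub_nonneg.2 h1'.le)]
  rw [e1, this, one_mul]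

/-- Two triangles over a common base: the sides cannot cross twice. -/
lemma not_both_cross {u v z z' X Y : ℝ × ℝ} (huv : u ≠ v) (hz : cr u v z ≠ 0)
    (hX : X ∈ openSegment ℝ u z) (hX' : X ∈ segment ℝ z' v) (hY : Y ∈ openSegment ℝ z v)
    (hY' : Y ∈ segment ℝ u z') : False := by
  obtain ⟨θ, hθ0, hθ1, rfl⟩ := mem_openSegment_iff_lineMap.1 hX
  obtain ⟨φ, hφ0, hφ1, e1⟩ := mem_segment_iff_lineMap.1 hX'
  obtain ⟨α, hα0, hα1, rfl⟩ := mem_openSegment_iff_lineMap.1 hY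
  obtain ⟨β, hβ0, hβ1, e2⟩ := mem_segment_iff_lineMap.1 hY'
  have c1 := congrArg (cr u v) e1
  have c2 := congrArg (cr u v) e2
  simp only [cr_lineMap, cr_self_left, cr_self_right] at c1 c2
  have x1 := congrArg Prod.fst e1
  have y1 := congrArg Prod.snd e1
  have x2 := congrArg Prod.fst e2
  have y2 := congrArg Prod.snd e2
  simp only [lineMap_fst'] at x1 x2
  simp only [lineMap_snd'] at y1 y2
  have hprod : (1 - φ) * (1 - α) = β * θ := by
    have : cr u v z * ((1 - φ) * (1 - α) - β * θ) = 0 := by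
      linear_combination β * c1 - (1 - φ) * c2
    rcases mul_eq_zero.1 this with h | h
    · exact absurd h hz
    · linarith
  have hφ : φ < 1 := by
    by_contra hcon
    have : φ = 1 := by linarith
    rw [this] at c1
    have : θ * cr u v z = 0 := by linear_combination -c1
    rcases mul_eq_zero.1 this with h | h
    · exact hθ0.ne' h
    · exact hz h
  have hC : 0 < β * φ + (1 - φ) * α := by
    have := mul_pos (sub_pos.2 hφ) hα0
    have := mul_nonneg hβ0 hφ0
    linarith
  have k1 : (β * φ + (1 - φ) * α) * (v.1 - u.1) = 0 := by
    linear_combination β * x1 - (1 - φ) * x2 + (z.1 - u.1) * (-hprod)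
  have k2 : (β * φ + (1 - φ) * α) * (v.2 - u.2) = 0 := by
    linear_combination β * y1 - (1 - φ) * y2 + (z.2 - u.2) * (-hprod)
  rcases fst_ne_or_snd_ne huv with h | h
  · exact (mul_ne_zero hC.ne' h) k1
  · exact (mul_ne_zero hC.ne' h) k2

lemma GenPos.eq_of_mem_two_chords {V : Type*} {pos : V → ℝ × ℝ} (hq : GenPos ∅ pos) {a b c d : V}
    (hab : a ≠ b) (hcd : c ≠ d) (hne : s(a, b) ≠ s(c, d)) {X Y : ℝ × ℝ}
    (hX : cr (pos a) (pos b) X = 0) (hX' : cr (pos c) (pos d) X = 0)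
    (hY : cr (pos a) (pos b) Y = 0) (hY' : cr (pos c) (pos d) Y = 0) : X = Y := by
  by_contra hXY
  have hab' : pos a ≠ pos b := hq.inj.ne hab
  have hcd' : pos c ≠ pos d := hq.inj.ne hcd
  have ha := cr_eq_zero_of_collinear hab' hX hY (cr_self_left _ _)
  have hb := cr_eq_zero_of_collinear hab' hX hY (cr_self_right _ _)
  have key : ∀ w, cr X Y (pos w) = 0 → w = a ∨ w = b := by
    intro w hw
    by_contra! hcon
    exact hq.noncollinear _ (Or.inr ⟨a, rfl⟩) _ (Or.inr ⟨b, rfl⟩) w hab'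
      (hq.inj.ne hcon.1.symm) (hq.inj.ne hcon.2.symm) (cr_eq_zero_of_collinear hXY ha hb hw)
  have hc := key c (cr_eq_zero_of_collinear hcd' hX' hY' (cr_self_left _ _))
  have hd := key d (cr_eq_zero_of_collinear hcd' hX' hY' (cr_self_right _ _))
  apply hne
  rcases hc with rfl | rfl <;> rcases hd with rfl | rfl
  · exact absurd rfl hcd
  · rfl
  · exact Sym2.eq_swap
  · exact absurd rfl hcd

lemma infinite_openSegment {a b : ℝ × ℝ} (h : a ≠ b) : (openSegment ℝ a b).Infinite := by
  rw [openSegment_eq_image_lineMap]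
  exact (Ioo_infinite zero_lt_one).image (lineMap_injective_of_ne h).injOn

/-- In a realization, a point common to two distinct hosts that is a vertex of the drawing
prevents any other intersection. -/
lemma GenHosts.disjoint_of_common {ι H : Type*} {F : Set (ℝ × ℝ)} {q : ι → ℝ × ℝ}
    {A B : H → ℝ × ℝ} (h : GenHosts F q A B) {σ σ' : H} (hne : σ ≠ σ') {W : ℝ × ℝ}
    (hW : W ∈ F ∪ range q) (h1 : W ∈ segment ℝ (A σ) (B σ)) (h2 : W ∈ segment ℝ (A σ') (B σ')) :
    ¬ (openSegment ℝ (A σ) (B σ) ∩ segment ℝ (A σ') (B σ')).Nonempty := by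
  rintro ⟨X, hX, hX'⟩
  have : X = W := h.subsingleton_inter hne ⟨openSegment_subset_segment _ _ _ hX, hX'⟩ ⟨h1, h2⟩
  exact h.notMem_openSegment hW (this ▸ hX)

lemma geomKPlanar_of_isEmpty {V S : Type*} [Finite V] [IsEmpty S] {f k t : ℕ} (hk : 1 ≤ k)
    {sx sy : S → V} {u v : Fin f → V} (huv : ∀ i, u i ≠ v i) (ht : f + 1 ≤ t)
    {G' : SimpleGraph V} (g : Fin f → ℕ → V)
    (hg0 : ∀ i, g i 0 = u i) (hgt : ∀ i, g i t = v i)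
    (hadj : ∀ x y, G'.Adj x y → (∃ e, s(x, y) = s(sx e, sy e)) ∨
      ∃ i, ∃ j < t, s(x, y) = s(g i j, g i (j + 1)))
    (hg : ∀ i j i' j', 0 < j → j < t → j' ≤ t → g i j = g i' j' → i = i' ∧ j = j') :
    GeomKPlanar k G' := by
  classical
  have := Fintype.ofFinite V
  obtain ⟨pos, -, hq⟩ := exists_genPos (ι := V) (fun _ => univ) (fun _ => isOpen_univ)
    (fun _ => univ_nonempty) finite_empty
  have hst : StaticDrawing univ sx sy pos :=
    ⟨hq.inj.injOn, isEmptyElim, isEmptyElim, isEmptyElim, isEmptyElim, isEmptyElim⟩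
  have hβ : ∀ i, ∃ β ∈ openSegment ℝ (pos (u i)) (pos (v i)), ∀ j, s(u i, v i) ≠ s(u j, v j) →
      cr (pos (u j)) (pos (v j)) β ≠ 0 := by
    intro i
    have hfin : (⋃ j ∈ {j | s(u i, v i) ≠ s(u j, v j)}, {X | cr (pos (u i)) (pos (v i)) X = 0 ∧
        cr (pos (u j)) (pos (v j)) X = 0}).Finite := by
      refine (toFinite _).biUnion fun j hj => Set.Subsingleton.finite ?_
      rintro X ⟨hX, hX'⟩ Y ⟨hY, hY'⟩
      exact hq.eq_of_mem_two_chords (huv i) (huv j) hj hX hX' hY hY'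
    obtain ⟨β, hβ, hβ'⟩ := ((infinite_openSegment (hq.inj.ne (huv i))).sdiff hfin).nonempty
    refine ⟨β, hβ, fun j hj h0 => hβ' ?_⟩
    exact mem_biUnion (s := {j | s(u i, v i) ≠ s(u j, v j)}) hj
      ⟨cr_eq_zero_of_mem_segment (openSegment_subset_segment _ _ _ hβ), h0⟩
  choose β hβ hβ' using hβ
  let L : Fin f → ℕ → ℝ × ℝ := fun i r => if r = 0 then pos (u i) else if r = 1 then β i else pos (v i)
  obtain ⟨q, pt, b, hR, -, hdisj⟩ := exists_realization hst (u := u) (v := v) (fun i => mem_univ _)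
    (fun i => mem_univ _) huv (n := fun _ => 2) (fun _ => le_rfl) L (fun _ _ => univ)
    (fun i => rfl) (fun i => rfl) (fun _ _ _ _ => isOpen_univ) (fun _ _ _ _ => by simp)
  have hb0 := hR.b_zero
  have hb2 : ∀ i, b i 2 = pos (v i) := hR.b_last
  have hchord : ∀ i (r : Fin 2), segment ℝ (L i r) (L i (r + 1)) ⊆
      segment ℝ (pos (u i)) (pos (v i)) := by
    intro i r
    have hm := openSegment_subset_segment _ _ _ (hβ i)
    fin_cases r
    · exact (convex_segment _ _).segment_subset (left_mem_segment ℝ _ _) hm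
    · exact (convex_segment _ _).segment_subset hm (right_mem_segment ℝ _ _)
  have hhalf : ∀ i (r r₂ : Fin 2) X, X ∈ segment ℝ (L i r) (L i (r + 1)) →
      X ∈ segment ℝ (L i r₂) (L i (r₂ + 1)) → r ≠ r₂ → X = β i := by
    intro i r r₂ X h1 h2 hne
    fin_cases r <;> fin_cases r₂
    · exact absurd rfl hne
    · exact eq_of_mem_both_halves (hq.inj.ne (huv i)) (hβ i) h1 h2
    · exact eq_of_mem_both_halves (hq.inj.ne (huv i)) (hβ i) h2 h1
    · exact absurd rfl hne
  have hmeet : ∀ i j (r r' : Fin 2), (openSegment ℝ (b i r) (b i (r + 1)) ∩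
      segment ℝ (b j r') (b j (r' + 1))).Nonempty →
      ∃ X ∈ segment ℝ (L i r) (L i (r + 1)), X ∈ segment ℝ (L j r') (L j (r' + 1)) := by
    rintro i j r r' ⟨X, hX, hX'⟩
    by_contra! hcon
    exact disjoint_left.1 (hdisj (Sum.inr ⟨i, r⟩) (Sum.inr ⟨j, r'⟩)
      (disjoint_left.2 hcon)) (openSegment_subset_segment _ _ _ hX) hX'
  have hshare : ∀ i j (r r' : Fin 2), (⟨i, r⟩ : Σ _ : Fin f, Fin 2) ≠ ⟨j, r'⟩ →
      ∀ W ∈ pos '' univ ∪ range q, W ∈ segment ℝ (b i r) (b i (r + 1)) →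
      W ∈ segment ℝ (b j r') (b j (r' + 1)) →
      ¬ (openSegment ℝ (b i r) (b i (r + 1)) ∩ segment ℝ (b j r') (b j (r' + 1))).Nonempty := by
    intro i j r r' hne W hW h1 h2
    exact hR.hosts.disjoint_of_common (σ := Sum.inr ⟨i, r⟩) (σ' := Sum.inr ⟨j, r'⟩)
      (by simpa using hne) hW h1 h2
  have hown : ∀ i (r r' : Fin 2), r ≠ r' →
      ¬ (openSegment ℝ (b i r) (b i (r + 1)) ∩ segment ℝ (b i r') (b i (r' + 1))).Nonempty := by
    intro i r r' hne
    have hm := hR.b_mem i 1 one_pos one_lt_two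
    refine hshare i i r r' (by simpa using hne) (b i 1) (Or.inr hm) ?_ ?_
    · fin_cases r
      · exact right_mem_segment ℝ _ _
      · exact left_mem_segment ℝ _ _
    · fin_cases r'
      · exact right_mem_segment ℝ _ _
      · exact left_mem_segment ℝ _ _
  have hz : ∀ i, cr (pos (u i)) (pos (v i)) (b i 1) ≠ 0 := by
    intro i
    obtain ⟨a, ha⟩ := hR.b_mem i 1 one_pos one_lt_two
    rw [← ha]
    have hA : ∀ w, pos w ≠ q a := fun w hw => hR.hosts.gen.notMem a (hw ▸ ⟨w, mem_univ _, rfl⟩)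
    exact hR.hosts.gen.noncollinear _ (Or.inl ⟨_, mem_univ _, rfl⟩) _ (Or.inl ⟨_, mem_univ _, rfl⟩) a
      (hq.inj.ne (huv i)) (hA _) (hA _)
  have huniq : ∀ i j, i ≠ j → ∀ r r' r₂ r₂' : Fin 2,
      (openSegment ℝ (b i r) (b i (r + 1)) ∩ segment ℝ (b j r') (b j (r' + 1))).Nonempty →
      (openSegment ℝ (b i r₂) (b i (r₂ + 1)) ∩ segment ℝ (b j r₂') (b j (r₂' + 1))).Nonempty →
      r = r₂ ∧ r' = r₂' := by
    intro i j hij r r' r₂ r₂' h1 h2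
    by_cases hs : s(u i, v i) = s(u j, v j)
    · have hne : ∀ r r' : Fin 2, (⟨i, r⟩ : Σ _ : Fin f, Fin 2) ≠ ⟨j, r'⟩ := fun r r' h =>
        hij (congrArg Sigma.fst h)
      have hp : ∀ w, pos w ∈ pos '' univ ∪ range q := fun w => Or.inl ⟨w, mem_univ _, rfl⟩
      have hL : ∀ l, pos (u l) ∈ segment ℝ (b l 0) (b l 1) := fun l => hb0 l ▸ left_mem_segment ℝ _ _
      have hRt : ∀ l, pos (v l) ∈ segment ℝ (b l 1) (b l 2) := fun l =>
        hb2 l ▸ right_mem_segment ℝ _ _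
      rcases Sym2.eq_iff.1 hs with ⟨hu, hv⟩ | ⟨hu, hv⟩
      · have n00 := hshare i j 0 0 (hne _ _) _ (hp (u i)) (hL i) (hu ▸ hL j)
        have n11 := hshare i j 1 1 (hne _ _) _ (hp (v i)) (hRt i) (hv ▸ hRt j)
        have nb : ¬ ((openSegment ℝ (b i 0) (b i 1) ∩ segment ℝ (b j 1) (b j 2)).Nonempty ∧
            (openSegment ℝ (b i 1) (b i 2) ∩ segment ℝ (b j 0) (b j 1)).Nonempty) := by
          rintro ⟨⟨X, hX, hX'⟩, ⟨Y, hY, hY'⟩⟩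
          rw [hb0] at hX hY'
          rw [hb2] at hX' hY
          rw [← hv] at hX'
          rw [← hu] at hY'
          exact not_both_cross (hq.inj.ne (huv i)) (hz i) hX hX' hY hY'
        fin_cases r <;> fin_cases r' <;> fin_cases r₂ <;> fin_cases r₂' <;>
          first
          | exact ⟨rfl, rfl⟩
          | exact absurd h1 n00
          | exact absurd h1 n11
          | exact absurd h2 n00
          | exact absurd h2 n11
          | exact (nb ⟨h1, h2⟩).elim
          | exact (nb ⟨h2, h1⟩).elim
      · have n01 := hshare i j 0 1 (hne _ _) _ (hp (u i)) (hL i) (hu ▸ hRt j)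
        have n10 := hshare i j 1 0 (hne _ _) _ (hp (v i)) (hRt i) (hv ▸ hL j)
        have nb : ¬ ((openSegment ℝ (b i 0) (b i 1) ∩ segment ℝ (b j 0) (b j 1)).Nonempty ∧
            (openSegment ℝ (b i 1) (b i 2) ∩ segment ℝ (b j 1) (b j 2)).Nonempty) := by
          rintro ⟨⟨X, hX, hX'⟩, ⟨Y, hY, hY'⟩⟩
          rw [hb0] at hX hX'
          rw [hb2] at hY hY'
          rw [← hv, segment_symm] at hX'
          rw [← hu, segment_symm] at hY'
          exact not_both_cross (hq.inj.ne (huv i)) (hz i) hX hX' hY hY'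
        fin_cases r <;> fin_cases r' <;> fin_cases r₂ <;> fin_cases r₂' <;>
          first
          | exact ⟨rfl, rfl⟩
          | exact absurd h1 n01
          | exact absurd h1 n10
          | exact absurd h2 n01
          | exact absurd h2 n10
          | exact (nb ⟨h1, h2⟩).elim
          | exact (nb ⟨h2, h1⟩).elim
    · obtain ⟨X, hX, hX'⟩ := hmeet i j r r' h1
      obtain ⟨Y, hY, hY'⟩ := hmeet i j r₂ r₂' h2
      have cX := cr_eq_zero_of_mem_segment (hchord i r hX)
      have cX' := cr_eq_zero_of_mem_segment (hchord j r' hX')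
      obtain rfl : X = Y := hq.eq_of_mem_two_chords (huv i) (huv j) hs cX cX'
        (cr_eq_zero_of_mem_segment (hchord i r₂ hY)) (cr_eq_zero_of_mem_segment (hchord j r₂' hY'))
      constructor
      · by_contra hcon
        exact hβ' i j hs (hhalf i r r₂ X hX hY hcon ▸ cX')
      · by_contra hcon
        exact hβ' j i (Ne.symm hs) (hhalf j r' r₂' X hX' hY' hcon ▸ cX)
  refine hR.geomKPlanar hk hst (fun _ => le_rfl) (fun _ => mem_univ _) (fun _ => mem_univ _) g hg0 hgt
    hadj hg isEmptyElim isEmptyElim fun i => ?_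
  have hcard : ({i}ᶜ : Set (Fin f)).ncard = f - 1 := by
    rw [ncard_compl, ncard_singleton, Nat.card_fin]
  have hf : 1 ≤ f := by have := i.2; omega
  let code : Fin 2 × Host S (fun _ : Fin f => 2) → Fin f := fun p =>
    match p.2 with
    | Sum.inl e => isEmptyElim e
    | Sum.inr σ => σ.1
  refine (Nat.add_le_add_left (ncard_le_ncard_of_injOn (t := {i}ᶜ) code ?_ ?_ (toFinite _)) 2).trans
    (by omega)
  · rintro ⟨r, e | ⟨j, r'⟩⟩ ⟨hne, hm⟩
    · exact isEmptyElim e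
    · rintro (rfl : j = i)
      exact hown j r r' (fun h => hne (by rw [h])) hm
  · rintro ⟨r, e | ⟨j, r'⟩⟩ ⟨hne, hm⟩ ⟨r₂, e₂ | ⟨j₂, r₂'⟩⟩ ⟨hne₂, hm₂⟩ hj
    · exact isEmptyElim e
    · exact isEmptyElim e
    · exact isEmptyElim e₂
    · obtain rfl : j = j₂ := hj
      have hij : i ≠ j := by
        rintro rfl
        exact hown i r r' (fun h => hne (by rw [h])) hm
      obtain ⟨h1, h2⟩ := huniq i j hij r r' r₂ r₂' hm hm₂
      rw [h1, h2]

lemma ncard_add_sum_ncard_le {α ι : Type*} [Finite α] [Fintype ι] {A C : Set α} {M : ι → Set α}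
    (hA : A ⊆ C) (hM : ∀ i, M i ⊆ C) (hAM : ∀ i, Disjoint A (M i))
    (hMM : Pairwise fun i j => Disjoint (M i) (M j)) : A.ncard + ∑ i, (M i).ncard ≤ C.ncard := by
  classical
  have := Fintype.ofFinite α
  have h : (⋃ i, M i).ncard = ∑ i, (M i).ncard := by
    have e : ⋃ i, M i = ((Finset.univ.biUnion fun i => (M i).toFinset : Finset α) : Set α) := by
      ext x; simp
    rw [e, ncard_coe_finset, Finset.card_biUnion fun i _ j _ hij => Set.disjoint_toFinset.2 (hMM hij)]
    exact Finset.sum_congr rfl fun i _ => (ncard_eq_toFinset_card' _).symm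
  rw [← h, ← ncard_union_eq (disjoint_iUnion_right.2 hAM)]
  exact ncard_le_ncard (union_subset hA (iUnion_subset hM))

section Graph
variable {V : Type*} {G : SimpleGraph V}

lemma getVert_edge_mem {a b : V} (w : G.Walk a b) {j : ℕ} (hj : j < w.length) :
    s(w.getVert j, w.getVert (j + 1)) ∈ w.edges :=
  (SimpleGraph.Walk.mk_mem_edges_iff_exists w).2 ⟨j, hj, rfl⟩

lemma SimpleGraph.Walk.IsPath.injOn_getVert_edge {a b : V} {w : G.Walk a b} (hw : w.IsPath) :
    InjOn (fun j => s(w.getVert j, w.getVert (j + 1))) (Iio w.length) := by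
  intro j hj j' hj' h
  rw [mem_Iio] at hj hj'
  have hi : ∀ a b, a ≤ w.length → b ≤ w.length → w.getVert a = w.getVert b → a = b :=
    fun a b ha hb h => hw.getVert_injOn ha hb h
  rcases Sym2.eq_iff.1 h with ⟨h1, h2⟩ | ⟨h1, h2⟩
  · exact hi _ _ hj.le hj'.le h1
  · have e1 := hi _ _ hj.le hj' h1
    have e2 := hi _ _ hj hj'.le h2
    omega

/-- All edges at an internal vertex of degree two of a path belong to the path. -/
lemma SimpleGraph.Walk.IsPath.mem_edges_of_adj [Fintype V] [DecidableRel G.Adj] {a b : V}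
    {w : G.Walk a b} (hw : w.IsPath) {j : ℕ} (h0 : 0 < j) (h1 : j < w.length)
    (hdeg : G.degree (w.getVert j) = 2) {x : V} (hx : G.Adj (w.getVert j) x) :
    s(w.getVert j, x) ∈ w.edges := by
  classical
  obtain ⟨i, rfl⟩ : ∃ i, j = i + 1 := ⟨j - 1, by omega⟩
  have e1 := getVert_edge_mem w (j := i) (by omega)
  have e2 := getVert_edge_mem w h1
  have hne : w.getVert i ≠ w.getVert (i + 1 + 1) := fun h => by
    have := hw.getVert_injOn (show i ≤ w.length by omega) (show i + 1 + 1 ≤ w.length by omega) h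
    omega
  have hsub : ({w.getVert i, w.getVert (i + 1 + 1)} : Finset V) ⊆
      G.neighborFinset (w.getVert (i + 1)) := by
    intro y hy
    rw [SimpleGraph.mem_neighborFinset]
    rcases Finset.mem_insert.1 hy with rfl | hy
    · exact (w.adj_getVert_succ (by omega)).symm
    · rw [Finset.mem_singleton.1 hy]; exact w.adj_getVert_succ h1
  have heq := Finset.eq_of_subset_of_card_le hsub (by
    rw [SimpleGraph.card_neighborFinset_eq_degree, hdeg, Finset.card_pair hne])
  have hm : x ∈ G.neighborFinset (w.getVert (i + 1)) := by
    rwa [SimpleGraph.mem_neighborFinset]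
  rw [← heq, Finset.mem_insert, Finset.mem_singleton] at hm
  rcases hm with rfl | rfl
  · rw [Sym2.eq_swap]; exact e1
  · exact e2

lemma IsGeomDrawing.segCross {pos : V → ℝ × ℝ} (h : IsGeomDrawing G pos) {a b x y : V}
    (hab : G.Adj a b) (hxy : G.Adj x y) (hne : s(a, b) ≠ s(x, y)) {X : ℝ × ℝ}
    (hX : X ∈ segment ℝ (pos a) (pos b)) (hX' : X ∈ segment ℝ (pos x) (pos y))
    (hXn : X ∉ pos '' {a, b} ∩ pos '' {x, y}) : SegCross pos a b x y :=
  (h.2.2 a b x y hab hxy hne).resolve_left fun hs => hXn (hs ⟨hX, hX'⟩)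

lemma IsGeomDrawing.subsingleton_inter {pos : V → ℝ × ℝ} (h : IsGeomDrawing G pos) {a b x y : V}
    (hab : G.Adj a b) (hxy : G.Adj x y) (hne : s(a, b) ≠ s(x, y)) :
    (segment ℝ (pos a) (pos b) ∩ segment ℝ (pos x) (pos y)).Subsingleton := by
  rcases h.2.2 a b x y hab hxy hne with hs | ⟨p, hp, -⟩
  · refine Set.Subsingleton.anti ?_ hs
    rw [← image_inter h.1]
    refine Set.Subsingleton.image ?_ _
    rintro c ⟨hc, hc'⟩ d ⟨hd, hd'⟩
    by_contra hcd
    have e1 : s(a, b) = s(c, d) := by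
      rcases hc with rfl | rfl <;> rcases hd with rfl | rfl <;>
        first | exact absurd rfl hcd | rfl | exact Sym2.eq_swap
    have e2 : s(x, y) = s(c, d) := by
      rcases hc' with rfl | rfl <;> rcases hd' with rfl | rfl <;>
        first | exact absurd rfl hcd | rfl | exact Sym2.eq_swap
    exact hne (e1.trans e2.symm)
  · rw [hp]; exact subsingleton_singleton

end Graph

/-- Let `k ≥ 1` and let `G` be a finite simple graph whose edge set is partitioned into
`s` static edges (the set `Est`) and `f` maximal degree-2 paths (the flexible paths
`P i`), each of length at least `(s² + 3s + 1)·(f + 1) + 1`.  If `G` admits a geometric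
`k`-planar drawing, then the graph obtained by shortening each flexible path to length
exactly `(s² + 3s + 1)·(f + 1) + 1` (preserving endpoints) admits a geometric
`k`-planar drawing. -/
theorem stmt14 {V : Type*} [Fintype V] (k : ℕ) (hk : 1 ≤ k)
    (G : SimpleGraph V) [DecidableRel G.Adj]
    (s f : ℕ) (Est : Set (Sym2 V)) (hEst : Est ⊆ G.edgeSet) (hs : Est.ncard = s)
    (u v : Fin f → V) (P : ∀ i, G.Walk (u i) (v i))
    (hpath : ∀ i, (P i).IsPath)
    (hdeg2 : ∀ i, ∀ w ∈ (P i).support, w ≠ u i → w ≠ v i → G.degree w = 2)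
    (hmax : ∀ i, G.degree (u i) ≠ 2 ∧ G.degree (v i) ≠ 2)
    (hdisjE : ∀ i, ∀ e ∈ (P i).edges, e ∉ Est)
    (hdisjP : ∀ i j, i ≠ j → ∀ e ∈ (P i).edges, e ∉ (P j).edges)
    (hcover : ∀ e : Sym2 V, e ∈ G.edgeSet ↔ e ∈ Est ∨ ∃ i, e ∈ (P i).edges)
    (hlen : ∀ i, (s ^ 2 + 3 * s + 1) * (f + 1) + 1 ≤ (P i).length)
    (hpl : GeomKPlanar k G) :
    GeomKPlanar k (SimpleGraph.fromEdgeSet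
      (Est ∪ ⋃ i, shortEdges (P i) ((s ^ 2 + 3 * s + 1) * (f + 1) + 1))) := by
  classical
  obtain ⟨pos, hpos, hcr⟩ := hpl
  obtain ⟨t, ht⟩ : ∃ t, t = (s ^ 2 + 3 * s + 1) * (f + 1) + 1 := ⟨_, rfl⟩
  rw [← ht] at hlen ⊢
  have ht2 : f + 2 ≤ t := by rw [ht]; nlinarith [Nat.zero_le (s ^ 2 + 3 * s)]
  have hinj : ∀ i {j j'}, j ≤ (P i).length → j' ≤ (P i).length →
      (P i).getVert j = (P i).getVert j' → j = j' := fun i j j' h h' e =>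
    (hpath i).getVert_injOn h h' e
  have huv : ∀ i, u i ≠ v i := fun i h => by
    have := hinj i (Nat.zero_le _) le_rfl (by simpa using h)
    have := hlen i
    omega
  have hint : ∀ i j, 0 < j → j < (P i).length → ∀ x, G.Adj ((P i).getVert j) x →
      s((P i).getVert j, x) ∈ (P i).edges := by
    intro i j h0 h1 x hx
    refine (hpath i).mem_edges_of_adj h0 h1 (hdeg2 i _ ((P i).getVert_mem_support j) ?_ ?_) hx
    · intro h
      have := hinj i h1.le (Nat.zero_le _) (by simpa using h)
      omega
    · intro h
      have := hinj i h1.le le_rfl (by simpa using h)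
      omega
  have hsame : ∀ i j i' j', 0 < j → j < (P i).length → j' ≤ (P i').length →
      (P i).getVert j = (P i').getVert j' → i = i' ∧ j = j' := by
    intro i j i' j' h0 h1 h' e
    have hii : i = i' := by
      by_contra hne
      have hl := hlen i'
      rcases h'.eq_or_lt with h' | h'
      · have he := getVert_edge_mem (P i') (j := j' - 1) (by omega)
        have ha := (P i').adj_getVert_succ (i := j' - 1) (by omega)
        rw [show j' - 1 + 1 = j' by omega, ← e] at he ha
        rw [Sym2.eq_swap] at he
        exact hdisjP i i' hne _ (hint i j h0 h1 _ ha.symm) he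
      · have he := getVert_edge_mem (P i') h'
        have ha := (P i').adj_getVert_succ h'
        rw [← e] at he ha
        exact hdisjP i i' hne _ (hint i j h0 h1 _ ha) he
    subst hii
    exact ⟨rfl, hinj i h1.le h' e⟩
  have hends : ∀ e : Est, ∃ x y, e.1 = s(x, y) := fun e => by
    obtain ⟨x, y⟩ := e.1
    exact ⟨x, y, rfl⟩
  choose sx sy hsxy using hends
  have hadjS : ∀ e, G.Adj (sx e) (sy e) := fun e => by
    have := hEst e.2
    rwa [hsxy] at this
  have hnotint : ∀ e i j, 0 < j → j < (P i).length →
      sx e ≠ (P i).getVert j ∧ sy e ≠ (P i).getVert j := by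
    intro e i j h0 h1
    constructor
    · intro h
      have := hint i j h0 h1 (sy e) (h ▸ hadjS e)
      rw [← h, ← hsxy] at this
      exact hdisjE i _ this e.2
    · intro h
      have := hint i j h0 h1 (sx e) (h ▸ (hadjS e).symm)
      rw [← h, Sym2.eq_swap, ← hsxy] at this
      exact hdisjE i _ this e.2
  let g : Fin f → ℕ → V := fun i j => if j < t then (P i).getVert j else v i
  have hg0 : ∀ i, g i 0 = u i := fun i => by
    simp only [g]; rw [if_pos (by omega), SimpleGraph.Walk.getVert_zero]
  have hgt : ∀ i, g i t = v i := fun i => by simp [g]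
  have hg : ∀ i j i' j', 0 < j → j < t → j' ≤ t → g i j = g i' j' → i = i' ∧ j = j' := by
    intro i j i' j' h0 h1 h' e
    have hl := hlen i
    have hl' := hlen i'
    simp only [g, if_pos h1] at e
    split_ifs at e with h
    · exact hsame i j i' j' h0 (by omega) (by omega) e
    · obtain ⟨h2, h3⟩ := hsame i j i' (P i').length h0 (by omega) le_rfl (by simpa using e)
      omega
  have hsx : ∀ e i j, 0 < j → j < t → sx e ≠ g i j ∧ sy e ≠ g i j := by
    intro e i j h0 h1
    simp only [g, if_pos h1]
    exact hnotint e i j h0 (h1.trans_le (hlen i))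
  have hadj : ∀ x y, (SimpleGraph.fromEdgeSet (Est ∪ ⋃ i, shortEdges (P i) t)).Adj x y →
      (∃ e, s(x, y) = s(sx e, sy e)) ∨ ∃ i, ∃ j < t, s(x, y) = s(g i j, g i (j + 1)) := by
    intro x y h
    rcases ((SimpleGraph.fromEdgeSet_adj _).1 h).1 with h | h
    · exact Or.inl ⟨⟨_, h⟩, hsxy ⟨_, h⟩⟩
    · right
      obtain ⟨i, ⟨j, hj, h⟩ | h⟩ := mem_iUnion.1 h
      · refine ⟨i, j, by omega, ?_⟩
        simp only [g]
        rw [if_pos (by omega), if_pos (by omega)]; exact h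
      · refine ⟨i, t - 1, by omega, ?_⟩
        simp only [g]
        rw [if_pos (by omega), if_neg (by omega)]; exact h
  have := Fintype.ofFinite Est
  have hcard : Fintype.card Est = s := by rw [← hs, ← Nat.card_coe_set_eq, Nat.card_eq_fintype_card]
  rcases Nat.eq_zero_or_pos s with hs0 | hs0
  · have : IsEmpty Est := Fintype.card_eq_zero_iff.1 (hcard.trans hs0)
    exact geomKPlanar_of_isEmpty hk (sx := sx) (sy := sy) huv (by omega) g hg0 hgt hadj hg
  let K : Set V := {w | ∀ i j, 0 < j → j < (P i).length → w ≠ (P i).getVert j}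
  have hst : StaticDrawing K sx sy pos :=
    { injOn := hpos.1.injOn
      left_mem := fun e i j h0 h1 => (hnotint e i j h0 h1).1
      right_mem := fun e i j h0 h1 => (hnotint e i j h0 h1).2
      ne := fun e => (hadjS e).ne
      vert := fun e w _ hw => hpos.2.1 _ _ (hadjS e) w hw
      inter := fun e e' hne => hpos.subsingleton_inter (hadjS e) (hadjS e') fun h =>
        hne (Subtype.ext (by rw [hsxy, hsxy, h])) }
  have hu : ∀ i, u i ∈ K := fun i i' j h0 h1 h => by
    obtain ⟨-, h3⟩ := hsame i' j i 0 h0 h1 (Nat.zero_le _) (by simpa using h.symm)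
    omega
  have hv : ∀ i, v i ∈ K := fun i i' j h0 h1 h => by
    obtain ⟨rfl, h3⟩ := hsame i' j i (P i).length h0 h1 le_rfl (by simpa using h.symm)
    omega
  have hroute := exists_routes hst hu hv huv (n := fun i => (P i).length)
    (fun i => by have := hlen i; omega) (fun i r => pos ((P i).getVert r))
    (fun i => by simp) (fun i => by simp)
  refine geomKPlanar_of_routes hk hst hu hv huv _ hroute (fun e => ?_) (by omega)
    (by rw [hcard, ht]) g hg0 hgt hadj hg hsx
  refine le_trans ?_ (hcr _ _ (hadjS e))
  let step : Fin f → ℕ → Sym2 V := fun i r => s((P i).getVert r, (P i).getVert (r + 1))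
  let M : Fin f → Set ℕ := fun i => meetingSteps pos (fun r => pos ((P i).getVert r)) (P i).length
    (u i) (v i) (sx e) (sy e)
  have hM : ∀ i, (M i).ncard = (step i '' M i).ncard := fun i =>
    (InjOn.ncard_image ((hpath i).injOn_getVert_edge.mono fun r hr => hr.1)).symm
  have hstep : ∀ i, ∀ d ∈ step i '' M i, d ∈ (P i).edges := by
    rintro i _ ⟨r, hr, rfl⟩
    exact getVert_edge_mem (P i) hr.1
  rw [← ncard_image_of_injective _ (Subtype.val_injective (p := (· ∈ Est)))]
  change _ + ∑ i, (M i).ncard ≤ _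
  simp only [hM]
  refine ncard_add_sum_ncard_le ?_ (fun i => ?_) (fun i => ?_) fun i j hij => ?_
  · rintro _ ⟨e', ⟨hne, X, hX, hX'⟩, rfl⟩
    refine ⟨hEst e'.2, sx e', sy e', hsxy e', hpos.segCross (hadjS e) (hadjS e')
      (fun h => hne (Subtype.ext (by rw [hsxy, hsxy, h]))) (openSegment_subset_segment _ _ _ hX) hX' ?_⟩
    have hne' : pos (sx e) ≠ pos (sy e) := hpos.1.ne (hadjS e).ne
    rintro ⟨⟨w, rfl | rfl, hw⟩, -⟩
    · exact ne_left_of_mem_openSegment hne' hX hw.symm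
    · exact ne_right_of_mem_openSegment hne' hX hw.symm
  · rintro _ ⟨r, hr, rfl⟩
    have hadj' := (P i).adj_getVert_succ hr.1
    obtain ⟨hrl, ⟨X, hX, hX'⟩, hz, hl⟩ := hr
    have hmem := getVert_edge_mem (P i) hrl
    refine ⟨hadj', _, _, rfl, hpos.segCross (hadjS e) hadj' ?_ hX' hX ?_⟩
    · intro h
      rw [← h, ← hsxy] at hmem
      exact hdisjE i _ hmem e.2
    · rintro ⟨⟨a, ha, rfl⟩, ⟨c, hc, hac⟩⟩
      obtain rfl := hpos.1 hac
      have hc' : ∃ j, c = (P i).getVert j ∧ (j = r ∨ j = r + 1) := by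
        rcases hc with hc | hc
        · exact ⟨r, hc, Or.inl rfl⟩
        · exact ⟨r + 1, hc, Or.inr rfl⟩
      obtain ⟨j, rfl, hj⟩ := hc'
      rcases Nat.eq_zero_or_pos j with rfl | h0
      · have := hz (by omega)
        rw [SimpleGraph.Walk.getVert_zero] at ha
        rcases ha with ha | ha
        · exact this.1 ha
        · exact this.2 ha
      · rcases lt_or_ge j (P i).length with h1 | h1
        · have := hnotint e i j h0 h1
          rcases ha with ha | ha
          · exact this.1 ha.symm
          · exact this.2 ha.symm
        · have := hl (by omega)
          rw [(P i).getVert_of_length_le h1] at ha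
          rcases ha with ha | ha
          · exact this.1 ha
          · exact this.2 ha
  · refine disjoint_left.2 ?_
    rintro _ ⟨e', -, rfl⟩ h
    exact hdisjE i _ (hstep i _ h) e'.2
  · exact disjoint_left.2 fun d h h' => hdisjP i j hij d (hstep i d h) (hstep j d h')
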